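/- For every p ∈ (1,∞) there exists a reflexive Banach space X with a 1-unconditional Schauder basis such that: (i) every normalized weakly null sequence in X has a subsequence that generates a spreading model that is 8-equivalent to the unit vector basis of ℓp; (ii) every infinite dimensional closed subspace of X contains an array of normalized weakly null sequences that generates the unit vector basis of c0 as an asymptotic model; (iii) for every q ∈ [1,∞] and every block subspace Y of X, the unit vector basis of ℓq (of c0 when q = ∞) is finitely block representable in Y if and only if p ≤ q ≤ ∞. -/

import Mathlib

/-!
The space is the `p`-convexification of a mixed Tsirelson space with incremental weights.

**The space.** `IW.WF` is a norming set of nonnegative functionals on finitely supported sequences.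
It contains the coordinate functionals (weight `0`) and is closed under the operations
`2^{-m} ∑_{q ∈ Q} f_q` (weight `m ≥ 1`), where `Q` lies in the Schreier family of order `m²`, each
`f_q` starts at `q` or later and ends before the next element of `Q`, and each `f_q` has weight `0`
or larger than `q` (incremental weights). The supremum over this set is `IW.NZ`, and the space `X`
is the completion of the finitely supported sequences under its `p`-convexification
`IW.NX p a = NZ (|a|^p)^{1/p}`. By construction `X` has a `1`-unconditional basis, and disjointly
supported vectors satisfy an upper `p`-estimate with constant `1`.

**Spreading models and reflexivity.** Let `z_k` be a normalized block sequence for `NZ`, the vector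
`z_k` being almost normed by a functional of weight `w_k`. If some weight `μ ≥ 1` occurs infinitely
often, the summands of the corresponding functionals can be collected in one functional
(`IW.package`); otherwise, on a subsequence, `w_k` is `0` or so large that the functionals
themselves can be combined. Thus a subsequence satisfies the lower estimate
`2^{-m} · ∑ c_k / 4 ≤ NZ (∑ c_k z_k)` over Schreier sets of order `m²` (`IW.exists_lower`). With
`m = 1` the constant is `1/8`, so spreading models of weakly null sequences are `8`-equivalent to
`ℓ_p`. The upper `p`-estimate makes the basis shrinking, since `p > 1`, and the lower one makes it
boundedly complete, so `X` is reflexive.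

**Rapidly increasing sequences.** The lower `ℓ₁`-constants of a block sequence over the Schreier
families of order `m²` decay no faster than `2^{-m}`. Hence there is a level at which they almost
stabilise (`IW.pigeon`), and special convex combinations at that level are vectors on which every
functional of small weight `w` takes values at most `(1 + δ) 2^{-w}` (`IW.ris_vector`). Such vectors
form a sequence `y_t` governed by the basic inequality `IW.RIS.me`. A *piece* of weight `m` is
`2^m ∑ c_t y_t` with `c` a special convex combination just below order `m²`; its norm is close
to `1`, and a functional of weight different from `m` acts on it weakly.

**Asymptotic and local structure.** Pieces of different weights, the later ones much longer than the
range of the earlier ones, behave like the unit vector basis of `c₀`, which gives the arrays of (ii)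
(`IW.exists_c0_array`). Placing in the `k`-th vector the piece of the `i`-th weight with coefficient
`b_{ik}`, for every `i < N`, gives successive vectors `v_k` with
`NZ (∑ A_k v_k) ≈ max_i ∑_k b_{ik} A_k` (`IW.exists_polyhedral`). For `q ≥ p` the norm of `ℓ_{q/p}^n`
on the positive cone is such a maximum, up to a small error, by duality and compactness of the dual
ball; after `p`-convexification this is `ℓ_q^n`. For `q < p`, the upper `p`-estimate bounds the norm
of a sum of `n` unit blocks by `n^{1/p}`, which is incompatible with `n^{1/q}`.
-/


open Filter Topology
open scoped ENNReal

noncomputable section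

/-! ### Abstract Banach space notions -/

section Abstract

variable {X : Type*} [NormedAddCommGroup X] [NormedSpace ℝ X]

/-- A sequence is normalized if every term has norm one. -/
def Normalized (x : ℕ → X) : Prop := ∀ i, ‖x i‖ = 1

/-- A sequence is weakly null if it tends to `0` in the weak topology. -/
def WeaklyNull (x : ℕ → X) : Prop :=
  ∀ f : X →L[ℝ] ℝ, Tendsto (fun i => f (x i)) atTop (𝓝 (0 : ℝ))

end Abstract

/-- The ℓ₁ norm of finite coefficient vectors (the norms of finite linear
combinations of the unit vector basis of ℓ₁). -/
def l1Norm : ∀ m : ℕ, (Fin m → ℝ) → ℝ := fun _ a => ∑ i, |a i|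

/-- The sup norm of finite coefficient vectors (the norms of finite linear
combinations of the unit vector basis of c₀). -/
def supNorm : ∀ m : ℕ, (Fin m → ℝ) → ℝ := fun _ a => ⨆ i, |a i|

/-- The ℓ_p norm of finite coefficient vectors, `1 ≤ p < ∞`. -/
def lpNormFin (p : ℝ) : ∀ m : ℕ, (Fin m → ℝ) → ℝ := fun _ a => (∑ i, |a i| ^ p) ^ (1 / p)

/-- The ℓ_q norms of finite coefficient vectors, `q ∈ [1,∞]`, where `q = ∞`
corresponds to `c₀`. -/
def finLqNorm (q : ℝ≥0∞) : ∀ m : ℕ, (Fin m → ℝ) → ℝ := fun m a =>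
  if q = ⊤ then supNorm m a else lpNormFin q.toReal m a

/-- The family of seminorms `ν` (of finite combinations of a sequence in a seminormed
space) is `C`-equivalent to the family `μ`:  there are `A B > 0` with `A * B ≤ C` and
`(1/A) * μ ≤ ν ≤ B * μ`. -/
def NormFamEquiv (C : ℝ) (μ ν : ∀ m : ℕ, (Fin m → ℝ) → ℝ) : Prop :=
  ∃ A B : ℝ, 0 < A ∧ 0 < B ∧ A * B ≤ C ∧
    ∀ (m : ℕ) (a : Fin m → ℝ), (1 / A) * μ m a ≤ ν m a ∧ ν m a ≤ B * μ m a

section Abstract2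

variable {X : Type*} [NormedAddCommGroup X] [NormedSpace ℝ X]

/-- The sequence `x` generates the spreading model whose finite-combination
seminorms are given by the family `ν`. -/
def GeneratesSpreadingModel (x : ℕ → X) (ν : ∀ m : ℕ, (Fin m → ℝ) → ℝ) : Prop :=
  ∀ (m : ℕ) (a : Fin m → ℝ), ∀ ε > (0 : ℝ), ∃ N : ℕ, ∀ j : Fin m → ℕ,
    StrictMono j → (∀ i, N ≤ j i) → |‖∑ i, a i • x (j i)‖ - ν m a| < ε

/-- The array of sequences `A` (row `A i` is the `i`-th sequence) generates the
asymptotic model whose finite-combination seminorms are given by `ν`. -/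
def GeneratesAsymptoticModel (A : ℕ → ℕ → X) (ν : ∀ l : ℕ, (Fin l → ℝ) → ℝ) : Prop :=
  ∀ (l : ℕ) (a : Fin l → ℝ), ∀ ε > (0 : ℝ), ∃ N : ℕ, ∀ j : Fin l → ℕ,
    StrictMono j → (∀ i, N ≤ j i) → |‖∑ i, a i • A i (j i)‖ - ν l a| < ε

/-- `e` is a Schauder basis of `X`. -/
def IsSchauderBasis (e : ℕ → X) : Prop :=
  ∀ x : X, ∃! a : ℕ → ℝ,
    Tendsto (fun n => ∑ i ∈ Finset.range n, a i • e i) atTop (𝓝 x)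

/-- The basis `e` is 1-unconditional. -/
def OneUnconditional (e : ℕ → X) : Prop :=
  ∀ (F : Finset ℕ) (a ε : ℕ → ℝ), (∀ i, ε i = 1 ∨ ε i = -1) →
    ‖∑ i ∈ F, (ε i * a i) • e i‖ = ‖∑ i ∈ F, a i • e i‖

/-- `x` is a block sequence with respect to the basis `e`. -/
def IsBlockSeq (e : ℕ → X) (x : ℕ → X) : Prop :=
  ∃ F : ℕ → Finset ℕ, (∀ k, (F k).Nonempty) ∧
    (∀ k l : ℕ, k < l → ∀ i ∈ F k, ∀ j ∈ F l, i < j) ∧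
    ∀ k, x k ≠ 0 ∧ x k ∈ Submodule.span ℝ (e '' ↑(F k))

/-- `z` is a finite block sequence with respect to the basis `e`. -/
def IsFinBlockSeq (e : ℕ → X) {n : ℕ} (z : Fin n → X) : Prop :=
  ∃ F : Fin n → Finset ℕ, (∀ k, (F k).Nonempty) ∧
    (∀ k l : Fin n, k < l → ∀ i ∈ F k, ∀ j ∈ F l, i < j) ∧
    ∀ k, z k ≠ 0 ∧ z k ∈ Submodule.span ℝ (e '' ↑(F k))

/-- `Y` is a block subspace of `X` (with respect to the basis `e`): the closed
linear span of an infinite normalized block sequence. -/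
def IsBlockSubspace (e : ℕ → X) (Y : Set X) : Prop :=
  ∃ y : ℕ → X, IsBlockSeq e y ∧ Normalized y ∧
    Y = closure (↑(Submodule.span ℝ (Set.range y)) : Set X)

/-- The finite sequence `z` is `C`-equivalent to a finite basic sequence whose
finite-combination norms are given by `μ`. -/
def FinSeqEquiv (C : ℝ) {n : ℕ} (μ : (Fin n → ℝ) → ℝ) (z : Fin n → X) : Prop :=
  ∃ A B : ℝ, 0 < A ∧ 0 < B ∧ A * B ≤ C ∧
    ∀ a : Fin n → ℝ, (1 / A) * μ a ≤ ‖∑ i, a i • z i‖ ∧ ‖∑ i, a i • z i‖ ≤ B * μ a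

/-- The finite basic sequence with combination norms `μ` is block representable
in `Y ⊆ X`. -/
def BlockRepresentableIn (e : ℕ → X) (Y : Set X) {n : ℕ} (μ : (Fin n → ℝ) → ℝ) : Prop :=
  ∀ ε > (0 : ℝ), ∃ z : Fin n → X, (∀ i, z i ∈ Y) ∧ IsFinBlockSeq e z ∧
    FinSeqEquiv (1 + ε) μ z

/-- `x` is a (Schauder) basic sequence. -/
def IsBasicSeq (x : ℕ → X) : Prop :=
  (∀ i, x i ≠ 0) ∧ ∃ K : ℝ, 0 < K ∧ ∀ (a : ℕ → ℝ) (m n : ℕ), m ≤ n →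
    ‖∑ i ∈ Finset.range m, a i • x i‖ ≤ K * ‖∑ i ∈ Finset.range n, a i • x i‖

end Abstract2

/-- A plegma of `k` strictly increasing `l`-tuples of naturals. -/
def IsPlegma (k l : ℕ) (s : Fin k → Fin l → ℕ) : Prop :=
  (∀ i, StrictMono (s i)) ∧
  (∀ i₁ i₂ : Fin k, ∀ j₁ j₂ : Fin l, j₁ < j₂ → s i₁ j₁ < s i₂ j₂) ∧
  (∀ i₁ i₂ : Fin k, i₁ < i₂ → ∀ j, s i₁ j ≤ s i₂ j)

/-- A strict plegma: a plegma with pairwise disjoint tuples. -/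
def IsStrictPlegma (k l : ℕ) (s : Fin k → Fin l → ℕ) : Prop :=
  IsPlegma k l s ∧ ∀ i₁ i₂ : Fin k, i₁ ≠ i₂ → ∀ j₁ j₂ : Fin l, s i₁ j₁ ≠ s i₂ j₂

section Abstract3

variable {X : Type*} [NormedAddCommGroup X] [NormedSpace ℝ X]

/-- The `l`-array `x` generates the joint spreading model with finite-combination
seminorms `ν`. -/
def GeneratesJSM (l : ℕ) (x : Fin l → ℕ → X)
    (ν : ∀ k : ℕ, (Fin l → Fin k → ℝ) → ℝ) : Prop :=
  ∀ (k : ℕ) (a : Fin l → Fin k → ℝ), ∀ ε > (0 : ℝ), ∃ N : ℕ,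
    ∀ s : Fin l → Fin k → ℕ, IsStrictPlegma l k s → (∀ i j, N ≤ s i j) →
      |‖∑ i, ∑ j, a i j • x i (s i j)‖ - ν k a| < ε

/-- `X` admits a unique joint spreading model with respect to the family of
sequences `F`. -/
def UniqueJSM (F : Set (ℕ → X)) : Prop :=
  ∃ C : ℝ, 1 ≤ C ∧ ∀ (l : ℕ) (x y : Fin l → ℕ → X),
    (∀ i, x i ∈ F) → (∀ i, y i ∈ F) →
    ∀ ν μ, GeneratesJSM l x ν → GeneratesJSM l y μ →
      ∃ A B : ℝ, 0 < A ∧ 0 < B ∧ A * B ≤ C ∧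
        ∀ (k : ℕ) (a : Fin l → Fin k → ℝ),
          (1 / A) * μ k a ≤ ν k a ∧ ν k a ≤ B * μ k a

/-- `X` admits a unique asymptotic model with respect to the family of
sequences `F`. -/
def UniqueAM (F : Set (ℕ → X)) : Prop :=
  ∀ x y : ℕ → ℕ → X, (∀ i, x i ∈ F) → (∀ i, y i ∈ F) →
    ∀ ν μ, GeneratesAsymptoticModel x ν → GeneratesAsymptoticModel y μ →
      ∃ C : ℝ, 1 ≤ C ∧ NormFamEquiv C μ ν

end Abstract3

/-- A bundled Banach-space candidate. -/
structure BanachPkg : Type 1 where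
  X : Type
  [grp : NormedAddCommGroup X]
  [mod : NormedSpace ℝ X]

attribute [instance] BanachPkg.grp BanachPkg.mod

/-! ### c₀₀ and the norming sets -/

/-- The finitely supported real sequences. -/
abbrev c00 : Type := ℕ →₀ ℝ

/-- Minimum of the support (0 for the zero vector). -/
def minSupp (x : c00) : ℕ := if h : x.support.Nonempty then x.support.min' h else 0

/-- Maximum of the support (0 for the zero vector). -/
def maxSupp (x : c00) : ℕ := if h : x.support.Nonempty then x.support.max' h else 0

/-- Minimum of a finset of naturals (0 if empty). -/
def finsetMin (F : Finset ℕ) : ℕ := if h : F.Nonempty then F.min' h else 0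

/-- `x < y` as successive (block) vectors. -/
def Blocks (x y : c00) : Prop := maxSupp x < minSupp y

/-- The Schreier families. -/
def Schreier : ℕ → Set (Finset ℕ)
  | 0 => {F | ∃ i : ℕ, F = {i}}
  | n + 1 => {F | ∃ (d : ℕ) (G : Fin d → Finset ℕ),
      (∀ k, G k ∈ Schreier n) ∧
      (∀ k l : Fin d, k < l → ∀ i ∈ G k, ∀ j ∈ G l, i < j) ∧
      (∀ i ∈ F, d ≤ i) ∧ F = Finset.univ.biUnion G}

/-- The family `A_m` of sets of cardinality at most `m`. -/
def SchreierA (m : ℕ) : Set (Finset ℕ) := {F | F.card ≤ m}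

/-- The operation `A * B` on families of finite sets. -/
def famStar (A B : Set (Finset ℕ)) : Set (Finset ℕ) :=
  {F | ∃ (d : ℕ) (G : Fin d → Finset ℕ),
      (∀ k, G k ∈ B) ∧ (∀ k, (G k).Nonempty) ∧
      (∀ k l : Fin d, k < l → ∀ i ∈ G k, ∀ j ∈ G l, i < j) ∧
      (Finset.univ.image fun k => finsetMin (G k)) ∈ A ∧ F = Finset.univ.biUnion G}

/-- A finite block sequence in `c00` is `S`-admissible. -/
def Admissible (S : Set (Finset ℕ)) {d : ℕ} (f : Fin d → c00) : Prop :=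
  (∀ q, (f q).support.Nonempty) ∧
  (∀ q r : Fin d, q < r → Blocks (f q) (f r)) ∧
  (Finset.univ.image fun q => minSupp (f q)) ∈ S

/-- The two fixed sequences `(m_j)`, `(n_j)` (indexed here starting at `0`, so that
`m 0` plays the role of `m_1` etc.) together with their growth conditions. -/
structure IWParams where
  m : ℕ → ℕ
  n : ℕ → ℕ
  m_mono : StrictMono m
  n_mono : StrictMono n
  m_first : m 0 = 2
  n_first : n 0 = 1
  growth_exp : ∀ C : ℝ, 1 < C → Tendsto (fun j => C ^ (n j) / (m j : ℝ)) atTop atTop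
  growth_ratio : Tendsto (fun j => (m j : ℝ) / (m (j + 1) : ℝ)) atTop (𝓝 0)
  growth_sum : ∀ (l : ℕ) (js : Fin l → ℕ) (j : ℕ), (∀ i, js i ≤ j) →
    (∏ i, m (js i)) < m (j + 1) ^ 2 → (∑ i, n (js i)) + 1 < n (j + 1)

/-- The action of a functional `f ∈ c00` on a vector `x ∈ c00`. -/
def evalPair (f x : c00) : ℝ := f.sum fun i a => a * x i

/-- The norming set `W_iw`, together with admissible weights: `WIW P f w` means
that `f` belongs to the norming set and `w` is a weight of (one representation of)
`f`; the unit functionals `±e_i^*` have weight `∞`. -/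
inductive WIW (P : IWParams) : c00 → ℕ∞ → Prop
  | unit (i : ℕ) (s : ℝ) (hs : s = 1 ∨ s = -1) : WIW P (Finsupp.single i s) ⊤
  | op (l : ℕ) (hl : 0 < l) (js : Fin l → ℕ) (d : ℕ) (f : Fin d → c00) (w : Fin d → ℕ∞)
      (hf : ∀ q, WIW P (f q) (w q))
      (hadm : Admissible (Schreier (∑ i, P.n (js i))) f)
      (hvfg : ∀ q r : Fin d, (q : ℕ) + 1 = (r : ℕ) → (maxSupp (f q) : ℕ∞) < w r) :
      WIW P (((∏ i, P.m (js i) : ℕ) : ℝ)⁻¹ • ∑ q, f q) ((∏ i, P.m (js i) : ℕ) : ℕ∞)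

/-- Membership in the norming set `W_iw`. -/
def memWIW (P : IWParams) (f : c00) : Prop := ∃ w, WIW P f w

/-- The norm of `X_iw`, on finitely supported vectors. -/
def iwNorm (P : IWParams) (x : c00) : ℝ :=
  sSup {r | ∃ f, memWIW P f ∧ r = evalPair f x}

/-- The dual norm of a finitely supported functional, as an element of `X_iw^*`. -/
def iwDualNorm (P : IWParams) (f : c00) : ℝ :=
  sSup {r | ∃ x : c00, iwNorm P x ≤ 1 ∧ r = evalPair f x}

/-- The auxiliary norming set `W_aux^N` together with admissible weights. -/
inductive WAux (P : IWParams) (N : ℕ) : c00 → ℕ∞ → Prop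
  | unit (i : ℕ) (s : ℝ) (hs : s = 1 ∨ s = -1) : WAux P N (Finsupp.single i s) ⊤
  | op (l : ℕ) (hl : 0 < l) (js : Fin l → ℕ) (d : ℕ) (f : Fin d → c00) (w : Fin d → ℕ∞)
      (hf : ∀ q, WAux P N (f q) (w q))
      (hadm : Admissible (famStar (Schreier (∑ i, P.n (js i))) (SchreierA 3)) f)
      (hlarge : ∀ q : Fin d, 0 < (q : ℕ) → (N : ℕ∞) < w q) :
      WAux P N (((∏ i, P.m (js i) : ℕ) : ℝ)⁻¹ • ∑ q, f q) ((∏ i, P.m (js i) : ℕ) : ℕ∞)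

/-- An `(n, ε)` basic special convex combination. -/
def IsBasicSCC (n : ℕ) (ε : ℝ) (x : c00) : Prop :=
  ∃ F : Finset ℕ, x.support ⊆ F ∧ F ∈ Schreier n ∧ (∀ i, 0 ≤ x i) ∧
    (∑ i ∈ F, x i) = 1 ∧ ∀ G ⊆ F, G ∈ Schreier (n - 1) → (∑ i ∈ G, x i) < ε

/-- An `(n, ε)` special convex combination `∑ c i • x i`. -/
def IsSCC (n : ℕ) (ε : ℝ) {m : ℕ} (c : Fin m → ℝ) (x : Fin m → c00) : Prop :=
  (∀ i, (x i).support.Nonempty) ∧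
  (∀ i j : Fin m, i < j → Blocks (x i) (x j)) ∧
  IsBasicSCC n ε (∑ i, c i • Finsupp.single (minSupp (x i)) (1 : ℝ))

/-- `x` generates, with respect to the norm function `Nrm` on `c00`, the spreading
model whose finite-combination seminorms are `ν`. -/
def GeneratesSMwith (Nrm : c00 → ℝ) (x : ℕ → c00) (ν : ∀ m : ℕ, (Fin m → ℝ) → ℝ) : Prop :=
  ∀ (m : ℕ) (a : Fin m → ℝ), ∀ ε > (0 : ℝ), ∃ N : ℕ, ∀ j : Fin m → ℕ,
    StrictMono j → (∀ i, N ≤ j i) → |Nrm (∑ i, a i • x (j i)) - ν m a| < ε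

/-- The array `A` generates, with respect to the norm function `Nrm` on `c00`, the
asymptotic model whose finite-combination seminorms are `ν`. -/
def GeneratesAMwith (Nrm : c00 → ℝ) (A : ℕ → ℕ → c00) (ν : ∀ l : ℕ, (Fin l → ℝ) → ℝ) : Prop :=
  ∀ (l : ℕ) (a : Fin l → ℝ), ∀ ε > (0 : ℝ), ∃ N : ℕ, ∀ j : Fin l → ℕ,
    StrictMono j → (∀ i, N ≤ j i) → |Nrm (∑ i, a i • A i (j i)) - ν l a| < ε

/-- A normalized block sequence in `c00` with respect to a norm function. -/
def IsNormBlockSeq (Nrm : c00 → ℝ) (y : ℕ → c00) : Prop :=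
  (∀ k, (y k).support.Nonempty) ∧ (∀ k, Blocks (y k) (y (k + 1))) ∧ ∀ k, Nrm (y k) = 1

/-- A `(C, (j_i)_{i ∈ I})` rapidly increasing sequence, `I` a (finite) interval. -/
def IsRIS (P : IWParams) (C : ℝ) (I : Finset ℕ) (j : ℕ → ℕ) (x : ℕ → c00) : Prop :=
  (∀ a ∈ I, ∀ b ∈ I, ∀ c : ℕ, a ≤ c → c ≤ b → c ∈ I) ∧
  (∀ a ∈ I, ∀ b ∈ I, a < b → j a < j b) ∧
  (∀ i ∈ I, (x i).support.Nonempty) ∧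
  (∀ a ∈ I, ∀ b ∈ I, a < b → Blocks (x a) (x b)) ∧
  (∀ i ∈ I, iwNorm P (x i) ≤ C) ∧
  (∀ i ∈ I, ∀ i' ∈ I, i' + 1 = i → (maxSupp (x i') : ℝ) < Real.sqrt (P.m (j i))) ∧
  (∀ i ∈ I, ∀ f w, WIW P f w → w < ((P.m (j i) : ℕ) : ℕ∞) →
    |evalPair f (x i)| ≤ C / (w.toNat : ℝ))

/-- An infinite `(C, (j_i)_i)` rapidly increasing sequence. -/
def IsRISNat (P : IWParams) (C : ℝ) (j : ℕ → ℕ) (x : ℕ → c00) : Prop :=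
  StrictMono j ∧ (∀ i, (x i).support.Nonempty) ∧ (∀ i, Blocks (x i) (x (i + 1))) ∧
  (∀ i, iwNorm P (x i) ≤ C) ∧
  (∀ i, (maxSupp (x i) : ℝ) < Real.sqrt (P.m (j (i + 1)))) ∧
  (∀ i, ∀ f w, WIW P f w → w < ((P.m (j i) : ℕ) : ℕ∞) →
    |evalPair f (x i)| ≤ C / (w.toNat : ℝ))

/-- `X` together with the basis `e` is a realization of the space `X_iw`: a Banach
space in which `c00` sits isometrically (w.r.t. `iwNorm`) and densely. -/
structure IsIWRealization (P : IWParams) (X : Type*) [NormedAddCommGroup X]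
    [NormedSpace ℝ X] (e : ℕ → X) : Prop where
  complete : CompleteSpace X
  dense : DenseRange fun a : c00 => ∑ i ∈ a.support, a i • e i
  norm_eq : ∀ a : c00, ‖∑ i ∈ a.support, a i • e i‖ = iwNorm P a

/-- The conjugate exponent of `p`. -/
def conjExp (p : ℝ) : ℝ := p / (p - 1)

/-- The norming set `W_iw^p` together with admissible weights. -/
inductive WIWp (P : IWParams) (p : ℝ) : c00 → ℕ∞ → Prop
  | unit (i : ℕ) (s : ℝ) (hs : s = 1 ∨ s = -1) : WIWp P p (Finsupp.single i s) ⊤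
  | op (l : ℕ) (hl : 0 < l) (js : Fin l → ℕ) (d : ℕ) (f : Fin d → c00) (w : Fin d → ℕ∞)
      (lam : Fin d → ℝ) (hlam : (∑ q, |lam q| ^ conjExp p) ≤ 1)
      (hf : ∀ q, WIWp P p (f q) (w q))
      (hadm : Admissible (Schreier (∑ i, P.n (js i))) f)
      (hvfg : ∀ q r : Fin d, (q : ℕ) + 1 = (r : ℕ) → (maxSupp (f q) : ℕ∞) < w r) :
      WIWp P p (((∏ i, P.m (js i) : ℕ) : ℝ)⁻¹ • ∑ q, lam q • f q)
        ((∏ i, P.m (js i) : ℕ) : ℕ∞)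

/-- The norm of `X_iw^p` on finitely supported vectors. -/
def iwpNorm (P : IWParams) (p : ℝ) (x : c00) : ℝ :=
  sSup {r | ∃ f, (∃ w, WIWp P p f w) ∧ r = evalPair f x}

/-- The norming set of the space `X̃_iw`, together with admissible weights. -/
inductive WT (P : IWParams) : c00 → ℕ∞ → Prop
  | unit (i : ℕ) (s : ℝ) (hs : s = 1 ∨ s = -1) : WT P (Finsupp.single i s) ⊤
  | op (j : ℕ) (d : ℕ) (f : Fin d → c00) (w : Fin d → ℕ∞)
      (hf : ∀ q, WT P (f q) (w q))
      (hadm : Admissible (Schreier (P.n j)) f)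
      (hvfg : ∀ q r : Fin d, (q : ℕ) + 1 = (r : ℕ) → (maxSupp (f q) : ℕ∞) < w r) :
      WT P ((P.m j : ℝ)⁻¹ • ∑ q, f q) ((P.m j : ℕ) : ℕ∞)

/-- The norm of `X̃_iw` on finitely supported vectors. -/
def tNorm (P : IWParams) (x : c00) : ℝ :=
  sSup {r | ∃ f, (∃ w, WT P f w) ∧ r = evalPair f x}

end

namespace IW

/-! ### Schreier families -/

/-- The Schreier families. `Sch 0` consists of the sets with at most one element, and `F` belongs to
`Sch (n + 1)` if it is covered by `k` members of `Sch n` for some `k ≤ min F + 1`; the members need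
not be successive. -/
def Sch : ℕ → Finset ℕ → Prop
  | 0, F => F.card ≤ 1
  | n + 1, F => ∃ k : ℕ, (∀ i ∈ F, k ≤ i + 1) ∧
      ∃ G : ℕ → Finset ℕ, (∀ j < k, Sch n (G j)) ∧ ∀ i ∈ F, ∃ j < k, i ∈ G j

/-- `F` is covered by `k` members of `Sch n`. -/
def Cov (n k : ℕ) (F : Finset ℕ) : Prop :=
  ∃ G : ℕ → Finset ℕ, (∀ j < k, Sch n (G j)) ∧ ∀ i ∈ F, ∃ j < k, i ∈ G j

lemma sch_succ_iff {n : ℕ} {F : Finset ℕ} :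
    Sch (n + 1) F ↔ ∃ k : ℕ, (∀ i ∈ F, k ≤ i + 1) ∧ Cov n k F := Iff.rfl

lemma Sch.cov {n : ℕ} {F : Finset ℕ} (h : Sch n F) : Cov n 1 F :=
  ⟨fun _ => F, fun _ _ => h, fun _ hi => ⟨0, one_pos, hi⟩⟩

lemma Sch.subset {n : ℕ} {F F' : Finset ℕ} (h : Sch n F) (hs : F' ⊆ F) : Sch n F' := by
  cases n with
  | zero => exact (Finset.card_le_card hs).trans h
  | succ n =>
    obtain ⟨k, hk, G, hG, hc⟩ := h
    exact ⟨k, fun i hi => hk i (hs hi), G, hG, fun i hi => hc i (hs hi)⟩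

lemma Cov.subset {n k : ℕ} {F F' : Finset ℕ} (h : Cov n k F) (hs : F' ⊆ F) : Cov n k F' := by
  obtain ⟨G, hG, hc⟩ := h
  exact ⟨G, hG, fun i hi => hc i (hs hi)⟩

lemma Sch.succ {n : ℕ} {F : Finset ℕ} (h : Sch n F) : Sch (n + 1) F :=
  ⟨1, fun i _ => by omega, h.cov⟩

lemma Sch.mono {n m : ℕ} {F : Finset ℕ} (h : Sch n F) (hnm : n ≤ m) : Sch m F := by
  induction hnm with
  | refl => exact h
  | step _ ih => exact ih.succ

lemma Cov.mono {n m k : ℕ} {F : Finset ℕ} (h : Cov n k F) (hnm : n ≤ m) : Cov m k F := by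
  obtain ⟨G, hG, hc⟩ := h
  exact ⟨G, fun j hj => (hG j hj).mono hnm, hc⟩

lemma Cov.mono_right {n k k' : ℕ} {F : Finset ℕ} (h : Cov n k F) (hk : k ≤ k') : Cov n k' F := by
  obtain ⟨G, hG, hc⟩ := h
  refine ⟨fun j => if j < k then G j else ∅, fun j _ => ?_, fun i hi => ?_⟩
  · by_cases h : j < k
    · simpa [h] using hG j h
    · simp only [h, if_false]
      exact Sch.mono (n := 0) (by simp [Sch]) (Nat.zero_le _)
  · obtain ⟨j, hj, h⟩ := hc i hi
    exact ⟨j, hj.trans_le hk, by simpa [hj] using h⟩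

lemma Cov.union {n k k' : ℕ} {F F' : Finset ℕ} (h : Cov n k F) (h' : Cov n k' F') :
    Cov n (k + k') (F ∪ F') := by
  obtain ⟨G, hG, hc⟩ := h
  obtain ⟨G', hG', hc'⟩ := h'
  refine ⟨fun j => if j < k then G j else G' (j - k), fun j hj => ?_, fun i hi => ?_⟩
  · by_cases h : j < k
    · simpa [h] using hG j h
    · simpa [h] using hG' (j - k) (by omega)
  · rcases Finset.mem_union.1 hi with hi | hi
    · obtain ⟨j, hj, h⟩ := hc i hi
      exact ⟨j, by omega, by simpa [hj] using h⟩
    · obtain ⟨j, hj, h⟩ := hc' i hi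
      exact ⟨k + j, by omega, by simpa using h⟩

lemma Cov.biUnion {n k : ℕ} {ι : Type*} [DecidableEq ι] (T : Finset ι) (F : ι → Finset ℕ)
    (h : ∀ t ∈ T, Cov n k (F t)) : Cov n (T.card * k) (T.biUnion F) := by
  induction T using Finset.induction_on with
  | empty => exact ⟨fun _ => ∅, by simp, by simp⟩
  | insert a T ha ih =>
    rw [Finset.biUnion_insert, Finset.card_insert_of_notMem ha]
    have := (h a (by simp)).union (ih fun t ht => h t (by simp [ht]))
    convert this using 1
    ring

/-- The Schreier families are stable under moving points to the right. -/
lemma Sch.image {n : ℕ} {F : Finset ℕ} (h : Sch n F) (φ : ℕ → ℕ) (hφ : ∀ i ∈ F, i ≤ φ i) :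
    Sch n (F.image φ) := by
  induction n generalizing F with
  | zero => exact Finset.card_image_le.trans h
  | succ n ih =>
    obtain ⟨k, hk, G, hG, hc⟩ := h
    refine ⟨k, ?_, fun j => (G j ∩ F).image φ, fun j hj => ?_, ?_⟩
    · intro i hi
      obtain ⟨a, ha, rfl⟩ := Finset.mem_image.1 hi
      have := hk a ha
      have := hφ a ha
      omega
    · exact ih ((hG j hj).subset Finset.inter_subset_left)
        fun i hi => hφ i (Finset.mem_inter.1 hi).2
    · intro i hi
      obtain ⟨a, ha, rfl⟩ := Finset.mem_image.1 hi
      obtain ⟨j, hj, haj⟩ := hc a ha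
      exact ⟨j, hj, Finset.mem_image_of_mem _ (Finset.mem_inter.2 ⟨haj, ha⟩)⟩

lemma Cov.image {n k : ℕ} {F : Finset ℕ} (h : Cov n k F) (φ : ℕ → ℕ) (hφ : ∀ i ∈ F, i ≤ φ i) :
    Cov n k (F.image φ) := by
  obtain ⟨G, hG, hc⟩ := h
  refine ⟨fun j => (G j ∩ F).image φ, fun j hj => ?_, ?_⟩
  · exact Sch.image ((hG j hj).subset Finset.inter_subset_left) φ
      fun i hi => hφ i (Finset.mem_inter.1 hi).2
  · intro i hi
    obtain ⟨a, ha, rfl⟩ := Finset.mem_image.1 hi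
    obtain ⟨j, hj, haj⟩ := hc a ha
    exact ⟨j, hj, Finset.mem_image_of_mem _ (Finset.mem_inter.2 ⟨haj, ha⟩)⟩

/-- Convolution: attaching to each point `a` of a set of order `j` a set of order `s` that starts at
`a` or later gives a set of order `s + j`. -/
lemma Sch.comp {j s : ℕ} {A : Finset ℕ} (h : Sch j A) (B : ℕ → Finset ℕ)
    (hB : ∀ a ∈ A, Sch s (B a)) (hle : ∀ a ∈ A, ∀ b ∈ B a, a ≤ b) :
    Sch (s + j) (A.biUnion B) := by
  induction j generalizing A with
  | zero =>
    rcases Finset.card_le_one_iff_subset_singleton.1 h with ⟨a, ha⟩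
    by_cases hA : a ∈ A
    · refine (hB a hA).subset ?_
      intro b hb
      obtain ⟨a', ha', hb⟩ := Finset.mem_biUnion.1 hb
      have := Finset.mem_singleton.1 (ha ha')
      rwa [this] at hb
    · have : A = ∅ := by
        rcases Finset.subset_singleton_iff.1 ha with h | h
        · exact h
        · simp [h] at hA
      subst this
      exact Sch.mono (n := 0) (by simp [Sch]) (Nat.zero_le _)
  | succ j ih =>
    obtain ⟨k, hk, G, hG, hc⟩ := h
    refine ⟨k, ?_, fun i => (G i ∩ A).biUnion B, fun i hi => ?_, ?_⟩
    · intro b hb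
      obtain ⟨a, ha, hb⟩ := Finset.mem_biUnion.1 hb
      have := hk a ha
      have := hle a ha b hb
      omega
    · exact ih ((hG i hi).subset Finset.inter_subset_left)
        (fun a ha => hB a (Finset.mem_inter.1 ha).2) fun a ha => hle a (Finset.mem_inter.1 ha).2
    · intro b hb
      obtain ⟨a, ha, hb⟩ := Finset.mem_biUnion.1 hb
      obtain ⟨i, hi, hai⟩ := hc a ha
      exact ⟨i, hi, Finset.mem_biUnion.2 ⟨a, Finset.mem_inter.2 ⟨hai, ha⟩, hb⟩⟩

lemma cov_zero_card (F : Finset ℕ) : Cov 0 F.card F := by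
  induction F using Finset.induction_on with
  | empty => exact ⟨fun _ => ∅, by simp, by simp⟩
  | insert a F ha ih =>
    rw [Finset.card_insert_of_notMem ha, Finset.insert_eq, add_comm]
    exact (Sch.cov (by simp [Sch])).union ih

lemma sch_one_of_card {F : Finset ℕ} (h : ∀ i ∈ F, F.card ≤ i + 1) : Sch 1 F :=
  ⟨F.card, h, cov_zero_card F⟩

lemma sch_singleton (n a : ℕ) : Sch n {a} := Sch.mono (n := 0) (by simp [Sch]) (Nat.zero_le _)

/-! ### The norming set -/

/-- `WF f w`: the functional `f` belongs to the norming set, with weight `w`. Functionals of weight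
`0` are the coordinate functionals and zero. Functionals of weight `m ≥ 1` are the sums
`2^{-m} ∑_{q ∈ Q} f q` over sets `Q` of Schreier order `m²`, where `f q` starts at `q` or later, ends
before the next element of `Q`, and has weight `0` or larger than `q`. All functionals are
nonnegative, since the norm is only evaluated on nonnegative vectors. -/
inductive WF : (ℕ → ℝ) → ℕ → Prop
  | leaf (i : ℕ) (c : ℝ) (hc : c = 0 ∨ c = 1) : WF (Pi.single i c) 0
  | op (m : ℕ) (hm : 1 ≤ m) (Q : Finset ℕ) (hQ : Sch (m * m) Q) (f : ℕ → ℕ → ℝ) (w : ℕ → ℕ)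
      (hf : ∀ q ∈ Q, WF (f q) (w q))
      (hlow : ∀ q ∈ Q, ∀ i, f q i ≠ 0 → q ≤ i)
      (hsep : ∀ q ∈ Q, ∀ q' ∈ Q, q < q' → ∀ i, f q i ≠ 0 → i < q')
      (hw : ∀ q ∈ Q, w q = 0 ∨ q < w q) :
      WF (fun i => (2 ^ m : ℝ)⁻¹ * ∑ q ∈ Q, f q i) m

lemma sum_eq_of_sep {Q : Finset ℕ} {f : ℕ → ℕ → ℝ}
    (hlow : ∀ q ∈ Q, ∀ i, f q i ≠ 0 → q ≤ i)
    (hsep : ∀ q ∈ Q, ∀ q' ∈ Q, q < q' → ∀ i, f q i ≠ 0 → i < q') (i : ℕ) :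
    (∑ q ∈ Q, f q i = 0) ∨ ∃ q ∈ Q, ∑ q ∈ Q, f q i = f q i := by
  by_cases h : ∃ q ∈ Q, f q i ≠ 0
  · obtain ⟨q, hq, hqi⟩ := h
    refine Or.inr ⟨q, hq, Finset.sum_eq_single_of_mem q hq fun q' hq' hne => ?_⟩
    by_contra hq'i
    rcases lt_or_gt_of_ne hne with hlt | hlt
    · exact absurd (hsep q' hq' q hq hlt i hq'i) (not_lt.2 (hlow q hq i hqi))
    · exact absurd (hsep q hq q' hq' hlt i hqi) (not_lt.2 (hlow q' hq' i hq'i))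
  · push Not at h
    exact Or.inl (Finset.sum_eq_zero h)

lemma WF.bounds {f : ℕ → ℝ} {w : ℕ} (h : WF f w) : ∀ i, 0 ≤ f i ∧ f i ≤ 1 := by
  induction h with
  | leaf i c hc =>
    intro j
    by_cases hj : j = i
    · subst hj
      rcases hc with rfl | rfl <;> simp
    · simp [hj]
  | op m hm Q hQ f w hf hlow hsep hw ih =>
    intro i
    have h2 : (2 ^ m : ℝ)⁻¹ ≤ 1 := inv_le_one_of_one_le₀ (one_le_pow₀ (by norm_num))
    have h0 : 0 ≤ (2 ^ m : ℝ)⁻¹ := by positivity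
    rcases sum_eq_of_sep hlow hsep i with h | ⟨q, hq, h⟩
    · simp [h]
    · dsimp only
      rw [h]
      obtain ⟨h3, h4⟩ := ih q hq i
      exact ⟨mul_nonneg h0 h3, mul_le_one₀ h2 h3 h4⟩

lemma WF.nonneg {f : ℕ → ℝ} {w : ℕ} (h : WF f w) (i : ℕ) : 0 ≤ f i := (h.bounds i).1
lemma WF.le_one {f : ℕ → ℝ} {w : ℕ} (h : WF f w) (i : ℕ) : f i ≤ 1 := (h.bounds i).2

lemma WF.le_weight {f : ℕ → ℝ} {w : ℕ} (h : WF f w) (hw : 1 ≤ w) (i : ℕ) :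
    f i ≤ (2 ^ w : ℝ)⁻¹ := by
  cases h with
  | leaf i c hc => omega
  | op m hm Q hQ f w hf hlow hsep hw =>
    rcases sum_eq_of_sep hlow hsep i with h | ⟨q, hq, h⟩
    · simp [h]
    · dsimp only
      rw [h]
      exact mul_le_of_le_one_right (by positivity) ((hf q hq).le_one i)

lemma WF.zero : WF (fun _ => 0) 0 := by
  convert WF.leaf 0 0 (Or.inl rfl)
  simp

/-- The norming set is stable under restriction to arbitrary sets. -/
lemma WF.restrict {f : ℕ → ℝ} {w : ℕ} (h : WF f w) (E : Set ℕ) : WF (E.indicator f) w := by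
  induction h with
  | leaf i c hc =>
    by_cases hi : i ∈ E
    · convert WF.leaf i c hc using 1
      refine Set.indicator_eq_self.2 fun j hj => ?_
      by_cases hji : j = i
      · exact hji ▸ hi
      · simp [hji] at hj
    · convert WF.zero using 1
      funext j
      by_cases hj : j = i
      · subst hj; simp [hi]
      · simp [hj]
  | op m hm Q hQ f w hf hlow hsep hw ih =>
    have := WF.op m hm Q hQ (fun q => E.indicator (f q)) w ih
      (fun q hq i hi => hlow q hq i (Set.indicator_apply_ne_zero.1 hi).2)
      (fun q hq q' hq' hlt i hi => hsep q hq q' hq' hlt i (Set.indicator_apply_ne_zero.1 hi).2) hw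
    convert this using 1
    funext i
    by_cases hi : i ∈ E <;> simp [hi]

/-! ### Evaluation and norm -/

/-- The action of a functional, given by its coordinates, on a finitely supported vector. -/
noncomputable def ev (f : ℕ → ℝ) : (ℕ →₀ ℝ) →ₗ[ℝ] ℝ := Finsupp.linearCombination ℝ f

lemma ev_eq (f : ℕ → ℝ) (z : ℕ →₀ ℝ) : ev f z = ∑ i ∈ z.support, f i * z i := by
  simp [ev, Finsupp.linearCombination_apply, Finsupp.sum, mul_comm]

lemma ev_congr {f g : ℕ → ℝ} {z : ℕ →₀ ℝ} (h : ∀ i, z i ≠ 0 → f i = g i) : ev f z = ev g z := by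
  rw [ev_eq, ev_eq]
  exact Finset.sum_congr rfl fun i hi => by rw [h i (Finsupp.mem_support_iff.1 hi)]

lemma ev_le_ev {f g : ℕ → ℝ} {z : ℕ →₀ ℝ} (hz : 0 ≤ z) (h : ∀ i, z i ≠ 0 → f i ≤ g i) :
    ev f z ≤ ev g z := by
  rw [ev_eq, ev_eq]
  exact Finset.sum_le_sum fun i hi =>
    mul_le_mul_of_nonneg_right (h i (Finsupp.mem_support_iff.1 hi)) (hz i)

lemma ev_zero_left {f : ℕ → ℝ} {z : ℕ →₀ ℝ} (h : ∀ i, z i ≠ 0 → f i = 0) : ev f z = 0 := by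
  rw [ev_eq]
  exact Finset.sum_eq_zero fun i hi => by rw [h i (Finsupp.mem_support_iff.1 hi), zero_mul]

lemma ev_nonneg {f : ℕ → ℝ} {z : ℕ →₀ ℝ} (hf : ∀ i, 0 ≤ f i) (hz : 0 ≤ z) : 0 ≤ ev f z := by
  rw [ev_eq]
  exact Finset.sum_nonneg fun i _ => mul_nonneg (hf i) (hz i)

lemma ev_mono {f : ℕ → ℝ} {z z' : ℕ →₀ ℝ} (hf : ∀ i, 0 ≤ f i) (hz : z ≤ z') :
    ev f z ≤ ev f z' := by
  have : 0 ≤ ev f (z' - z) := ev_nonneg hf (sub_nonneg.2 hz)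
  rw [map_sub] at this
  linarith

lemma ev_smul_sum (Q : Finset ℕ) (c : ℝ) (f : ℕ → ℕ → ℝ) (z : ℕ →₀ ℝ) :
    ev (fun i => c * ∑ q ∈ Q, f q i) z = c * ∑ q ∈ Q, ev (f q) z := by
  simp only [ev_eq]
  rw [Finset.sum_comm, Finset.mul_sum]
  exact Finset.sum_congr rfl fun i _ => by rw [mul_assoc, Finset.sum_mul]

/-- The supremum of the norming set. It is the intended norm on nonnegative vectors only; on other
vectors it is merely a sublinear functional. -/
noncomputable def NZ (z : ℕ →₀ ℝ) : ℝ := sSup {r | ∃ f w, WF f w ∧ r = ev f z}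

lemma NZ_bdd (z : ℕ →₀ ℝ) : BddAbove {r | ∃ f w, WF f w ∧ r = ev f z} := by
  refine ⟨∑ i ∈ z.support, |z i|, ?_⟩
  rintro r ⟨f, w, hf, rfl⟩
  rw [ev_eq]
  refine Finset.sum_le_sum fun i _ => ?_
  calc f i * z i ≤ f i * |z i| := mul_le_mul_of_nonneg_left (le_abs_self _) (hf.nonneg i)
    _ ≤ 1 * |z i| := mul_le_mul_of_nonneg_right (hf.le_one i) (abs_nonneg _)
    _ = |z i| := one_mul _

lemma ev_le_NZ {f : ℕ → ℝ} {w : ℕ} (hf : WF f w) (z : ℕ →₀ ℝ) : ev f z ≤ NZ z :=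
  le_csSup (NZ_bdd z) ⟨f, w, hf, rfl⟩

lemma NZ_le {z : ℕ →₀ ℝ} {C : ℝ} (h : ∀ f w, WF f w → ev f z ≤ C) : NZ z ≤ C := by
  refine csSup_le ⟨_, _, _, WF.zero, rfl⟩ ?_
  rintro r ⟨f, w, hf, rfl⟩
  exact h f w hf

lemma exists_lt_ev {z : ℕ →₀ ℝ} {r : ℝ} (h : r < NZ z) : ∃ f w, WF f w ∧ r < ev f z := by
  obtain ⟨_, ⟨f, w, hf, rfl⟩, h⟩ := exists_lt_of_lt_csSup (⟨_, _, _, WF.zero, rfl⟩ :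
    {r | ∃ f w, WF f w ∧ r = ev f z}.Nonempty) h
  exact ⟨f, w, hf, h⟩

lemma NZ_nonneg (z : ℕ →₀ ℝ) : 0 ≤ NZ z := by
  have := ev_le_NZ WF.zero z
  rwa [ev_zero_left fun _ _ => rfl] at this

lemma NZ_mono {z z' : ℕ →₀ ℝ} (h : z ≤ z') : NZ z ≤ NZ z' :=
  NZ_le fun _ _ hf => (ev_mono hf.nonneg h).trans (ev_le_NZ hf z')

lemma NZ_add_le (z z' : ℕ →₀ ℝ) : NZ (z + z') ≤ NZ z + NZ z' :=
  NZ_le fun f w hf => by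
    rw [map_add]; exact add_le_add (ev_le_NZ hf z) (ev_le_NZ hf z')

lemma NZ_smul {c : ℝ} (hc : 0 ≤ c) (z : ℕ →₀ ℝ) : NZ (c • z) = c * NZ z := by
  have key : ∀ {c : ℝ}, 0 ≤ c → ∀ z, NZ (c • z) ≤ c * NZ z := fun {c} hc z =>
    NZ_le fun f w hf => by
      rw [map_smul]; exact mul_le_mul_of_nonneg_left (ev_le_NZ hf z) hc
  refine le_antisymm (key hc z) ?_
  rcases hc.eq_or_lt with rfl | hc
  · simp [NZ_nonneg]
  · have := key (inv_nonneg.2 hc.le) (c • z)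
    rw [smul_smul, inv_mul_cancel₀ hc.ne', one_smul] at this
    calc c * NZ z ≤ c * (c⁻¹ * NZ (c • z)) := mul_le_mul_of_nonneg_left this hc.le
      _ = NZ (c • z) := by field_simp

lemma NZ_sum_le {ι : Type*} (T : Finset ι) (z : ι → ℕ →₀ ℝ) :
    NZ (∑ t ∈ T, z t) ≤ ∑ t ∈ T, NZ (z t) :=
  NZ_le fun f w hf => by
    rw [map_sum]; exact Finset.sum_le_sum fun t _ => ev_le_NZ hf (z t)

lemma le_NZ (z : ℕ →₀ ℝ) (i : ℕ) : z i ≤ NZ z := by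
  have := ev_le_NZ (WF.leaf i 1 (Or.inr rfl)) z
  rw [ev_eq] at this
  by_cases h : i ∈ z.support
  · rw [Finset.sum_eq_single_of_mem i h (by intro j _ hj; simp [hj])] at this
    simpa using this
  · rw [Finsupp.notMem_support_iff.1 h]; exact NZ_nonneg z

end IW

namespace IW

/-! ### Blocks and the lower estimate -/

/-- `z` is a sequence of nonnegative vectors, the `k`-th one being supported in
`[s k, s (k+1))`. -/
structure Rng (z : ℕ → ℕ →₀ ℝ) (s : ℕ → ℕ) : Prop where
  mono : StrictMono s
  nonneg : ∀ k, 0 ≤ z k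
  lo : ∀ k i, z k i ≠ 0 → s k ≤ i
  hi : ∀ k i, z k i ≠ 0 → i < s (k + 1)

/-- A successive sequence as in `Rng` consisting of vectors of norm one. -/
structure Blk (z : ℕ → ℕ →₀ ℝ) (s : ℕ → ℕ) : Prop extends Rng z s where
  norm : ∀ k, NZ (z k) = 1

/-- The index `k` with `s k ≤ q < s (k+1)`. -/
def idx (s : ℕ → ℕ) (q : ℕ) : ℕ := Nat.findGreatest (fun k => s k ≤ q) q

lemma idx_eq {s : ℕ → ℕ} (hs : StrictMono s) {k q : ℕ} (h1 : s k ≤ q) (h2 : q < s (k + 1)) :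
    idx s q = k := by
  have hk : k ≤ q := (hs.le_apply).trans h1
  refine le_antisymm ?_ (Nat.le_findGreatest hk h1)
  by_contra hlt
  push Not at hlt
  have h3 : s (idx s q) ≤ q := Nat.findGreatest_spec (P := fun k => s k ≤ q) hk h1
  have h4 : s (k + 1) ≤ s (idx s q) := hs.monotone hlt
  omega

lemma Blk.idx_self {z : ℕ → ℕ →₀ ℝ} {s : ℕ → ℕ} (hz : Blk z s) (k : ℕ) : idx s (s k) = k :=
  idx_eq hz.mono le_rfl (hz.mono (Nat.lt_succ_self k))

lemma sum_smul_nonneg {z : ℕ → ℕ →₀ ℝ} (hz : ∀ k, 0 ≤ z k) {c : ℕ → ℝ} (hc : ∀ k, 0 ≤ c k)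
    (F : Finset ℕ) : 0 ≤ ∑ k ∈ F, c k • z k :=
  Finset.sum_nonneg fun k _ => smul_nonneg (hc k) (hz k)

lemma single_le_sum_smul {z : ℕ → ℕ →₀ ℝ} (hz : ∀ k, 0 ≤ z k) {c : ℕ → ℝ} (hc : ∀ k, 0 ≤ c k)
    {F : Finset ℕ} {k : ℕ} (hk : k ∈ F) : c k • z k ≤ ∑ k ∈ F, c k • z k :=
  Finset.single_le_sum (f := fun k => c k • z k) (fun k _ => smul_nonneg (hc k) (hz k)) hk

/-- If every `z k` is normed up to `θ` by a weighted sum of admissible functionals indexed by `Q k`,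
with fixed weight `μ`, then an admissible family of the `z k` can be normed by
collecting all these functionals in a single sum of weight `m + μ`. -/
lemma package {z : ℕ → ℕ →₀ ℝ} {s : ℕ → ℕ} (hz : Blk z s) {θ : ℝ} (μ : ℕ) (Q : ℕ → Finset ℕ)
    (f : ℕ → ℕ → ℕ → ℝ) (w : ℕ → ℕ → ℕ)
    (hQ : ∀ k, Sch (μ * μ) (Q k)) (hQs : ∀ k, ∀ q ∈ Q k, s k ≤ q ∧ q < s (k + 1))
    (hf : ∀ k, ∀ q ∈ Q k, WF (f k q) (w k q))
    (hlow : ∀ k, ∀ q ∈ Q k, ∀ i, f k q i ≠ 0 → q ≤ i)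
    (hsep : ∀ k, ∀ q ∈ Q k, ∀ q' ∈ Q k, q < q' → ∀ i, f k q i ≠ 0 → i < q')
    (hw : ∀ k, ∀ q ∈ Q k, w k q = 0 ∨ q < w k q)
    (hθ : ∀ k, θ ≤ (2 ^ μ : ℝ)⁻¹ * ∑ q ∈ Q k, ev (f k q) (z k))
    (m : ℕ) (hm : 1 ≤ m) (F : Finset ℕ) (c : ℕ → ℝ) (hc : ∀ k, 0 ≤ c k)
    (hF : Sch (m * m) (F.image s)) :
    (2 ^ m : ℝ)⁻¹ * (θ * ∑ k ∈ F, c k) ≤ NZ (∑ k ∈ F, c k • z k) := by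
  have hidx : ∀ k, ∀ q ∈ Q k, idx s q = k := fun k q hq =>
    idx_eq hz.mono (hQs k q hq).1 (hQs k q hq).2
  set R := F.biUnion Q with hR
  have hRS : Sch ((m + μ) * (m + μ)) R := by
    have := Sch.comp hF (fun a => Q (idx s a)) (s := μ * μ) (fun a _ => hQ _) (by
      intro a ha b hb
      obtain ⟨k, hk, rfl⟩ := Finset.mem_image.1 ha
      rw [hz.idx_self] at hb
      exact (hQs k b hb).1)
    refine (this.mono (m := (m + μ) * (m + μ)) (by nlinarith)).subset ?_
    intro q hq
    obtain ⟨k, hk, hq⟩ := Finset.mem_biUnion.1 hq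
    exact Finset.mem_biUnion.2 ⟨s k, Finset.mem_image_of_mem _ hk, by rwa [hz.idx_self]⟩
  have hmem : ∀ q ∈ R, idx s q ∈ F ∧ q ∈ Q (idx s q) := by
    intro q hq
    obtain ⟨k, hk, hq⟩ := Finset.mem_biUnion.1 hq
    rw [hidx k q hq]
    exact ⟨hk, hq⟩
  let g : ℕ → ℕ → ℝ := fun q => (Set.Iio (s (idx s q + 1))).indicator (f (idx s q) q)
  have hg : ∀ q i, g q i ≠ 0 → f (idx s q) q i ≠ 0 ∧ i < s (idx s q + 1) := by
    intro q i h
    have := Set.indicator_apply_ne_zero.1 h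
    exact ⟨this.2, this.1⟩
  have hop := WF.op (m + μ) (by omega) R hRS g (fun q => w (idx s q) q)
    (fun q hq => (hf _ q (hmem q hq).2).restrict _)
    (fun q hq i hi => hlow _ q (hmem q hq).2 i (hg q i hi).1)
    (fun q hq q' hq' hlt i hi => by
      obtain ⟨h1, h2⟩ := hmem q hq
      obtain ⟨h1', h2'⟩ := hmem q' hq'
      by_cases he : idx s q' = idx s q
      · rw [he] at h2'
        exact hsep _ q h2 q' h2' hlt i (hg q i hi).1
      · have h3 := hQs _ q h2
        have h4 := hQs _ q' h2'
        have h5 : idx s q < idx s q' := by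
          by_contra h
          have : s (idx s q' + 1) ≤ s (idx s q) := hz.mono.monotone (by omega)
          omega
        have : s (idx s q + 1) ≤ s (idx s q') := hz.mono.monotone h5
        have := (hg q i hi).2
        omega)
    (fun q hq => hw _ q (hmem q hq).2)
  refine le_trans ?_ (ev_le_NZ hop _)
  rw [ev_smul_sum]
  have hev : ∀ k ∈ F, ∀ q ∈ Q k, c k * ev (f k q) (z k) ≤ ev (g q) (∑ k ∈ F, c k • z k) := by
    intro k hk q hq
    have h1 : ev (f k q) (z k) = ev (g q) (z k) := by
      refine ev_congr fun i hi => ?_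
      simp [g, hidx k q hq, hz.hi k i hi]
    rw [h1, ← smul_eq_mul, ← map_smul]
    refine ev_mono (fun i => ?_) (single_le_sum_smul hz.nonneg hc hk)
    simp only [g, hidx k q hq]
    exact Set.indicator_nonneg (fun i _ => (hf k q hq).nonneg i) i
  have hsum : ∑ k ∈ F, ∑ q ∈ Q k, c k * ev (f k q) (z k)
      ≤ ∑ q ∈ R, ev (g q) (∑ k ∈ F, c k • z k) := by
    rw [hR, Finset.sum_biUnion]
    · exact Finset.sum_le_sum fun k hk => Finset.sum_le_sum fun q hq => hev k hk q hq
    · intro k _ k' _ hne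
      refine Finset.disjoint_left.2 fun q hq hq' => hne ?_
      rw [← hidx k q hq, ← hidx k' q hq']
  calc (2 ^ m : ℝ)⁻¹ * (θ * ∑ k ∈ F, c k)
      ≤ (2 ^ m : ℝ)⁻¹ * ∑ k ∈ F, c k * ((2 ^ μ : ℝ)⁻¹ * ∑ q ∈ Q k, ev (f k q) (z k)) := by
        refine mul_le_mul_of_nonneg_left ?_ (by positivity)
        rw [Finset.mul_sum]
        refine Finset.sum_le_sum fun k _ => ?_
        rw [mul_comm]
        exact mul_le_mul_of_nonneg_left (hθ k) (hc k)
    _ = (2 ^ (m + μ) : ℝ)⁻¹ * ∑ k ∈ F, ∑ q ∈ Q k, c k * ev (f k q) (z k) := by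
        rw [pow_add, mul_inv, mul_assoc]
        congr 1
        rw [Finset.mul_sum]
        refine Finset.sum_congr rfl fun k _ => ?_
        rw [← Finset.mul_sum]; ring
    _ ≤ _ := mul_le_mul_of_nonneg_left hsum (by positivity)

/-- Among functionals starting at or before `σ`, at most one acts on a vector supported after
`σ`. -/
lemma sum_ev_one {Q : Finset ℕ} {f : ℕ → ℕ → ℝ} {z : ℕ →₀ ℝ} {σ : ℕ}
    (hsep : ∀ q ∈ Q, ∀ q' ∈ Q, q < q' → ∀ i, f q i ≠ 0 → i < q')
    (hσ : ∀ q ∈ Q, q ≤ σ) (hz : ∀ i, z i ≠ 0 → σ ≤ i) :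
    ∑ q ∈ Q, ev (f q) z = 0 ∨ ∃ q ∈ Q, ∑ q ∈ Q, ev (f q) z = ev (f q) z := by
  rcases Q.eq_empty_or_nonempty with rfl | hne
  · simp
  · refine Or.inr ⟨Q.max' hne, Q.max'_mem hne, ?_⟩
    refine Finset.sum_eq_single_of_mem _ (Q.max'_mem hne) fun q hq hq' => ?_
    refine ev_zero_left fun i hi => ?_
    by_contra h
    have h1 := hsep q hq _ (Q.max'_mem hne) (lt_of_le_of_ne (Q.le_max' q hq) hq') i h
    have h2 := hz i hi
    have h3 := hσ _ (Q.max'_mem hne)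
    omega

/-- The lower estimate: up to the factor `4`, the sequence `z` dominates the weighted admissible sums
defining the norm. -/
def Lower (z : ℕ → ℕ →₀ ℝ) (s : ℕ → ℕ) : Prop :=
  ∀ m : ℕ, 1 ≤ m → ∀ (F : Finset ℕ) (c : ℕ → ℝ), (∀ k, 0 ≤ c k) → Sch (m * m) (F.image s) →
    (2 ^ m : ℝ)⁻¹ * (4⁻¹ * ∑ k ∈ F, c k) ≤ NZ (∑ k ∈ F, c k • z k)

lemma Blk.comp {z : ℕ → ℕ →₀ ℝ} {s : ℕ → ℕ} (hz : Blk z s) {φ : ℕ → ℕ} (hφ : StrictMono φ) :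
    Blk (z ∘ φ) (s ∘ φ) where
  mono := hz.mono.comp hφ
  nonneg _ := hz.nonneg _
  lo _ i h := hz.lo _ i h
  hi k i h := (hz.hi _ i h).trans_le (hz.mono.monotone (hφ (Nat.lt_succ_self k)))
  norm _ := hz.norm _

/-- Every normalized block sequence has a subsequence satisfying `Lower`. Either infinitely many terms
are almost normed by functionals of one weight `μ ≥ 1`, and `package` applies to their summands; or
the weights on a subsequence are `0` or exceed any prescribed bound, and `package` applies with
`μ = 0` to the functionals themselves. -/
lemma exists_lower {z : ℕ → ℕ →₀ ℝ} {s : ℕ → ℕ} (hz : Blk z s) :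
    ∃ φ s', StrictMono φ ∧ Blk (z ∘ φ) s' ∧ Lower (z ∘ φ) s' := by
  have h34 : ∀ k, ∃ f w, WF f w ∧ (3 / 4 : ℝ) < ev f (z k) := fun k =>
    exists_lt_ev (by rw [hz.norm]; norm_num)
  choose f w hf hev using h34
  by_cases hA : ∃ μ, 1 ≤ μ ∧ ∀ N, ∃ n > N, w n = μ
  · obtain ⟨μ, hμ, hinf⟩ := hA
    obtain ⟨φ, hφ, hwφ⟩ := Nat.exists_strictMono_subsequence hinf
    refine ⟨φ, s ∘ φ, hφ, hz.comp hφ, ?_⟩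
    have hdec : ∀ k, ∃ (Q : Finset ℕ) (g : ℕ → ℕ → ℝ) (v : ℕ → ℕ), Sch (μ * μ) Q ∧
        (∀ q ∈ Q, s (φ k) ≤ q ∧ q < s (φ k + 1)) ∧ (∀ q ∈ Q, WF (g q) (v q)) ∧
        (∀ q ∈ Q, ∀ i, g q i ≠ 0 → q ≤ i) ∧
        (∀ q ∈ Q, ∀ q' ∈ Q, q < q' → ∀ i, g q i ≠ 0 → i < q') ∧
        (∀ q ∈ Q, v q = 0 ∨ q < v q) ∧
        (4⁻¹ : ℝ) ≤ (2 ^ μ : ℝ)⁻¹ * ∑ q ∈ Q, ev (g q) (z (φ k)) := by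
      intro k
      have h1 := hf (φ k)
      have h2 := hev (φ k)
      rw [hwφ k] at h1
      generalize f (φ k) = fk at h1 h2
      cases h1 with
      | leaf i c hc => omega
      | op m hm Q hQ g v hg hlow hsep hv =>
        refine ⟨Q.filter fun q => s (φ k) ≤ q ∧ q < s (φ k + 1), g, v,
          hQ.subset (Finset.filter_subset _ _), fun q hq => (Finset.mem_filter.1 hq).2,
          fun q hq => hg q (Finset.mem_filter.1 hq).1,
          fun q hq => hlow q (Finset.mem_filter.1 hq).1,
          fun q hq q' hq' => hsep q (Finset.mem_filter.1 hq).1 q' (Finset.mem_filter.1 hq').1,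
          fun q hq => hv q (Finset.mem_filter.1 hq).1, ?_⟩
        rw [ev_smul_sum] at h2
        rw [← Finset.sum_filter_add_sum_filter_not Q (fun q => q < s (φ k)), mul_add] at h2
        have h3 : ∑ q ∈ Q.filter (fun q => q < s (φ k)), ev (g q) (z (φ k)) ≤ 1 := by
          rcases sum_ev_one (Q := Q.filter (fun q => q < s (φ k))) (f := g) (z := z (φ k))
            (σ := s (φ k))
            (fun q hq q' hq' => hsep q (Finset.mem_filter.1 hq).1 q' (Finset.mem_filter.1 hq').1)
            (fun q hq => (Finset.mem_filter.1 hq).2.le) (hz.lo _) with h | ⟨q, hq, h⟩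
          · rw [h]; norm_num
          · rw [h, ← hz.norm (φ k)]
            exact ev_le_NZ (hg q (Finset.mem_filter.1 hq).1) _
        have h4 : ∑ q ∈ Q.filter (fun q => ¬ q < s (φ k)), ev (g q) (z (φ k))
            = ∑ q ∈ Q.filter (fun q => s (φ k) ≤ q ∧ q < s (φ k + 1)), ev (g q) (z (φ k)) := by
          symm
          refine Finset.sum_subset (fun q hq => ?_) fun q hq hq' => ?_
          · simp only [Finset.mem_filter, not_lt] at hq ⊢
            exact ⟨hq.1, hq.2.1⟩
          · simp only [Finset.mem_filter, not_lt, not_and] at hq hq'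
            refine ev_zero_left fun i hi => ?_
            by_contra h
            have := hlow q hq.1 i h
            have := hq' hq.1 hq.2
            have := hz.hi _ i hi
            omega
        rw [h4] at h2
        have h5 : (2 ^ μ : ℝ)⁻¹ ≤ 2⁻¹ := by
          refine inv_anti₀ (by norm_num) ?_
          calc (2 : ℝ) = 2 ^ 1 := by norm_num
            _ ≤ 2 ^ μ := pow_le_pow_right₀ (by norm_num) hμ
        have h6 : (2 ^ μ : ℝ)⁻¹ * ∑ q ∈ Q.filter (fun q => q < s (φ k)), ev (g q) (z (φ k))
            ≤ (2 ^ μ : ℝ)⁻¹ * 1 := mul_le_mul_of_nonneg_left h3 (by positivity)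
        linarith
    choose Q g v h1 h2 h3 h4 h5 h6 h7 using hdec
    intro m hm F c hc hF
    refine package (hz.comp hφ) μ Q g v h1 (fun k q hq => ⟨(h2 k q hq).1, ?_⟩) h3 h4 h5 h6 h7
      m hm F c hc hF
    exact (h2 k q hq).2.trans_le (hz.mono.monotone (hφ (Nat.lt_succ_self k)))
  · push Not at hA
    have hB : ∀ N, ∃ K, ∀ n > K, w n = 0 ∨ N < w n := by
      intro N
      induction N with
      | zero => exact ⟨0, fun n _ => by omega⟩
      | succ N ih =>
        obtain ⟨K, hK⟩ := ih
        obtain ⟨K', hK'⟩ := hA (N + 1) (by omega)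
        refine ⟨max K K', fun n hn => ?_⟩
        have := hK n (lt_of_le_of_lt (le_max_left _ _) hn)
        have := hK' n (lt_of_le_of_lt (le_max_right _ _) hn)
        omega
    have hC : ∀ a, ∃ b > a, w b = 0 ∨ s (a + 1) < w b := by
      intro a
      obtain ⟨K, hK⟩ := hB (s (a + 1))
      exact ⟨max K a + 1, by omega, hK _ (by omega)⟩
    choose nx hnx hnw using hC
    let φ : ℕ → ℕ := fun k => Nat.rec 0 (fun _ a => nx a) k
    have hφs : ∀ k, φ (k + 1) = nx (φ k) := fun _ => rfl
    have hφ : StrictMono φ := strictMono_nat_of_lt_succ fun k => by rw [hφs]; exact hnx _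
    let s' : ℕ → ℕ := fun k => Nat.casesOn k 0 fun k => s (φ k + 1)
    have hs'0 : s' 0 = 0 := rfl
    have hs's : ∀ k, s' (k + 1) = s (φ k + 1) := fun _ => rfl
    have hs'mono : StrictMono s' := by
      refine strictMono_nat_of_lt_succ fun k => ?_
      cases k with
      | zero => rw [hs'0, hs's]; exact (Nat.succ_pos _).trans_le hz.mono.le_apply
      | succ k => rw [hs's, hs's (k + 1)]; exact hz.mono (Nat.succ_lt_succ (hφ (Nat.lt_succ_self k)))
    have hle : ∀ k, s' k ≤ s (φ k) := by
      intro k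
      cases k with
      | zero => exact Nat.zero_le _
      | succ k => rw [hs's]; exact hz.mono.monotone (hφ (Nat.lt_succ_self k))
    have hblk : Blk (z ∘ φ) s' :=
      { mono := hs'mono
        nonneg := fun k => hz.nonneg _
        lo := fun k i h => (hle k).trans (hz.lo _ i h)
        hi := fun k i h => hz.hi _ i h
        norm := fun k => hz.norm _ }
    refine ⟨φ, s', hφ, hblk, ?_⟩
    intro m hm F c hc hF
    refine package hblk 0 (fun k => {s' k})
      (fun k _ => (Set.Ici (s' k)).indicator (f (φ k)))
      (fun k _ => w (φ k)) (fun k => sch_singleton _ _) ?_ ?_ ?_ ?_ ?_ ?_ m hm F c hc hF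
    · intro k q hq
      rw [Finset.mem_singleton] at hq
      subst hq
      exact ⟨le_rfl, hs'mono (Nat.lt_succ_self k)⟩
    · intro k q hq
      exact (hf _).restrict _
    · intro k q hq i hi
      rw [Finset.mem_singleton] at hq
      subst hq
      exact (Set.indicator_apply_ne_zero.1 hi).1
    · intro k q hq q' hq' hlt
      rw [Finset.mem_singleton] at hq hq'
      omega
    · intro k q hq
      rw [Finset.mem_singleton] at hq
      subst hq
      cases k with
      | zero => rw [hs'0]; omega
      | succ k => exact hnw _
    · intro k
      have : ev ((Set.Ici (s' k)).indicator (f (φ k))) (z (φ k))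
          = ev (f (φ k)) (z (φ k)) :=
        ev_congr fun i hi => by
          have := (hle k).trans (hz.lo _ i hi)
          simp [this]
      simp only [pow_zero, inv_one, one_mul, Finset.sum_singleton, Function.comp_apply]
      rw [this]
      have := hev (φ k)
      linarith

end IW

namespace IW

/-! ### Special convex combinations -/

/-- A bound `M` for the mass of sets of order `n` gives the bound `k M` for sets covered by `k` of them. -/
lemma cov_sum_le {n k : ℕ} {G : Finset ℕ} {ψ : ℕ → ℕ} {c : ℕ → ℝ} {M : ℝ} (hc : ∀ t, 0 ≤ c t)
    (h : Cov n k (G.image ψ))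
    (hM : ∀ G' ⊆ G, Sch n (G'.image ψ) → ∑ t ∈ G', c t ≤ M) : ∑ t ∈ G, c t ≤ k * M := by
  obtain ⟨H, hH, hcov⟩ := h
  calc ∑ t ∈ G, c t ≤ ∑ t ∈ G, ∑ j ∈ Finset.range k, if ψ t ∈ H j then c t else 0 := by
        refine Finset.sum_le_sum fun t ht => ?_
        obtain ⟨j, hj, htj⟩ := hcov _ (Finset.mem_image_of_mem ψ ht)
        calc c t = if ψ t ∈ H j then c t else 0 := by simp [htj]
          _ ≤ _ := Finset.single_le_sum (f := fun j => if ψ t ∈ H j then c t else 0)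
            (fun j _ => by split_ifs; exacts [hc t, le_rfl]) (Finset.mem_range.2 hj)
    _ = ∑ j ∈ Finset.range k, ∑ t ∈ G.filter (fun t => ψ t ∈ H j), c t := by
        rw [Finset.sum_comm]
        exact Finset.sum_congr rfl fun j _ => (Finset.sum_filter _ _).symm
    _ ≤ ∑ j ∈ Finset.range k, M := by
        refine Finset.sum_le_sum fun j hj => hM _ (Finset.filter_subset _ _) ?_
        refine (hH j (Finset.mem_range.1 hj)).subset fun x hx => ?_
        obtain ⟨t, ht, rfl⟩ := Finset.mem_image.1 hx
        exact (Finset.mem_filter.1 ht).2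
    _ = k * M := by simp

lemma sum_le_of_zero_off {F G : Finset ℕ} {c : ℕ → ℝ} (hc : ∀ t, 0 ≤ c t)
    (h0 : ∀ t ∉ F, c t = 0) : ∑ t ∈ G, c t ≤ ∑ t ∈ F, c t := by
  calc ∑ t ∈ G, c t ≤ ∑ t ∈ G ∪ F, c t :=
        Finset.sum_le_sum_of_subset_of_nonneg Finset.subset_union_left fun t _ _ => hc t
    _ = ∑ t ∈ F, c t := (Finset.sum_subset Finset.subset_union_right fun t _ h => h0 t h).symm

/-- Special convex combinations: convex combinations supported on `D` sets of `Sch n`, for which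
any `k` sets of `Sch n` (even after shifting to the next marker) carry mass at most `2 * k / D`. -/
lemma scc {s : ℕ → ℕ} (hs : StrictMono s) (n : ℕ) : ∀ D : ℕ, 1 ≤ D → ∀ K : ℕ,
    ∃ (F : Finset ℕ) (c : ℕ → ℝ), (∀ t ∈ F, K ≤ t) ∧ (∀ t, 0 ≤ c t) ∧ (∀ t ∉ F, c t = 0) ∧
      ∑ t ∈ F, c t = 1 ∧ Cov n D (F.image s) ∧
      ∀ (G : Finset ℕ) (k : ℕ), Cov n k (G.image fun t => s (t + 1)) →
        ∑ t ∈ G, c t ≤ 2 * k / D := by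
  have hs1 : Function.Injective fun t => s (t + 1) := fun a b h => by
    have := hs.injective h; omega
  induction n with
  | zero =>
    intro D hD K
    have hD0 : (0 : ℝ) < D := by exact_mod_cast hD
    refine ⟨Finset.Ico K (K + D), fun t => if t ∈ Finset.Ico K (K + D) then (D : ℝ)⁻¹ else 0,
      fun t ht => (Finset.mem_Ico.1 ht).1, fun t => by dsimp only; split_ifs <;> positivity,
      fun t ht => by simp only [ht, if_false], ?_, ?_, ?_⟩
    · rw [Finset.sum_congr rfl fun t ht => if_pos ht]
      simp [hD0.ne']
    · refine (cov_zero_card _).mono_right (Finset.card_image_le.trans ?_)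
      simp
    · intro G k hG
      have := cov_sum_le (c := fun _ => (1 : ℝ)) (M := 1) (fun _ => zero_le_one) hG (by
        intro G' _ h
        have h : (G'.image fun t => s (t + 1)).card ≤ 1 := h
        rw [Finset.card_image_of_injective _ hs1] at h
        simpa using h)
      calc ∑ t ∈ G, (if t ∈ Finset.Ico K (K + D) then (D : ℝ)⁻¹ else 0)
          ≤ ∑ t ∈ G, (D : ℝ)⁻¹ * 1 := Finset.sum_le_sum fun t _ => by
            rw [mul_one]; split_ifs <;> [exact le_rfl; positivity]
        _ ≤ (D : ℝ)⁻¹ * (k * 1) := by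
            rw [← Finset.mul_sum]; exact mul_le_mul_of_nonneg_left this (by positivity)
        _ ≤ 2 * k / D := by
            rw [mul_one, inv_mul_eq_div]
            exact div_le_div_of_nonneg_right (by nlinarith [(Nat.cast_nonneg k : (0 : ℝ) ≤ k)])
              hD0.le
  | succ n ih =>
    intro D hD K
    have hD0 : (0 : ℝ) < D := by exact_mod_cast hD
    have inner : ∀ R : ℕ, ∃ (F : Finset ℕ) (c : ℕ → ℝ) (e : ℕ), (∀ t ∈ F, K ≤ t ∧ t < e) ∧
        (∀ t, 0 ≤ c t) ∧ (∀ t ∉ F, c t = 0) ∧ ∑ t ∈ F, c t = R ∧ Cov (n + 1) R (F.image s) ∧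
        K ≤ e ∧ ∀ G : Finset ℕ, Sch (n + 1) (G.image fun t => s (t + 1)) →
          ∑ t ∈ G, c t ≤ 1 + R / D := by
      intro R
      induction R with
      | zero =>
        exact ⟨∅, fun _ => 0, K, by simp, by simp, by simp, by simp,
          ⟨fun _ => ∅, by simp, by simp⟩, le_rfl, by simp⟩
      | succ R ihR =>
        obtain ⟨F, c, e, hF, hc, h0, hsum, hcov, hKe, hG⟩ := ihR
        set D' := 2 * D * (s e + 1) with hD'
        have hD'1 : 1 ≤ D' := by rw [hD']; exact Nat.mul_pos (by omega) (by omega)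
        obtain ⟨F', c', hF', hc', h0', hsum', hcov', hG'⟩ := ih D' hD'1 (max e D')
        have hdisj : Disjoint F F' := Finset.disjoint_left.2 fun t h1 h2 => by
          have := (hF t h1).2
          have := hF' t h2
          omega
        refine ⟨F ∪ F', c + c', max e (F'.sup id + 1), ?_, ?_, ?_, ?_, ?_, ?_, ?_⟩
        · intro t ht
          rcases Finset.mem_union.1 ht with h | h
          · have := hF t h; exact ⟨this.1, lt_of_lt_of_le this.2 (le_max_left _ _)⟩
          · have h1 := hF' t h
            have h2 : t ≤ F'.sup id := Finset.le_sup (f := id) h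
            exact ⟨by omega, by omega⟩
        · exact fun t => add_nonneg (hc t) (hc' t)
        · intro t ht
          simp only [Finset.mem_union, not_or] at ht
          simp [h0 t ht.1, h0' t ht.2]
        · rw [Finset.sum_union hdisj]
          simp only [Pi.add_apply, Finset.sum_add_distrib]
          rw [hsum, hsum', Finset.sum_eq_zero (s := F), Finset.sum_eq_zero (s := F')]
          · push_cast; ring
          · exact fun t ht => h0 t fun h => Finset.disjoint_left.1 hdisj h ht
          · exact fun t ht => h0' t fun h => Finset.disjoint_left.1 hdisj ht h
        · rw [Finset.image_union]
          refine hcov.union (Sch.cov ⟨D', ?_, hcov'⟩)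
          intro i hi
          obtain ⟨t, ht, rfl⟩ := Finset.mem_image.1 hi
          have := hF' t ht
          have : t ≤ s t := hs.le_apply
          omega
        · omega
        · intro G hGS
          simp only [Pi.add_apply, Finset.sum_add_distrib]
          have hdiv : ((R + 1 : ℕ) : ℝ) / D = R / D + 1 / D := by push_cast; ring
          by_cases hne : ∃ t ∈ G, t ∈ F
          · obtain ⟨t, htG, htF⟩ := hne
            have h1 := hG G hGS
            obtain ⟨k, hk, hck⟩ := hGS
            have h2 := hk _ (Finset.mem_image_of_mem _ htG)
            have h3 : s (t + 1) ≤ s e := hs.monotone (hF t htF).2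
            have h4 := hG' G k hck
            have h5 : (2 * k / D' : ℝ) ≤ 1 / D := by
              rw [hD', div_le_div_iff₀ (by positivity) hD0]
              have : (k : ℝ) ≤ s e + 1 := by exact_mod_cast h2.trans (by omega)
              push_cast
              nlinarith
            linarith
          · push Not at hne
            rw [Finset.sum_eq_zero fun t ht => h0 t (hne t ht)]
            have := sum_le_of_zero_off (G := G) hc' h0'
            have h6 : (0 : ℝ) ≤ ((R + 1 : ℕ) : ℝ) / D := by positivity
            linarith
    obtain ⟨F, c, e, hF, hc, h0, hsum, hcov, -, hG⟩ := inner D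
    refine ⟨F, fun t => c t / D, fun t ht => (hF t ht).1, fun t => div_nonneg (hc t) hD0.le,
      fun t ht => by simp [h0 t ht], ?_, hcov, ?_⟩
    · rw [← Finset.sum_div, hsum, div_self hD0.ne']
    · intro G k hGk
      rw [← Finset.sum_div]
      refine div_le_div_of_nonneg_right ?_ hD0.le
      have := cov_sum_le (M := 2) hc hGk fun G' _ hS => by
        have := hG G' hS
        rw [div_self hD0.ne'] at this
        linarith
      linarith

end IW

namespace IW

/-! ### Splitting a functional over a block sequence -/

lemma lt_idx_succ {s : ℕ → ℕ} (hs : StrictMono s) (q : ℕ) : q < s (idx s q + 1) := by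
  by_contra h
  push Not at h
  have h1 : idx s q + 1 ≤ q := hs.le_apply.trans h
  have : idx s q + 1 ≤ idx s q := Nat.le_findGreatest (P := fun k => s k ≤ q) h1 h
  omega

/-- The blocks whose range is cut by the starting points in `Q`. -/
def cut (s : ℕ → ℕ) (Q R : Finset ℕ) : Finset ℕ :=
  R.filter fun r => ∃ q ∈ Q, s r < q ∧ q < s (r + 1)

lemma cov_cut {s : ℕ → ℕ} (hs : StrictMono s) {Q R : Finset ℕ} {n k : ℕ} (h : Cov n k Q) :
    Cov n k ((cut s Q R).image fun t => s (t + 1)) := by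
  refine (h.image (fun q => s (idx s q + 1)) fun q _ => (lt_idx_succ hs q).le).subset ?_
  intro x hx
  obtain ⟨r, hr, rfl⟩ := Finset.mem_image.1 hx
  obtain ⟨-, q, hq, h1, h2⟩ := Finset.mem_filter.1 hr
  refine Finset.mem_image.2 ⟨q, hq, ?_⟩
  simp only [idx_eq hs h1.le h2]

/-- On a block whose range is not cut, at most one functional acts. -/
lemma not_cut {v : ℕ → ℕ →₀ ℝ} {s : ℕ → ℕ} (hv : Rng v s) {Q R : Finset ℕ} {f : ℕ → ℕ → ℝ}
    (hlow : ∀ q ∈ Q, ∀ i, f q i ≠ 0 → q ≤ i)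
    (hsep : ∀ q ∈ Q, ∀ q' ∈ Q, q < q' → ∀ i, f q i ≠ 0 → i < q') {r : ℕ} (hrR : r ∈ R)
    (hr : r ∉ cut s Q R) :
    ∑ q ∈ Q, ev (f q) (v r) = 0 ∨
      ∃ q ∈ Q, q ≤ s r ∧ ∑ q ∈ Q, ev (f q) (v r) = ev (f q) (v r) := by
  have h1 : ∑ q ∈ Q, ev (f q) (v r) = ∑ q ∈ Q.filter (fun q => q ≤ s r), ev (f q) (v r) := by
    symm
    refine Finset.sum_subset (Finset.filter_subset _ _) fun q hq hq' => ?_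
    refine ev_zero_left fun i hi => ?_
    by_contra h
    have h2 := hlow q hq i h
    have h3 := hv.hi r i hi
    simp only [Finset.mem_filter, hq, true_and, not_le] at hq'
    exact hr (Finset.mem_filter.2 ⟨hrR, q, hq, hq', by omega⟩)
  rw [h1]
  rcases sum_ev_one (Q := Q.filter (fun q => q ≤ s r)) (f := f) (z := v r) (σ := s r)
    (fun q hq q' hq' => hsep q (Finset.mem_filter.1 hq).1 q' (Finset.mem_filter.1 hq').1)
    (fun q hq => (Finset.mem_filter.1 hq).2) (hv.lo r) with h | ⟨q, hq, h⟩
  · exact Or.inl h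
  · exact Or.inr ⟨q, (Finset.mem_filter.1 hq).1, (Finset.mem_filter.1 hq).2, h⟩

/-- A coordinate functional acts on at most one block. -/
lemma leaf_ev {v : ℕ → ℕ →₀ ℝ} {s : ℕ → ℕ} (hv : Rng v s) {f : ℕ → ℝ} (hf : WF f 0) :
    ∃ t₀, ∀ t ≠ t₀, ev f (v t) = 0 := by
  have hex : ∃ i, ∀ j ≠ i, f j = 0 := by
    cases hf with
    | leaf i c hc => exact ⟨i, fun j hj => by simp [hj]⟩
    | op m hm => omega
  obtain ⟨i, hi⟩ := hex
  refine ⟨idx s i, fun t ht => ev_zero_left fun j hj => hi j ?_⟩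
  rintro rfl
  exact ht (idx_eq hv.mono (hv.lo t j hj) (hv.hi t j hj)).symm

lemma sum_le_of_single {R : Finset ℕ} {g : ℕ → ℝ} {M : ℝ} (hM : 0 ≤ M) {t₀ : ℕ}
    (h0 : ∀ t ≠ t₀, g t = 0) (h : ∀ t ∈ R, g t ≤ M) : ∑ t ∈ R, g t ≤ M := by
  by_cases ht : t₀ ∈ R
  · rw [Finset.sum_eq_single_of_mem t₀ ht fun t _ h => h0 t h]
    exact h _ ht
  · rw [Finset.sum_eq_zero fun t h => h0 t fun e => ht (e ▸ h)]
    exact hM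

/-! ### Coefficient vectors -/

/-- The linear combination of the `z k` with coefficient vector `C`. -/
noncomputable def lc (z : ℕ → ℕ →₀ ℝ) : (ℕ →₀ ℝ) →ₗ[ℝ] (ℕ →₀ ℝ) := Finsupp.linearCombination ℝ z

/-- The sum of the coefficients. -/
noncomputable def mass : (ℕ →₀ ℝ) →ₗ[ℝ] ℝ := ev fun _ => 1

lemma lc_eq (z : ℕ → ℕ →₀ ℝ) (C : ℕ →₀ ℝ) : lc z C = ∑ k ∈ C.support, C k • z k := by
  simp [lc, Finsupp.linearCombination_apply, Finsupp.sum]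

lemma mass_eq (C : ℕ →₀ ℝ) : mass C = ∑ k ∈ C.support, C k := by simp [mass, ev_eq]

lemma lc_nonneg {z : ℕ → ℕ →₀ ℝ} (hz : ∀ k, 0 ≤ z k) {C : ℕ →₀ ℝ} (hC : 0 ≤ C) : 0 ≤ lc z C := by
  rw [lc_eq]; exact sum_smul_nonneg hz (fun k => hC k) _

lemma lc_ne_zero {z : ℕ → ℕ →₀ ℝ} {C : ℕ →₀ ℝ} {i : ℕ} (h : lc z C i ≠ 0) :
    ∃ k ∈ C.support, z k i ≠ 0 := by
  by_contra hc
  push Not at hc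
  apply h
  rw [lc_eq, Finsupp.finsetSum_apply]
  exact Finset.sum_eq_zero fun k hk => by simp [hc k hk]

lemma Rng.lc {z : ℕ → ℕ →₀ ℝ} {s : ℕ → ℕ} (hz : Rng z s) {κ : ℕ → ℕ} (hκ : StrictMono κ)
    {C : ℕ → ℕ →₀ ℝ} (hC : ∀ r, 0 ≤ C r)
    (hsupp : ∀ r, ∀ k ∈ (C r).support, κ r ≤ k ∧ k < κ (r + 1)) :
    Rng (fun r => lc z (C r)) (s ∘ κ) where
  mono := hz.mono.comp hκ
  nonneg r := lc_nonneg hz.nonneg (hC r)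
  lo r i h := by
    obtain ⟨k, hk, h⟩ := lc_ne_zero h
    exact (hz.mono.monotone (hsupp r k hk).1).trans (hz.lo k i h)
  hi r i h := by
    obtain ⟨k, hk, h⟩ := lc_ne_zero h
    exact (hz.hi k i h).trans_le (hz.mono.monotone (hsupp r k hk).2)

/-- Vectors available arbitrarily far out can be chosen successively. -/
lemma exists_succ {P : ℕ → (ℕ →₀ ℝ) → Prop}
    (h : ∀ K, ∃ C : ℕ →₀ ℝ, (∀ k ∈ C.support, K ≤ k) ∧ P K C) (K₀ : ℕ) :
    ∃ (κ : ℕ → ℕ) (C : ℕ → ℕ →₀ ℝ), StrictMono κ ∧ κ 0 = K₀ ∧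
      ∀ r, (∀ k ∈ (C r).support, κ r ≤ k ∧ k < κ (r + 1)) ∧ P (κ r) (C r) := by
  choose C hC hP using h
  let κ : ℕ → ℕ := fun r => Nat.rec K₀ (fun _ K => max (K + 1) ((C K).support.sup id + 1)) r
  have hκ : ∀ r, κ (r + 1) = max (κ r + 1) ((C (κ r)).support.sup id + 1) := fun _ => rfl
  refine ⟨κ, fun r => C (κ r), strictMono_nat_of_lt_succ fun r => ?_, rfl, fun r => ⟨?_, hP _⟩⟩
  · rw [hκ]; omega
  · intro k hk
    refine ⟨hC _ k hk, ?_⟩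
    have : k ≤ (C (κ r)).support.sup id := Finset.le_sup (f := id) hk
    rw [hκ]; omega

/-! ### Stabilisation of the lower `ℓ₁`-constants -/

/-- Lower `ℓ₁` estimate with constant `a` for `Sch n`-combinations beyond `K`. -/
def Good (z : ℕ → ℕ →₀ ℝ) (s : ℕ → ℕ) (n K : ℕ) (a : ℝ) : Prop :=
  ∀ C : ℕ →₀ ℝ, 0 ≤ C → (∀ k ∈ C.support, K ≤ k) → Sch n (C.support.image s) →
    a * mass C ≤ NZ (lc z C)

lemma mass_nonneg {C : ℕ →₀ ℝ} (hC : 0 ≤ C) : 0 ≤ mass C := ev_nonneg (fun _ => zero_le_one) hC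

/-- There is a level `n` at which the best lower `ℓ₁`-constant hardly changes when passing to
level `n + j`: otherwise the constants would decay geometrically, while they
are at least `2^{-m}/4` at level `m²`. -/
lemma pigeon {z : ℕ → ℕ →₀ ℝ} {s : ℕ → ℕ} (hz : Blk z s) (hl : Lower z s) {j : ℕ} (hj : 1 ≤ j)
    {δ : ℝ} (hδ : 0 < δ) : ∃ n K₀ a, 0 < a ∧ Good z s (n + j) K₀ a ∧
      ∀ K, ∃ C : ℕ →₀ ℝ, (∀ k ∈ C.support, K ≤ k) ∧ 0 ≤ C ∧ Sch n (C.support.image s) ∧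
        mass C = 1 ∧ NZ (lc z C) ≤ (1 + δ) * a := by
  obtain ⟨L, hL⟩ := pow_unbounded_of_one_lt (8 : ℝ) (show 1 < 1 + δ by linarith)
  have hL1 : 1 ≤ L := by
    rcases Nat.eq_zero_or_pos L with rfl | h
    · norm_num at hL
    · exact h
  by_contra hcon
  push Not at hcon
  set m := j * L with hm
  set a₀ : ℝ := (2 ^ m : ℝ)⁻¹ * 4⁻¹ with ha₀
  have ha₀p : 0 < a₀ := by positivity
  have hm1 : 1 ≤ m := Nat.mul_pos hj hL1
  set M := j * (L * L) with hM
  have step : ∀ l ≤ M, ∃ K, Good z s (j * (M - l)) K ((1 + δ) ^ l * a₀) := by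
    intro l
    induction l with
    | zero =>
      intro _
      refine ⟨0, fun C hC _ hS => ?_⟩
      have := hl m hm1 C.support C (fun k => hC k) (by
        convert hS using 1
        rw [hM, hm]; simp; ring)
      rw [lc_eq, mass_eq]
      simpa [ha₀, mul_assoc] using this
    | succ l ih =>
      intro hlM
      obtain ⟨K, hK⟩ := ih (by omega)
      have he : j * (M - l) = j * (M - (l + 1)) + j := by
        rw [show M - l = (M - (l + 1)) + 1 by omega]; ring
      rw [he] at hK
      obtain ⟨K', hK'⟩ := hcon _ K _ (by positivity) hK
      refine ⟨K', fun C hC hsupp hS => ?_⟩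
      have hmn := mass_nonneg hC
      rcases hmn.eq_or_lt with h0 | h0
      · rw [← h0, mul_zero]; exact NZ_nonneg _
      · have hne : (mass C)⁻¹ ≠ 0 := inv_ne_zero h0.ne'
        have hss : ((mass C)⁻¹ • C).support = C.support := Finsupp.support_smul_eq hne
        have := hK' ((mass C)⁻¹ • C) (by rw [hss]; exact hsupp)
          (smul_nonneg (inv_nonneg.2 hmn) hC) (by rw [hss]; exact hS)
          (by rw [map_smul, smul_eq_mul, inv_mul_cancel₀ h0.ne'])
        rw [map_smul, NZ_smul (inv_nonneg.2 hmn), inv_mul_eq_div, lt_div_iff₀ h0] at this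
        calc (1 + δ) ^ (l + 1) * a₀ * mass C = (1 + δ) * ((1 + δ) ^ l * a₀) * mass C := by ring
          _ ≤ _ := this.le
  obtain ⟨K, hK⟩ := step M le_rfl
  have h1 := hK (Finsupp.single K 1) (by
      intro i; rw [Finsupp.single_apply]; split_ifs <;> simp) (by
      intro k hk
      have := Finsupp.support_single_subset hk
      simp at this; omega) (by
      rw [Finsupp.support_single _ one_ne_zero, Finset.image_singleton]
      exact sch_singleton _ _)
  rw [mass_eq, lc_eq, Finsupp.support_single _ one_ne_zero] at h1
  simp only [Finset.sum_singleton, Finsupp.single_eq_same, one_smul, mul_one, hz.norm] at h1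
  have h2 : (8 : ℝ) ^ m < (1 + δ) ^ M := by
    have : M = L * m := by rw [hM, hm]; ring
    rw [this, pow_mul (1 + δ)]
    exact pow_lt_pow_left₀ hL (by norm_num) (Nat.one_le_iff_ne_zero.1 hm1)
  have h3 : (8 : ℝ) ^ m * a₀ ≥ 1 := by
    rw [ha₀, show (8 : ℝ) = 2 * 4 by norm_num, mul_pow]
    have : (4 : ℝ) ^ 1 ≤ 4 ^ m := pow_le_pow_right₀ (by norm_num) hm1
    have h22 : (2 : ℝ) ^ m ≠ 0 := by positivity
    field_simp
    linarith
  nlinarith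

end IW

namespace IW

/-! ### Vectors with small action of the low weights -/

lemma supp_sum_subset {R : Finset ℕ} {b : ℕ → ℝ} {C : ℕ → ℕ →₀ ℝ} {k : ℕ}
    (hk : k ∈ (∑ r ∈ R, b r • C r).support) : ∃ r ∈ R, k ∈ (C r).support := by
  by_contra h
  push Not at h
  rw [Finsupp.mem_support_iff, Finsupp.finsetSum_apply] at hk
  exact hk (Finset.sum_eq_zero fun r hr => by
    simp [Finsupp.notMem_support_iff.1 (h r hr)])

/-- Normalized averages of the `z k` on which functionals of weight `w`, `1 ≤ w ≤ T`, take values at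
most `(1 + δ) 2^{-w}`, and coordinate functionals take small values. -/
lemma ris_vector {z : ℕ → ℕ →₀ ℝ} {s : ℕ → ℕ} (hz : Blk z s) (hl : Lower z s) (T : ℕ) {δ : ℝ}
    (hδ : 0 < δ) (K : ℕ) : ∃ C : ℕ →₀ ℝ, (∀ k ∈ C.support, K ≤ k) ∧ 0 ≤ C ∧ NZ (lc z C) = 1 ∧
      (∀ f w, WF f w → 1 ≤ w → w ≤ T → ev f (lc z C) ≤ (1 + δ) / 2 ^ w) ∧
      (∀ f, WF f 0 → ev f (lc z C) ≤ δ) := by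
  -- the constant `δ₁` absorbs the approximation, the number `D` the functionals cutting blocks
  set δ₁ := δ / 2 with hδ₁
  have hδ₁p : 0 < δ₁ := by positivity
  obtain ⟨n, K₀, a, ha, hgood, hC⟩ := pigeon hz hl (j := T * T + 1) (by omega) hδ₁p
  obtain ⟨κ, C, hκ, hκ0, hCr⟩ := exists_succ hC (max K K₀)
  have hCn : ∀ r, 0 ≤ C r := fun r => (hCr r).2.1
  have hR : Rng (fun r => lc z (C r)) (s ∘ κ) := hz.toRng.lc hκ hCn fun r => (hCr r).1
  obtain ⟨D, hD⟩ := exists_nat_gt (max 1 (4 * (1 + δ₁) * 2 ^ T / δ))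
  have hD1 : (1 : ℝ) < D := (le_max_left _ _).trans_lt hD
  have hD1' : 1 ≤ D := by exact_mod_cast hD1.le
  have hD0 : (0 : ℝ) < D := by linarith
  have hDδ : (1 + δ₁) * (2 / D) ≤ δ / 2 / 2 ^ T := by
    have h := (le_max_right _ _).trans_lt hD
    rw [div_lt_iff₀ hδ] at h
    rw [mul_div_assoc', div_div, div_le_div_iff₀ hD0 (by positivity)]
    linarith
  obtain ⟨F, c, hF, hc, hc0, hsum, hcov, hG⟩ := scc hR.mono (T * T) D hD1' D
  have hFS : Sch (T * T + 1) (F.image (s ∘ κ)) := by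
    refine ⟨D, fun i hi => ?_, hcov⟩
    obtain ⟨t, ht, rfl⟩ := Finset.mem_image.1 hi
    have := hF t ht
    have : t ≤ (s ∘ κ) t := hR.mono.le_apply
    omega
  set B : ℕ →₀ ℝ := ∑ r ∈ F, c r • C r with hB
  have hBn : 0 ≤ B := Finset.sum_nonneg fun r _ => smul_nonneg (hc r) (hCn r)
  have hBs : ∀ k ∈ B.support, ∃ r ∈ F, k ∈ (C r).support := fun k hk => supp_sum_subset hk
  have hBlo : ∀ k ∈ B.support, max K K₀ ≤ k := fun k hk => by
    obtain ⟨r, -, h⟩ := hBs k hk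
    rw [← hκ0]
    exact (hκ.monotone (Nat.zero_le r)).trans ((hCr r).1 k h).1
  have hBm : mass B = 1 := by
    rw [hB, map_sum, ← hsum]
    exact Finset.sum_congr rfl fun r _ => by rw [map_smul, (hCr r).2.2.2.1]; simp
  have hBS : Sch (n + (T * T + 1)) (B.support.image s) := by
    have h := Sch.comp hFS (fun x => (C (idx (s ∘ κ) x)).support.image s) (s := n)
      (fun x _ => (hCr _).2.2.1) (by
        intro x hx b hb
        obtain ⟨r, hr, rfl⟩ := Finset.mem_image.1 hx
        rw [idx_eq hR.mono le_rfl (hR.mono (Nat.lt_succ_self r))] at hb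
        obtain ⟨k, hk, rfl⟩ := Finset.mem_image.1 hb
        exact hz.mono.monotone ((hCr r).1 k hk).1)
    refine h.subset fun x hx => ?_
    obtain ⟨k, hk, rfl⟩ := Finset.mem_image.1 hx
    obtain ⟨r, hr, hkr⟩ := hBs k hk
    refine Finset.mem_biUnion.2 ⟨_, Finset.mem_image_of_mem _ hr, ?_⟩
    rw [idx_eq hR.mono le_rfl (hR.mono (Nat.lt_succ_self r))]
    exact Finset.mem_image_of_mem _ hkr
  have hNB : a ≤ NZ (lc z B) := by
    have := hgood B hBn (fun k hk => (le_max_right _ _).trans (hBlo k hk)) hBS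
    rwa [hBm, mul_one] at this
  have hNp : 0 < NZ (lc z B) := ha.trans_le hNB
  have hlcB : lc z B = ∑ r ∈ F, c r • lc z (C r) := by
    rw [hB, map_sum]; simp only [map_smul]
  set ρ := (1 + δ₁) * a with hρ
  have hρ0 : 0 ≤ ρ := by positivity
  have hv : ∀ {f w}, WF f w → ∀ r, ev f (lc z (C r)) ≤ ρ := fun hf r =>
    (ev_le_NZ hf _).trans (hCr r).2.2.2.2
  have hcle : ∀ r, c r ≤ 2 / D := by
    intro r
    have := hG {r} 1 (by rw [Finset.image_singleton]; exact (sch_singleton _ _).cov)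
    simpa using this
  -- transfer of the bounds to the normalized vector
  have hfin : ∀ {x b : ℝ}, x ≤ ρ * b → 0 ≤ b → (NZ (lc z B))⁻¹ * x ≤ (1 + δ₁) * b := by
    intro x b hx hb
    rw [inv_mul_le_iff₀ hNp]
    refine hx.trans ?_
    rw [hρ]
    calc (1 + δ₁) * a * b ≤ (1 + δ₁) * NZ (lc z B) * b := by gcongr
      _ = _ := by ring
  have hT1 : (1 : ℝ) ≤ 2 ^ T := one_le_pow₀ (by norm_num)
  refine ⟨(NZ (lc z B))⁻¹ • B, ?_, smul_nonneg (inv_nonneg.2 hNp.le) hBn, ?_, ?_, ?_⟩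
  · intro k hk
    exact (le_max_left _ _).trans (hBlo k (Finsupp.support_smul hk))
  · rw [map_smul, NZ_smul (inv_nonneg.2 hNp.le), inv_mul_cancel₀ hNp.ne']
  · intro f w hf hw1 hwT
    have hff := hf
    cases hf with
    | leaf i c hc => omega
    | op m hm Q hQ f v hf hlow hsep hv' =>
      rw [map_smul, map_smul, smul_eq_mul]
      set H := cut (s ∘ κ) Q F with hH
      have hQT : Cov (T * T) 1 Q := (hQ.mono (Nat.mul_le_mul hwT hwT)).cov
      have hHc : ∑ r ∈ H, c r ≤ 2 / D := by
        have := hG H 1 (cov_cut hR.mono hQT)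
        simpa using this
      have key : ev (fun i => (2 ^ w : ℝ)⁻¹ * ∑ q ∈ Q, f q i) (lc z B)
          ≤ ρ * ((2 ^ w : ℝ)⁻¹ + 2 / D) := by
        rw [hlcB, map_sum]
        calc ∑ r ∈ F, ev (fun i => (2 ^ w : ℝ)⁻¹ * ∑ q ∈ Q, f q i) (c r • lc z (C r))
            ≤ ∑ r ∈ F, (c r * ((2 ^ w : ℝ)⁻¹ * ρ) + if r ∈ H then c r * ρ else 0) := by
              refine Finset.sum_le_sum fun r hr => ?_
              rw [map_smul, smul_eq_mul]
              by_cases hrH : r ∈ H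
              · rw [if_pos hrH]
                have h1 : 0 ≤ c r * ((2 ^ w : ℝ)⁻¹ * ρ) := mul_nonneg (hc r) (by positivity)
                have h2 := mul_le_mul_of_nonneg_left (hv hff r) (hc r)
                linarith
              · rw [if_neg hrH, add_zero, ev_smul_sum]
                refine mul_le_mul_of_nonneg_left ?_ (hc r)
                refine mul_le_mul_of_nonneg_left ?_ (by positivity)
                rcases not_cut hR hlow hsep hr hrH with h | ⟨q, hq, -, h⟩
                · rw [h]; exact hρ0
                · rw [h]; exact hv (hf q hq) r
          _ = (2 ^ w : ℝ)⁻¹ * ρ + (∑ r ∈ H, c r) * ρ := by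
              rw [Finset.sum_add_distrib, ← Finset.sum_mul, hsum, one_mul, ← Finset.sum_filter,
                Finset.sum_mul]
              congr 2
              rw [hH, cut]; ext r; simp
          _ ≤ _ := by
              have := mul_le_mul_of_nonneg_right hHc hρ0
              linarith
      refine (hfin key (by positivity)).trans ?_
      have h2w : (2 : ℝ) ^ w ≤ 2 ^ T := pow_le_pow_right₀ (by norm_num) hwT
      have h3 : δ / 2 / 2 ^ T ≤ δ / 2 / 2 ^ w :=
        div_le_div_of_nonneg_left (by positivity) (by positivity) h2w
      have h4 : (1 + δ) / 2 ^ w = (1 + δ₁) * (2 ^ w : ℝ)⁻¹ + δ / 2 / 2 ^ w := by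
        rw [hδ₁, div_eq_mul_inv, div_eq_mul_inv (δ / 2)]; ring
      rw [h4, mul_add]
      linarith
  · intro f hf
    rw [map_smul, map_smul, smul_eq_mul]
    have key : ev f (lc z B) ≤ ρ * (2 / D) := by
      obtain ⟨t₀, ht₀⟩ := leaf_ev hR hf
      rw [hlcB, map_sum]
      refine sum_le_of_single (by positivity) (t₀ := t₀) (fun t ht => ?_) fun t _ => ?_
      · rw [map_smul, ht₀ t ht, smul_zero]
      · rw [map_smul, smul_eq_mul, mul_comm]
        exact mul_le_mul (hv hf t) (hcle t) (hc t) hρ0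
    refine (hfin key (by positivity)).trans (hDδ.trans ?_)
    rw [div_div]
    refine div_le_self hδ.le (by linarith)

end IW

namespace IW

/-! ### Rapidly increasing sequences -/

/-- A rapidly increasing sequence: functionals of weight `w`, `1 ≤ w ≤ s t`, take values at most
`(1 + δ) 2^{-w}` on `y t`, and `y t` is almost normed by a functional of weight exceeding `s t`. -/
structure RIS (y : ℕ → ℕ →₀ ℝ) (s : ℕ → ℕ) (δ : ℝ) : Prop extends Blk y s where
  low : ∀ t f w, WF f w → 1 ≤ w → w ≤ s t → ev f (y t) ≤ (1 + δ) / 2 ^ w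
  norming : ∀ t, ∃ g w, WF g w ∧ s t < w ∧ 1 - δ ≤ ev g (y t)

/-- Choosing the vectors of `ris_vector` successively. Their norming functionals have large weight,
because those of small weight take values at most `(1 + δ) / 2 < 1 - δ`. -/
lemma exists_ris {z : ℕ → ℕ →₀ ℝ} {s : ℕ → ℕ} (hz : Blk z s) (hl : Lower z s) {δ : ℝ}
    (hδ : 0 < δ) (hδ' : δ < 1 / 4) : ∃ (κ : ℕ → ℕ) (C : ℕ → ℕ →₀ ℝ), StrictMono κ ∧
      (∀ r, 0 ≤ C r) ∧ (∀ r, ∀ k ∈ (C r).support, κ r ≤ k ∧ k < κ (r + 1)) ∧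
      RIS (fun r => lc z (C r)) (s ∘ κ) δ := by
  obtain ⟨κ, C, hκ, -, hC⟩ := exists_succ (fun K => ris_vector hz hl (s K) hδ K) 0
  refine ⟨κ, C, hκ, fun r => (hC r).2.1, fun r => (hC r).1, ?_⟩
  exact
    { toRng := hz.toRng.lc hκ (fun r => (hC r).2.1) fun r => (hC r).1
      norm := fun r => (hC r).2.2.1
      low := fun r f w hf h1 h2 => (hC r).2.2.2.1 f w hf h1 h2
      norming := fun r => by
        obtain ⟨g, w, hg, hev⟩ := exists_lt_ev (z := lc z (C r)) (r := 1 - δ)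
          (by rw [(hC r).2.2.1]; linarith)
        refine ⟨g, w, hg, ?_, hev.le⟩
        by_contra hw
        push Not at hw
        rcases Nat.eq_zero_or_pos w with rfl | hpos
        · have := (hC r).2.2.2.2 g hg
          linarith
        · have h1 := (hC r).2.2.2.1 g w hg hpos hw
          have h2 : (1 + δ) / 2 ^ w ≤ (1 + δ) / 2 ^ 1 :=
            div_le_div_of_nonneg_left (by linarith) (by norm_num)
              (pow_le_pow_right₀ (by norm_num) hpos)
          linarith }

variable {y : ℕ → ℕ →₀ ℝ} {s : ℕ → ℕ} {δ : ℝ}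

/-- Since the norming functionals of `y t` have weight exceeding `s t`, they can be combined directly. -/
lemma RIS.lower (hy : RIS y s δ) {m : ℕ} (hm : 1 ≤ m) {F : Finset ℕ} {c : ℕ → ℝ}
    (hc : ∀ k, 0 ≤ c k) (hF : Sch (m * m) (F.image s)) :
    (2 ^ m : ℝ)⁻¹ * ((1 - δ) * ∑ k ∈ F, c k) ≤ NZ (∑ k ∈ F, c k • y k) := by
  choose g w hg hw hev using hy.norming
  refine package hy.toBlk 0 (fun k => {s k}) (fun k _ => (Set.Ici (s k)).indicator (g k))
    (fun k _ => w k) (fun k => sch_singleton _ _) ?_ ?_ ?_ ?_ ?_ ?_ m hm F c hc hF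
  · intro k q hq
    rw [Finset.mem_singleton] at hq
    subst hq
    exact ⟨le_rfl, hy.mono (Nat.lt_succ_self k)⟩
  · intro k q hq
    exact (hg _).restrict _
  · intro k q hq i hi
    rw [Finset.mem_singleton] at hq
    subst hq
    exact (Set.indicator_apply_ne_zero.1 hi).1
  · intro k q hq q' hq' hlt
    rw [Finset.mem_singleton] at hq hq'
    omega
  · intro k q hq
    rw [Finset.mem_singleton] at hq
    subst hq
    exact Or.inr (hw _)
  · intro k
    have : ev ((Set.Ici (s k)).indicator (g k)) (y k) = ev (g k) (y k) :=
      ev_congr fun i hi => by simp [hy.lo k i hi]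
    simp only [pow_zero, inv_one, one_mul, Finset.sum_singleton]
    rw [this]
    exact hev k

/-- A coordinate functional, or a functional of weight at least `L`, acts non-negligibly on at most one
term: on later terms by `RIS.low`, on earlier ones because all coordinates of the functional are at
most `2^{-w}`. -/
lemma RIS.high (hy : RIS y s δ) (hδ : δ ≤ 1) {L : ℕ} {η : ℝ} (hη0 : 0 ≤ η) (hL : 1 ≤ L)
    (hη : ∀ w : ℕ, L ≤ w → 2 * w / 2 ^ w ≤ η) {f : ℕ → ℝ} {w : ℕ} (hf : WF f w)
    (hw : w = 0 ∨ L ≤ w) : ∃ t₀, ∀ t ≠ t₀, ev f (y t) ≤ η := by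
  rcases hw with rfl | hw
  · obtain ⟨t₀, h⟩ := leaf_ev hy.toRng hf
    exact ⟨t₀, fun t ht => (h t ht).trans_le hη0⟩
  · refine ⟨idx s (w - 1), fun t ht => le_trans ?_ (hη w hw)⟩
    have hw1 : (1 : ℝ) ≤ w := by exact_mod_cast hL.trans hw
    rcases lt_or_gt_of_ne ht with h | h
    · have h1 : s (idx s (w - 1)) ≤ w - 1 :=
        Nat.findGreatest_of_ne_zero (m := idx s (w - 1)) rfl (by omega)
      have h2 : s (t + 1) ≤ s (idx s (w - 1)) := hy.mono.monotone h
      have h3 : (y t).support ⊆ Finset.range w := fun i hi => by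
        have := hy.hi t i (Finsupp.mem_support_iff.1 hi)
        rw [Finset.mem_range]; omega
      have h4 : ((y t).support.card : ℝ) ≤ w := by
        have := Finset.card_le_card h3
        rw [Finset.card_range] at this
        exact_mod_cast this
      rw [ev_eq]
      calc ∑ i ∈ (y t).support, f i * y t i ≤ ∑ i ∈ (y t).support, (2 ^ w : ℝ)⁻¹ * 1 := by
            refine Finset.sum_le_sum fun i _ => ?_
            refine mul_le_mul (hf.le_weight (hL.trans hw) i) ?_ (hy.nonneg t i) (by positivity)
            rw [← hy.norm t]; exact le_NZ _ _
        _ = (y t).support.card / 2 ^ w := by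
            rw [Finset.sum_const, nsmul_eq_mul, mul_one, div_eq_mul_inv]
        _ ≤ 2 * w / 2 ^ w := by
            refine div_le_div_of_nonneg_right ?_ (by positivity)
            linarith
    · have h1 := lt_idx_succ hy.mono (w - 1)
      have h2 : s (idx s (w - 1) + 1) ≤ s t := hy.mono.monotone h
      refine (hy.low t f w hf (hL.trans hw) (by omega)).trans ?_
      refine div_le_div_of_nonneg_right ?_ (by positivity)
      linarith

/-- The basic inequality: outside a small set `H` of indices a functional of weight `m` acts
negligibly on a combination of a rapidly increasing sequence, apart from the action of a single
functional `f q` with `q < L`. -/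
lemma RIS.me (hy : RIS y s δ) (hδ0 : 0 ≤ δ) (hδ : δ ≤ 1) {L : ℕ} {η : ℝ} (hη0 : 0 ≤ η)
    (hL : 1 ≤ L) (hη : ∀ w : ℕ, L ≤ w → 2 * w / 2 ^ w ≤ η)
    {m : ℕ} (hm : 1 ≤ m) {Q : Finset ℕ} (hQ : Sch (m * m) Q) {f : ℕ → ℕ → ℝ} {w : ℕ → ℕ}
    (hf : ∀ q ∈ Q, WF (f q) (w q))
    (hlow : ∀ q ∈ Q, ∀ i, f q i ≠ 0 → q ≤ i)
    (hsep : ∀ q ∈ Q, ∀ q' ∈ Q, q < q' → ∀ i, f q i ≠ 0 → i < q')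
    (hw : ∀ q ∈ Q, w q = 0 ∨ q < w q)
    {T : Finset ℕ} (hT : ∀ t ∈ T, L ≤ s t ∧ m ≤ s t) {b : ℕ → ℝ} (hb : ∀ t, 0 ≤ b t) :
    ∃ (H : Finset ℕ) (X₀ : ℝ), H ⊆ T ∧
      (∀ n k, Cov n k Q → Cov n (2 * k) (H.image fun t => s (t + 1))) ∧
      X₀ ≤ NZ (∑ t ∈ T, b t • y t) ∧ ((∀ q ∈ Q, L ≤ q) → X₀ = 0) ∧
      ev (fun i => (2 ^ m : ℝ)⁻¹ * ∑ q ∈ Q, f q i) (∑ t ∈ T, b t • y t)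
        ≤ (2 ^ m : ℝ)⁻¹ * X₀ + (1 + δ) * (2 ^ m : ℝ)⁻¹ * ∑ t ∈ H, b t + η * ∑ t ∈ T, b t := by
  set u := ∑ t ∈ T, b t • y t with hu
  have hop := WF.op m hm Q hQ f w hf hlow hsep hw
  set θ : ℝ := (2 ^ m : ℝ)⁻¹ with hθ
  have hθ0 : 0 ≤ θ := by positivity
  have hθ1 : θ ≤ 1 := inv_le_one_of_one_le₀ (one_le_pow₀ (by norm_num))
  set Q' := Q.filter (fun q => ¬ q < L) with hQ'
  have hsub : Q' ⊆ Q := Finset.filter_subset _ _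
  have hun : ∀ i, u i ≠ 0 → L ≤ i := by
    intro i hi
    by_contra h
    apply hi
    rw [hu, Finsupp.finsetSum_apply]
    refine Finset.sum_eq_zero fun t ht => ?_
    by_cases h0 : y t i = 0
    · simp [h0]
    · have := hy.lo t i h0
      have := (hT t ht).1
      omega
  set H1 := cut s Q' T with hH1
  set g : ℕ → ℝ := fun t => ∑ q ∈ Q', ev (f q) (y t) with hg
  set H2 := (T \ H1).filter (fun t => η < g t) with hH2
  have hg1 : ∀ t ∈ T \ H1, g t = 0 ∨ ∃ q ∈ Q', q ≤ s t ∧ g t = ev (f q) (y t) := by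
    intro t ht
    rw [Finset.mem_sdiff] at ht
    exact not_cut hy.toRng (Q := Q') (R := T) (fun q hq => hlow q (hsub hq))
      (fun q hq q' hq' => hsep q (hsub hq) q' (hsub hq')) ht.1 ht.2
  have hqex : ∀ t ∈ H2, ∃ q ∈ Q', q ≤ s t ∧ g t = ev (f q) (y t) := by
    intro t ht
    obtain ⟨h1, h2⟩ := Finset.mem_filter.1 ht
    rcases hg1 t h1 with h | h
    · rw [h] at h2; linarith
    · exact h
  have hcov2 : ∀ n k, Cov n k Q → Cov n k (H2.image fun t => s (t + 1)) := by
    intro n k hcov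
    choose! qf hq1 hq2 hq3 using hqex
    have hinj : Set.InjOn qf (H2 : Set ℕ) := by
      intro t ht t' ht' he
      have ht := Finset.mem_coe.1 ht
      have ht' := Finset.mem_coe.1 ht'
      have hqQ := hsub (hq1 t ht)
      have hwq : w (qf t) = 0 ∨ L ≤ w (qf t) := by
        have h1 := hw _ hqQ
        have h2 := (Finset.mem_filter.1 (hq1 t ht)).2
        omega
      obtain ⟨t₀, ht₀⟩ := hy.high hδ hη0 hL hη (hf _ hqQ) hwq
      have key : ∀ a ∈ H2, qf a = qf t → a = t₀ := by
        intro a ha hqa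
        by_contra hne
        have h1 := ht₀ a hne
        have h2 := (Finset.mem_filter.1 ha).2
        rw [hq3 a ha, hqa] at h2
        linarith
      rw [key t ht rfl, key t' ht' he.symm]
    refine ((hcov.subset (F' := H2.image qf) fun q hq => ?_).image
      (fun q => s (Function.invFunOn qf (H2 : Set ℕ) q + 1)) fun q hq => ?_).subset ?_
    · obtain ⟨t, ht, rfl⟩ := Finset.mem_image.1 hq
      exact hsub (hq1 t ht)
    · obtain ⟨t, ht, rfl⟩ := Finset.mem_image.1 hq
      rw [hinj.leftInvOn_invFunOn (Finset.mem_coe.2 ht)]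
      exact (hq2 t ht).trans (hy.mono (Nat.lt_succ_self t)).le
    · intro x hx
      obtain ⟨t, ht, rfl⟩ := Finset.mem_image.1 hx
      refine Finset.mem_image.2 ⟨qf t, Finset.mem_image_of_mem _ ht, ?_⟩
      simp only [hinj.leftInvOn_invFunOn (Finset.mem_coe.2 ht)]
  have hgT : ∀ t ∈ T, θ * g t ≤ (1 + δ) * θ * (if t ∈ H1 ∪ H2 then 1 else 0) + η := by
    intro t ht
    by_cases h1 : t ∈ H1
    · rw [if_pos (Finset.mem_union_left _ h1), mul_one]
      have h2 := hy.low t _ m hop hm (hT t ht).2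
      rw [ev_smul_sum] at h2
      have h3 : g t ≤ ∑ q ∈ Q, ev (f q) (y t) :=
        Finset.sum_le_sum_of_subset_of_nonneg hsub fun q hq _ =>
          ev_nonneg (hf q hq).nonneg (hy.nonneg t)
      have h4 := mul_le_mul_of_nonneg_left h3 hθ0
      rw [div_eq_mul_inv] at h2
      linarith
    · have htm : t ∈ T \ H1 := Finset.mem_sdiff.2 ⟨ht, h1⟩
      by_cases h2 : t ∈ H2
      · rw [if_pos (Finset.mem_union_right _ h2), mul_one]
        obtain ⟨q, hq, -, h3⟩ := hqex t h2
        have h4 : g t ≤ 1 := by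
          rw [h3, ← hy.norm t]; exact ev_le_NZ (hf q (hsub hq)) _
        have h5 := mul_le_mul_of_nonneg_left h4 hθ0
        nlinarith
      · rw [if_neg (by simp [h1, h2]), mul_zero, zero_add]
        have h3 : g t ≤ η := by
          by_contra h
          exact h2 (Finset.mem_filter.2 ⟨htm, not_le.1 h⟩)
        calc θ * g t ≤ θ * η := mul_le_mul_of_nonneg_left h3 hθ0
          _ ≤ 1 * η := mul_le_mul_of_nonneg_right hθ1 hη0
          _ = η := one_mul η
  refine ⟨H1 ∪ H2, ∑ q ∈ Q.filter (fun q => q < L), ev (f q) u, ?_, ?_, ?_, ?_, ?_⟩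
  · exact Finset.union_subset (Finset.filter_subset _ _)
      ((Finset.filter_subset _ _).trans Finset.sdiff_subset)
  · intro n k hcov
    rw [Finset.image_union, two_mul]
    exact (cov_cut hy.mono (hcov.subset hsub)).union (hcov2 n k hcov)
  · rcases sum_ev_one (Q := Q.filter (fun q => q < L)) (f := f) (z := u) (σ := L)
      (fun q hq q' hq' => hsep q (Finset.mem_filter.1 hq).1 q' (Finset.mem_filter.1 hq').1)
      (fun q hq => (Finset.mem_filter.1 hq).2.le) hun with h | ⟨q, hq, h⟩
    · rw [h]; exact NZ_nonneg _
    · rw [h]; exact ev_le_NZ (hf q (Finset.mem_filter.1 hq).1) _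
  · intro h
    refine Finset.sum_eq_zero fun q hq => ?_
    have := Finset.mem_filter.1 hq
    have := h q this.1
    omega
  · rw [ev_smul_sum, ← Finset.sum_filter_add_sum_filter_not Q (fun q => q < L), mul_add, add_assoc]
    refine add_le_add le_rfl ?_
    have h1 : ∑ q ∈ Q', ev (f q) u = ∑ t ∈ T, b t * g t := by
      simp only [hu, map_sum, map_smul, smul_eq_mul, hg, Finset.mul_sum]
      rw [Finset.sum_comm]
    rw [h1, Finset.mul_sum, Finset.mul_sum, Finset.mul_sum]
    have h2 : ∑ t ∈ H1 ∪ H2, (1 + δ) * θ * b t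
        = ∑ t ∈ T, (1 + δ) * θ * (if t ∈ H1 ∪ H2 then 1 else 0) * b t := by
      have hsubT : H1 ∪ H2 ⊆ T := Finset.union_subset (Finset.filter_subset _ _)
        ((Finset.filter_subset _ _).trans Finset.sdiff_subset)
      rw [← Finset.sum_subset hsubT fun t _ h => by rw [if_neg h]; ring]
      exact Finset.sum_congr rfl fun t ht => by rw [if_pos ht]; ring
    rw [h2, ← Finset.sum_add_distrib]
    refine Finset.sum_le_sum fun t ht => ?_
    have := mul_le_mul_of_nonneg_left (hgT t ht) (hb t)
    linarith

end IW

namespace IW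

/-! ### Weighted special averages of a rapidly increasing sequence -/

/-- `c` is a special convex combination on `F` of the level just below `m²`. -/
structure Piece (s : ℕ → ℕ) (m D : ℕ) (F : Finset ℕ) (c : ℕ → ℝ) : Prop where
  nonneg : ∀ t, 0 ≤ c t
  off : ∀ t ∉ F, c t = 0
  sum : ∑ t ∈ F, c t = 1
  cov : Cov (m * m - 1) D (F.image s)
  small : ∀ (G : Finset ℕ) (k : ℕ), Cov (m * m - 1) k (G.image fun t => s (t + 1)) →
    ∑ t ∈ G, c t ≤ 2 * k / D

/-- The vector `2^m ∑ c_t y_t` associated with a piece. -/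
noncomputable def pv (y : ℕ → ℕ →₀ ℝ) (m : ℕ) (F : Finset ℕ) (c : ℕ → ℝ) : ℕ →₀ ℝ :=
  ∑ t ∈ F, (2 ^ m * c t) • y t

/-- A finite family of pieces, indexed by `I`, that starts beyond `L` and whose parameters are
fine enough for an error `τ`. -/
structure Cfg (s : ℕ → ℕ) (L : ℕ) (η τ : ℝ) {ι : Type*} (I : Finset ι) (m D : ι → ℕ)
    (F : ι → Finset ℕ) (c : ι → ℕ → ℝ) : Prop where
  L1 : 1 ≤ L
  η0 : 0 ≤ η
  ηL : ∀ w : ℕ, L ≤ w → 2 * w / 2 ^ w ≤ η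
  m1 : ∀ κ ∈ I, 1 ≤ m κ
  piece : ∀ κ ∈ I, Piece s (m κ) (D κ) (F κ) (c κ)
  D1 : ∀ κ ∈ I, 1 ≤ D κ
  Dτ : ∀ κ ∈ I, 2 ^ m κ * 8 ≤ τ * D κ
  ητ : ∀ κ ∈ I, 2 ^ m κ * η ≤ τ
  start : ∀ κ ∈ I, ∀ t ∈ F κ, L ≤ s t

variable {y : ℕ → ℕ →₀ ℝ} {s : ℕ → ℕ} {δ : ℝ} {L : ℕ} {η τ : ℝ} {ι : Type*}
  {I : Finset ι} {m D : ι → ℕ} {F : ι → Finset ℕ} {c : ι → ℕ → ℝ}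

/-- The coefficients of `∑ α_κ x_κ` with respect to the sequence `y`. -/
noncomputable def bb (I : Finset ι) (m : ι → ℕ) (c : ι → ℕ → ℝ) (α : ι → ℝ) (t : ℕ) : ℝ :=
  ∑ κ ∈ I, α κ * (2 ^ m κ * c κ t)

lemma Cfg.bb_nonneg (h : Cfg s L η τ I m D F c) {α : ι → ℝ} (hα : ∀ κ ∈ I, 0 ≤ α κ) (t : ℕ) :
    0 ≤ bb I m c α t :=
  Finset.sum_nonneg fun κ hκ => mul_nonneg (hα κ hκ)
    (mul_nonneg (by positivity) ((h.piece κ hκ).nonneg t))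

lemma Cfg.sum_eq [DecidableEq ι] (h : Cfg s L η τ I m D F c) (α : ι → ℝ) :
    ∑ κ ∈ I, α κ • pv y (m κ) (F κ) (c κ) = ∑ t ∈ I.biUnion F, bb I m c α t • y t := by
  simp only [bb, Finset.sum_smul]
  rw [Finset.sum_comm]
  refine Finset.sum_congr rfl fun κ hκ => ?_
  rw [pv, Finset.smul_sum]
  rw [← Finset.sum_subset (Finset.subset_biUnion_of_mem F hκ) fun t _ ht => by
    rw [(h.piece κ hκ).off t ht]; simp]
  exact Finset.sum_congr rfl fun t _ => by rw [smul_smul]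

lemma sum_bb (α : ι → ℝ) (H : Finset ℕ) :
    ∑ t ∈ H, bb I m c α t = ∑ κ ∈ I, α κ * (2 ^ m κ * ∑ t ∈ H, c κ t) := by
  simp only [bb]
  rw [Finset.sum_comm]
  simp only [Finset.mul_sum]

lemma Cfg.eta_sum (h : Cfg s L η τ I m D F c) {α : ι → ℝ} (hα : ∀ κ ∈ I, 0 ≤ α κ) (H : Finset ℕ) :
    η * ∑ t ∈ H, bb I m c α t ≤ τ * ∑ κ ∈ I, α κ := by
  rw [sum_bb, Finset.mul_sum, Finset.mul_sum]
  refine Finset.sum_le_sum fun κ hκ => ?_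
  have h1 : ∑ t ∈ H, c κ t ≤ 1 := by
    rw [← (h.piece κ hκ).sum]
    exact sum_le_of_zero_off (h.piece κ hκ).nonneg (h.piece κ hκ).off
  have h2 := h.ητ κ hκ
  have h3 : 0 ≤ ∑ t ∈ H, c κ t := Finset.sum_nonneg fun t _ => (h.piece κ hκ).nonneg t
  have hη := h.η0
  calc η * (α κ * (2 ^ m κ * ∑ t ∈ H, c κ t)) = α κ * ((2 ^ m κ * η) * ∑ t ∈ H, c κ t) := by ring
    _ ≤ α κ * (τ * 1) := by
        refine mul_le_mul_of_nonneg_left ?_ (hα κ hκ)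
        exact mul_le_mul h2 h1 h3 (le_trans (by positivity) h2)
    _ = τ * α κ := by ring

lemma Cfg.mass_le (h : Cfg s L η τ I m D F c) {κ : ι} (hκ : κ ∈ I) {G : Finset ℕ} {k : ℕ}
    (hG : Cov (m κ * m κ - 1) k (G.image fun t => s (t + 1))) {B : ℝ} (hB : 8 * B ≤ τ * D κ) :
    B * (4 * ∑ t ∈ G, c κ t) ≤ τ * k ∨ B ≤ 0 := by
  by_cases hB0 : B ≤ 0
  · exact Or.inr hB0
  · left
    push Not at hB0
    have hD : (0 : ℝ) < D κ := by exact_mod_cast h.D1 κ hκ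
    have h1 := (h.piece κ hκ).small G k hG
    have h2 : B * (4 * ∑ t ∈ G, c κ t) ≤ B * (4 * (2 * k / D κ)) := by gcongr
    refine h2.trans ?_
    rw [show B * (4 * (2 * k / D κ)) = 8 * B / D κ * k by ring]
    refine mul_le_mul_of_nonneg_right ?_ (Nat.cast_nonneg k)
    rwa [div_le_iff₀ hD]

/-- Coordinates and functionals of large weight act negligibly. -/
lemma Cfg.high [DecidableEq ι] (h : Cfg s L η τ I m D F c) (hy : RIS y s δ) (hδ : δ ≤ 1) {α : ι → ℝ}
    (hα : ∀ κ ∈ I, 0 ≤ α κ) {f : ℕ → ℝ} {w : ℕ} (hf : WF f w) (hw : w = 0 ∨ L ≤ w) :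
    ev f (∑ κ ∈ I, α κ • pv y (m κ) (F κ) (c κ)) ≤ 2 * τ * ∑ κ ∈ I, α κ := by
  rw [h.sum_eq]
  obtain ⟨t₀, ht₀⟩ := hy.high hδ h.η0 h.L1 h.ηL hf hw
  have hb := h.bb_nonneg hα
  have h1 : ev f (∑ t ∈ I.biUnion F, bb I m c α t • y t)
      ≤ ∑ t ∈ I.biUnion F, (η * bb I m c α t + if t = t₀ then bb I m c α t else 0) := by
    rw [map_sum]
    refine Finset.sum_le_sum fun t _ => ?_
    rw [map_smul, smul_eq_mul]
    have hη := h.η0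
    split_ifs with ht
    · have : ev f (y t) ≤ 1 := by rw [← hy.norm t]; exact ev_le_NZ hf _
      nlinarith [hb t]
    · nlinarith [hb t, ht₀ t ht]
  refine h1.trans ?_
  rw [Finset.sum_add_distrib, ← Finset.mul_sum]
  have h2 := h.eta_sum hα (I.biUnion F)
  have h3 : (∑ t ∈ I.biUnion F, if t = t₀ then bb I m c α t else 0) ≤ τ * ∑ κ ∈ I, α κ := by
    have : (∑ t ∈ I.biUnion F, if t = t₀ then bb I m c α t else 0) ≤ bb I m c α t₀ := by
      rw [Finset.sum_ite_eq']
      split_ifs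
      exacts [le_rfl, hb t₀]
    refine this.trans ?_
    rw [bb, Finset.mul_sum]
    refine Finset.sum_le_sum fun κ hκ => ?_
    rw [mul_comm τ]
    refine mul_le_mul_of_nonneg_left ?_ (hα κ hκ)
    rcases h.mass_le hκ (G := {t₀}) (k := 1)
      (by rw [Finset.image_singleton]; exact (sch_singleton _ _).cov)
      (B := 2 ^ m κ) (by linarith [h.Dτ κ hκ]) with h5 | h5
    · simp only [Finset.sum_singleton, Nat.cast_one, mul_one] at h5
      have := (h.piece κ hκ).nonneg t₀
      have h6 : (0 : ℝ) ≤ 2 ^ m κ * c κ t₀ := by positivity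
      linarith
    · have : (0 : ℝ) < 2 ^ m κ := by positivity
      linarith
  linarith

/-- Action of a functional of weight `m₀ < L`. The pieces of larger weight contribute
negligibly; so do those of weight `m₀` when `Q` is covered by `P` sets of lower complexity. -/
lemma Cfg.low [DecidableEq ι] (h : Cfg s L η τ I m D F c) (hy : RIS y s δ) (hδ0 : 0 ≤ δ) (hδ : δ ≤ 1) {α : ι → ℝ}
    (hα : ∀ κ ∈ I, 0 ≤ α κ) {m₀ : ℕ} (hm : 1 ≤ m₀) (hmL : m₀ < L) {Q : Finset ℕ}
    (hQ : Sch (m₀ * m₀) Q) {f : ℕ → ℕ → ℝ} {w : ℕ → ℕ} (hf : ∀ q ∈ Q, WF (f q) (w q))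
    (hlow : ∀ q ∈ Q, ∀ i, f q i ≠ 0 → q ≤ i)
    (hsep : ∀ q ∈ Q, ∀ q' ∈ Q, q < q' → ∀ i, f q i ≠ 0 → i < q')
    (hw : ∀ q ∈ Q, w q = 0 ∨ q < w q) :
    ∃ X₀ : ℝ, X₀ ≤ NZ (∑ κ ∈ I, α κ • pv y (m κ) (F κ) (c κ)) ∧ ((∀ q ∈ Q, L ≤ q) → X₀ = 0) ∧
      ∀ J : Finset ι, J ⊆ I → (∀ κ ∈ I, κ ∉ J → m₀ < m κ ∨ (m κ = m₀ ∧
          ∃ P : ℕ, Cov (m₀ * m₀ - 1) P Q ∧ 8 * P ≤ τ * D κ)) →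
        ev (fun i => (2 ^ m₀ : ℝ)⁻¹ * ∑ q ∈ Q, f q i) (∑ κ ∈ I, α κ • pv y (m κ) (F κ) (c κ))
          ≤ (2 ^ m₀ : ℝ)⁻¹ * X₀ + (1 + δ) * ∑ κ ∈ J, 2 ^ m κ / 2 ^ m₀ * α κ
            + 3 * τ * ∑ κ ∈ I, α κ := by
  have hτ : ∀ κ ∈ I, 0 ≤ τ := fun κ hκ => by
    have h1 := h.ητ κ hκ
    have h2 := h.η0
    exact le_trans (by positivity) h1
  obtain ⟨H, X₀, hHT, hcov, hX, hX0, hev⟩ := hy.me hδ0 hδ h.η0 h.L1 h.ηL hm hQ hf hlow hsep hw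
    (T := I.biUnion F) (b := bb I m c α) (fun t ht => by
      obtain ⟨κ, hκ, ht⟩ := Finset.mem_biUnion.1 ht
      have := h.start κ hκ t ht
      exact ⟨this, by omega⟩) (h.bb_nonneg hα)
  rw [← h.sum_eq α] at hX hev
  refine ⟨X₀, hX, hX0, fun J hJ hJc => hev.trans ?_⟩
  have h1 := h.eta_sum hα (I.biUnion F)
  have hθ0 : (0 : ℝ) < 2 ^ m₀ := by positivity
  have hθ1 : (1 : ℝ) ≤ 2 ^ m₀ := one_le_pow₀ (by norm_num)
  have h2 : (1 + δ) * (2 ^ m₀ : ℝ)⁻¹ * ∑ t ∈ H, bb I m c α t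
      ≤ ∑ κ ∈ I, ((if κ ∈ J then (1 + δ) * (2 ^ m κ / 2 ^ m₀ * α κ) else 0) + 2 * (τ * α κ)) := by
    rw [sum_bb, Finset.mul_sum]
    refine Finset.sum_le_sum fun κ hκ => ?_
    have hακ := hα κ hκ
    have hτκ := hτ κ hκ
    have hS0 : 0 ≤ ∑ t ∈ H, c κ t := Finset.sum_nonneg fun t _ => (h.piece κ hκ).nonneg t
    have hS1 : ∑ t ∈ H, c κ t ≤ 1 := by
      rw [← (h.piece κ hκ).sum]
      exact sum_le_of_zero_off (h.piece κ hκ).nonneg (h.piece κ hκ).off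
    set S := ∑ t ∈ H, c κ t
    have e1 : (1 + δ) * (2 ^ m₀ : ℝ)⁻¹ * (α κ * (2 ^ m κ * S))
        = (1 + δ) * α κ * (2 ^ m κ / 2 ^ m₀ * S) := by
      rw [div_eq_mul_inv]; ring
    rw [e1]
    split_ifs with hκJ
    · have : (2 : ℝ) ^ m κ / 2 ^ m₀ * S ≤ 2 ^ m κ / 2 ^ m₀ * 1 := by gcongr
      have h3 : (1 + δ) * α κ * (2 ^ m κ / 2 ^ m₀ * S) ≤ (1 + δ) * α κ * (2 ^ m κ / 2 ^ m₀ * 1) := by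
        gcongr
      have h4 : 0 ≤ τ * α κ := by positivity
      linarith
    · have key : 2 ^ m κ / 2 ^ m₀ * S ≤ τ := by
        rcases hJc κ hκ hκJ with hlt | ⟨heq, P, hP, hPD⟩
        · have hc1 : Cov (m κ * m κ - 1) 1 Q := by
            refine hQ.cov.mono ?_
            have : (m₀ + 1) * (m₀ + 1) ≤ m κ * m κ := Nat.mul_le_mul hlt hlt
            have : (m₀ + 1) * (m₀ + 1) = m₀ * m₀ + 2 * m₀ + 1 := by ring
            omega
          have hpp : (0 : ℝ) < 2 ^ m κ := by positivity
          rcases h.mass_le hκ (hcov _ _ hc1) (B := 2 ^ m κ) (by linarith [h.Dτ κ hκ]) with h5 | h5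
          · have h5' : (2 : ℝ) ^ m κ * (4 * S) ≤ τ * 2 := by simpa using h5
            have h6 : (2 : ℝ) ^ m κ * S ≤ τ := by nlinarith
            rw [div_mul_eq_mul_div]
            exact (div_le_self (by positivity) hθ1).trans h6
          · linarith
        · rw [heq, div_self hθ0.ne', one_mul]
          rw [← heq] at hP
          rcases h.mass_le hκ (hcov _ _ hP) (B := P) hPD with h5 | h5
          · push_cast at h5
            rcases Nat.eq_zero_or_pos P with rfl | hPp
            · have h6 := (h.piece κ hκ).small H _ (hcov _ _ hP)
              have h7 : S ≤ 0 := by simpa using h6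
              linarith
            · have : (0 : ℝ) < P := by exact_mod_cast hPp
              have h6 : (P : ℝ) * (4 * S) ≤ P * (2 * τ) := by linarith
              have h7 := le_of_mul_le_mul_left h6 this
              linarith
          · have h6 := (h.piece κ hκ).small H _ (hcov _ _ hP)
            have h8 : P = 0 := by
              have : (P : ℝ) = 0 := le_antisymm h5 (Nat.cast_nonneg P)
              exact_mod_cast this
            rw [h8] at h6
            have h7 : S ≤ 0 := by simpa using h6
            linarith
      rw [zero_add]
      calc (1 + δ) * α κ * (2 ^ m κ / 2 ^ m₀ * S) ≤ (1 + δ) * α κ * τ := by gcongr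
        _ ≤ 2 * α κ * τ := by gcongr; linarith
        _ = _ := by ring
  rw [Finset.sum_add_distrib, ← Finset.mul_sum, ← Finset.mul_sum, ← Finset.sum_filter,
    Finset.filter_mem_eq_inter, Finset.inter_eq_right.2 hJ, ← Finset.mul_sum] at h2
  linarith

end IW

namespace IW

/-! ### Finite-dimensional lattice norms in block subspaces -/

lemma exists_piece {s : ℕ → ℕ} (hs : StrictMono s) (m : ℕ) {D : ℕ} (hD : 1 ≤ D) (K : ℕ) :
    ∃ F c, (∀ t ∈ F, K ≤ t) ∧ Piece s m D F c := by
  obtain ⟨F, c, h1, h2, h3, h4, h5, h6⟩ := scc hs (m * m - 1) D hD K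
  exact ⟨F, c, h1, h2, h3, h4, h5, h6⟩

lemma exists_large (η : ℝ) (hη : 0 < η) : ∃ L : ℕ, 1 ≤ L ∧ ∀ w : ℕ, L ≤ w → 2 * w / 2 ^ w ≤ η := by
  have h1 : Tendsto (fun w : ℕ => 2 * ((w : ℝ) ^ 1 / 2 ^ w)) atTop (𝓝 (2 * 0)) :=
    (tendsto_pow_const_div_const_pow_of_one_lt 1 (by norm_num : (1 : ℝ) < 2)).const_mul 2
  rw [mul_zero] at h1
  obtain ⟨L, hL⟩ := eventually_atTop.1 (h1.eventually (gt_mem_nhds hη))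
  refine ⟨max L 1, le_max_right _ _, fun w hw => ?_⟩
  have := hL w ((le_max_left _ _).trans hw)
  rw [pow_one, ← mul_div_assoc] at this
  exact this.le

/-- The coefficient vector of a piece. -/
noncomputable def pc (m : ℕ) (F : Finset ℕ) (c : ℕ → ℝ) : ℕ →₀ ℝ :=
  ∑ t ∈ F, Finsupp.single t (2 ^ m * c t)

lemma lc_single (z : ℕ → ℕ →₀ ℝ) (t : ℕ) (a : ℝ) : lc z (Finsupp.single t a) = a • z t := by
  simp [lc]

lemma lc_pc (y : ℕ → ℕ →₀ ℝ) (m : ℕ) (F : Finset ℕ) (c : ℕ → ℝ) : lc y (pc m F c) = pv y m F c := by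
  simp only [pc, pv, map_sum, lc_single]

lemma lc_lc (z : ℕ → ℕ →₀ ℝ) (C : ℕ → ℕ →₀ ℝ) (W : ℕ →₀ ℝ) :
    lc (fun r => lc z (C r)) W = lc z (lc C W) := by
  rw [lc_eq _ W, lc_eq C W, map_sum]
  simp only [map_smul]

lemma pc_nonneg {m : ℕ} {F : Finset ℕ} {c : ℕ → ℝ} (hc : ∀ t, 0 ≤ c t) : 0 ≤ pc m F c :=
  Finset.sum_nonneg fun t _ => Finsupp.single_nonneg.2 (mul_nonneg (by positivity) (hc t))

lemma pc_support {m : ℕ} {F : Finset ℕ} {c : ℕ → ℝ} {t : ℕ} (ht : t ∈ (pc m F c).support) :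
    t ∈ F := by
  by_contra h
  rw [Finsupp.mem_support_iff] at ht
  apply ht
  rw [pc, Finsupp.finsetSum_apply]
  refine Finset.sum_eq_zero fun k hk => ?_
  rw [Finsupp.single_apply, if_neg]
  rintro rfl
  exact h hk

variable {y : ℕ → ℕ →₀ ℝ} {s : ℕ → ℕ} {δ : ℝ} {L : ℕ} {η τ : ℝ} {D : ℕ × ℕ → ℕ}
  {F : ℕ × ℕ → Finset ℕ} {c : ℕ × ℕ → ℕ → ℝ} {N n μ : ℕ}

/-- The alternative for the action of one functional on a family of rows: its weight
singles out at most one row. -/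
lemma rows_step (hμ : 1 ≤ μ)
    (h : Cfg s L η τ (Finset.range N ×ˢ Finset.range n) (fun κ => μ * (κ.1 + 1)) D F c)
    (hy : RIS y s δ) (hδ0 : 0 ≤ δ) (hδ : δ ≤ 1) (hτ : 0 ≤ τ) {α : ℕ × ℕ → ℝ} (hα : ∀ κ, 0 ≤ α κ)
    {R S V : ℝ} (hR0 : 0 ≤ R) (hR : ∀ i < N, ∑ k ∈ Finset.range n, α (i, k) ≤ R)
    (hS : S = ∑ κ ∈ Finset.range N ×ˢ Finset.range n, α κ)
    (hV : V = NZ (∑ κ ∈ Finset.range N ×ˢ Finset.range n,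
      α κ • pv y (μ * (κ.1 + 1)) (F κ) (c κ))) {f : ℕ → ℝ} {m₀ : ℕ} (hf : WF f m₀) :
    ev f (∑ κ ∈ Finset.range N ×ˢ Finset.range n, α κ • pv y (μ * (κ.1 + 1)) (F κ) (c κ))
      ≤ max (V / 2 + 3 * τ * S)
          ((2 ^ μ : ℝ)⁻¹ * V + (1 + δ) * (R + (2 ^ μ : ℝ)⁻¹ * S) + 3 * τ * S) := by
  have hV0 : 0 ≤ V := hV ▸ NZ_nonneg _
  have hS0 : 0 ≤ S := hS ▸ Finset.sum_nonneg fun κ _ => hα κ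
  have hτS : 0 ≤ τ * S := mul_nonneg hτ hS0
  by_cases hw : m₀ = 0 ∨ L ≤ m₀
  · have := h.high hy hδ (fun κ _ => hα κ) hf hw
    rw [← hS] at this
    exact le_max_of_le_left (by linarith)
  push Not at hw
  cases hf with
  | leaf i c hc => exact absurd rfl hw.1
  | op _ hm Q hQ f w hf hlow hsep hw' =>
    obtain ⟨X₀, hX, -, hJ⟩ := h.low hy hδ0 hδ (fun κ _ => hα κ) hm hw.2 hQ hf hlow hsep hw'
    rw [← hV] at hX
    rw [← hS] at hJ
    set I := Finset.range N ×ˢ Finset.range n with hI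
    specialize hJ (I.filter fun κ => μ * (κ.1 + 1) ≤ m₀) (Finset.filter_subset _ _)
      (fun κ hκ hκ' => by
        left
        by_contra hc
        exact hκ' (Finset.mem_filter.2 ⟨hκ, not_lt.1 hc⟩))
    refine hJ.trans ?_
    have hθ : (2 ^ m₀ : ℝ)⁻¹ * X₀ ≤ (2 ^ m₀ : ℝ)⁻¹ * V := by gcongr
    by_cases hmμ : m₀ < μ
    · apply le_max_of_le_left
      have : I.filter (fun κ => μ * (κ.1 + 1) ≤ m₀) = ∅ := by
        refine Finset.filter_eq_empty_iff.2 fun κ _ hκ => ?_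
        nlinarith [Nat.zero_le (μ * κ.1)]
      rw [this, Finset.sum_empty, mul_zero, add_zero]
      have h2 : (2 ^ m₀ : ℝ)⁻¹ ≤ 2⁻¹ := by
        refine inv_anti₀ (by norm_num) ?_
        exact le_self_pow₀ (by norm_num) (by omega)
      have := mul_le_mul_of_nonneg_right h2 hV0
      linarith
    · apply le_max_of_le_right
      push Not at hmμ
      have h2 : (2 ^ m₀ : ℝ)⁻¹ ≤ (2 ^ μ : ℝ)⁻¹ :=
        inv_anti₀ (by positivity) (pow_le_pow_right₀ (by norm_num) hmμ)
      have h3 := mul_le_mul_of_nonneg_right h2 hV0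
      -- `i₀` is the last row whose weight does not exceed `m₀`
      set i₀ := m₀ / μ - 1 with hi₀
      have hdiv : 1 ≤ m₀ / μ := (Nat.one_le_div_iff (by omega)).2 hmμ
      have h4 : ∑ κ ∈ I.filter (fun κ => μ * (κ.1 + 1) ≤ m₀), (2 : ℝ) ^ (μ * (κ.1 + 1)) / 2 ^ m₀ * α κ
          ≤ ∑ κ ∈ I, ((if κ.1 = i₀ then α κ else 0) + (2 ^ μ : ℝ)⁻¹ * α κ) := by
        rw [Finset.sum_filter]
        refine Finset.sum_le_sum fun κ hκ => ?_
        have hακ := hα κ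
        have hp : 0 ≤ (2 ^ μ : ℝ)⁻¹ * α κ := by positivity
        by_cases hle : μ * (κ.1 + 1) ≤ m₀
        · rw [if_pos hle]
          by_cases hκi : κ.1 = i₀
          · rw [if_pos hκi]
            have : (2 : ℝ) ^ (μ * (κ.1 + 1)) / 2 ^ m₀ ≤ 1 :=
              div_le_one_of_le₀ (pow_le_pow_right₀ (by norm_num) hle) (by positivity)
            nlinarith
          · rw [if_neg hκi, zero_add]
            refine mul_le_mul_of_nonneg_right ?_ hακ
            have h5 : κ.1 + 1 ≤ m₀ / μ := (Nat.le_div_iff_mul_le (by omega)).2 (by linarith)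
            have h6 : κ.1 + 2 ≤ m₀ / μ := by omega
            have h7 : μ * (κ.1 + 1) + μ ≤ m₀ := by
              have := (Nat.le_div_iff_mul_le (by omega)).1 h6
              nlinarith
            rw [div_le_iff₀ (by positivity), inv_mul_eq_div, le_div_iff₀ (by positivity), ← pow_add]
            exact pow_le_pow_right₀ (by norm_num) h7
        · rw [if_neg hle]
          split_ifs <;> linarith
      have h5 : ∑ κ ∈ I, (if κ.1 = i₀ then α κ else 0) ≤ R := by
        rw [hI, Finset.sum_product]
        simp only
        by_cases hN : i₀ < N
        · rw [Finset.sum_eq_single_of_mem i₀ (Finset.mem_range.2 hN)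
            fun i _ hi => Finset.sum_eq_zero fun k _ => if_neg hi]
          simpa using hR i₀ hN
        · rw [Finset.sum_eq_zero fun i hi => Finset.sum_eq_zero fun k _ => if_neg ?_]
          · exact hR0
          · have := Finset.mem_range.1 hi
            omega
      rw [Finset.sum_add_distrib, ← Finset.mul_sum, ← hS] at h4
      have h6 : (1 + δ) * ∑ κ ∈ I.filter (fun κ => μ * (κ.1 + 1) ≤ m₀),
          (2 : ℝ) ^ (μ * (κ.1 + 1)) / 2 ^ m₀ * α κ ≤ (1 + δ) * (R + (2 ^ μ : ℝ)⁻¹ * S) :=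
        mul_le_mul_of_nonneg_left (by linarith) (by linarith)
      linarith

/-- The norm `V` of a combination of the pieces is bounded by the largest row sum: `rows_step` bounds
`V` by an expression in which `V` itself occurs with a coefficient at most `1/2`. -/
lemma rows_upper (hμ : 1 ≤ μ)
    (h : Cfg s L η τ (Finset.range N ×ˢ Finset.range n) (fun κ => μ * (κ.1 + 1)) D F c)
    (hy : RIS y s δ) (hδ0 : 0 ≤ δ) (hδ : δ ≤ 1) (hτ : 0 ≤ τ) (hτ1 : τ ≤ 1) {α : ℕ × ℕ → ℝ}
    (hα : ∀ κ, 0 ≤ α κ) {R : ℝ} (hR0 : 0 ≤ R)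
    (hR : ∀ i < N, ∑ k ∈ Finset.range n, α (i, k) ≤ R) :
    NZ (∑ κ ∈ Finset.range N ×ˢ Finset.range n, α κ • pv y (μ * (κ.1 + 1)) (F κ) (c κ))
      ≤ (1 + δ) * R + (16 * (2 ^ μ : ℝ)⁻¹ + 6 * τ) * ∑ κ ∈ Finset.range N ×ˢ Finset.range n, α κ := by
  set V := NZ (∑ κ ∈ Finset.range N ×ˢ Finset.range n, α κ • pv y (μ * (κ.1 + 1)) (F κ) (c κ))
    with hV
  set S := ∑ κ ∈ Finset.range N ×ˢ Finset.range n, α κ with hS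
  have hV0 : 0 ≤ V := hV ▸ NZ_nonneg _
  have hS0 : 0 ≤ S := hS ▸ Finset.sum_nonneg fun κ _ => hα κ
  have hτS : 0 ≤ τ * S := mul_nonneg hτ hS0
  have hτS1 : τ * S ≤ S := mul_le_of_le_one_left hS0 hτ1
  have hθ0 : (0 : ℝ) ≤ (2 ^ μ : ℝ)⁻¹ := by positivity
  have hθ : (2 ^ μ : ℝ)⁻¹ ≤ 2⁻¹ :=
    inv_anti₀ (by norm_num) (le_self_pow₀ (by norm_num) (by omega))
  have hrow : ∀ i < N, ∑ k ∈ Finset.range n, α (i, k) ≤ S := fun i hi => by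
    rw [hS, Finset.sum_product]
    exact Finset.single_le_sum (f := fun i => ∑ k ∈ Finset.range n, α (i, k))
      (fun i _ => Finset.sum_nonneg fun k _ => hα _) (Finset.mem_range.2 hi)
  set θ := (2 ^ μ : ℝ)⁻¹
  -- a crude bound first, then the sharp one
  have h14 : V ≤ 14 * S := by
    have h1 : V ≤ max (V / 2 + 3 * τ * S) (θ * V + (1 + δ) * (S + θ * S) + 3 * τ * S) :=
      NZ_le fun f w hf => rows_step hμ h hy hδ0 hδ hτ hα hS0 hrow hS hV hf
    rcases le_max_iff.1 h1 with h1 | h1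
    · nlinarith
    · have h2 : θ * V ≤ 2⁻¹ * V := mul_le_mul_of_nonneg_right hθ hV0
      have h3 : θ * S ≤ 2⁻¹ * S := mul_le_mul_of_nonneg_right hθ hS0
      have h4 : (1 + δ) * (S + θ * S) ≤ 2 * (S + θ * S) :=
        mul_le_mul_of_nonneg_right (by linarith) (by positivity)
      linarith
  have h1 : V ≤ max (V / 2 + 3 * τ * S) (θ * V + (1 + δ) * (R + θ * S) + 3 * τ * S) :=
    NZ_le fun f w hf => rows_step hμ h hy hδ0 hδ hτ hα hR0 hR hS hV hf
  have hθS : 0 ≤ θ * S := by positivity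
  have hR' : 0 ≤ (1 + δ) * R := by positivity
  rcases le_max_iff.1 h1 with h1 | h1
  · nlinarith
  · have h2 : θ * V ≤ θ * (14 * S) := mul_le_mul_of_nonneg_left h14 hθ0
    have h4 : (1 + δ) * (θ * S) ≤ 2 * (θ * S) :=
      mul_le_mul_of_nonneg_right (by linarith) hθS
    nlinarith

/-- All pieces of one row together are supported on an admissible set for their common weight. -/
lemma rows_lower
    (h : Cfg s L η τ (Finset.range N ×ˢ Finset.range n) (fun κ => μ * (κ.1 + 1)) D F c)
    (hy : RIS y s δ) {D₀ : ℕ} (hD : ∀ κ, D κ = D₀)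
    (hst : ∀ κ ∈ Finset.range N ×ˢ Finset.range n, ∀ t ∈ F κ, n * D₀ ≤ s t) {α : ℕ × ℕ → ℝ}
    (hα : ∀ κ, 0 ≤ α κ) {i : ℕ} (hi : i < N) :
    (1 - δ) * ∑ k ∈ Finset.range n, α (i, k) ≤
      NZ (∑ κ ∈ Finset.range N ×ˢ Finset.range n, α κ • pv y (μ * (κ.1 + 1)) (F κ) (c κ)) := by
  have hsub : {i} ×ˢ Finset.range n ⊆ Finset.range N ×ˢ Finset.range n :=
    Finset.product_subset_product_left (by simpa using hi)
  have h' : Cfg s L η τ ({i} ×ˢ Finset.range n) (fun κ => μ * (κ.1 + 1)) D F c :=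
    { L1 := h.L1
      η0 := h.η0
      ηL := h.ηL
      m1 := fun κ hκ => h.m1 κ (hsub hκ)
      piece := fun κ hκ => h.piece κ (hsub hκ)
      D1 := fun κ hκ => h.D1 κ (hsub hκ)
      Dτ := fun κ hκ => h.Dτ κ (hsub hκ)
      ητ := fun κ hκ => h.ητ κ (hsub hκ)
      start := fun κ hκ => h.start κ (hsub hκ) }
  rcases Nat.eq_zero_or_pos n with rfl | hn
  · simp [NZ_nonneg]
  have hm : 1 ≤ μ * (i + 1) := h.m1 (i, 0) (by simp [hi, hn])
  have hmono : NZ (∑ κ ∈ {i} ×ˢ Finset.range n, α κ • pv y (μ * (κ.1 + 1)) (F κ) (c κ)) ≤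
      NZ (∑ κ ∈ Finset.range N ×ˢ Finset.range n, α κ • pv y (μ * (κ.1 + 1)) (F κ) (c κ)) := by
    refine NZ_mono (Finset.sum_le_sum_of_subset_of_nonneg hsub fun κ hκ _ => ?_)
    refine smul_nonneg (hα κ) ?_
    exact Finset.sum_nonneg fun t _ => smul_nonneg
      (mul_nonneg (by positivity) ((h.piece κ hκ).nonneg t)) (hy.nonneg t)
  refine le_trans ?_ hmono
  rw [h'.sum_eq]
  have hSch : Sch (μ * (i + 1) * (μ * (i + 1))) ((({i} ×ˢ Finset.range n).biUnion F).image s) := by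
    obtain ⟨e, he⟩ : ∃ e, μ * (i + 1) * (μ * (i + 1)) = e + 1 :=
      ⟨μ * (i + 1) * (μ * (i + 1)) - 1, by have := Nat.mul_le_mul hm hm; omega⟩
    rw [he, sch_succ_iff, Finset.biUnion_image]
    refine ⟨n * D₀, ?_, ?_⟩
    · intro q hq
      obtain ⟨κ, hκ, hq⟩ := Finset.mem_biUnion.1 hq
      obtain ⟨t, ht, rfl⟩ := Finset.mem_image.1 hq
      have := hst κ (hsub hκ) t ht
      omega
    · have := Cov.biUnion (n := e) (k := D₀) ({i} ×ˢ Finset.range n) (fun κ => (F κ).image s)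
        fun κ hκ => by
          have h1 := (h'.piece κ hκ).cov
          have h2 : κ.1 = i := by
            have := (Finset.mem_product.1 hκ).1
            simpa using this
          rw [h2, he, hD] at h1
          simpa using h1
      simpa using this
  have hb := h'.bb_nonneg (α := α) fun κ _ => hα κ
  have := hy.lower hm hb hSch
  refine le_trans (le_of_eq ?_) this
  rw [sum_bb, Finset.sum_product, Finset.sum_singleton]
  have h3 : ∀ k ∈ Finset.range n, α (i, k) * (2 ^ (μ * (i + 1)) *
      ∑ t ∈ ({i} ×ˢ Finset.range n).biUnion F, c (i, k) t) = 2 ^ (μ * (i + 1)) * α (i, k) := by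
    intro k hk
    have hk' : (i, k) ∈ ({i} : Finset ℕ) ×ˢ Finset.range n := by simpa using hk
    rw [← Finset.sum_subset (Finset.subset_biUnion_of_mem F hk')
      fun t _ ht => (h'.piece _ hk').off t ht, (h'.piece _ hk').sum]
    ring
  rw [Finset.sum_congr rfl h3, ← Finset.mul_sum]
  have : (2 : ℝ) ^ (μ * (i + 1)) ≠ 0 := by positivity
  field_simp

/-- Every normalized block sequence has a rapidly increasing block sequence. -/
lemma Blk.exists_ris {z : ℕ → ℕ →₀ ℝ} {s : ℕ → ℕ} (hz : Blk z s) {δ : ℝ} (hδ : 0 < δ)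
    (hδ' : δ < 1 / 4) : ∃ (κ : ℕ → ℕ) (C : ℕ → ℕ →₀ ℝ) (s' : ℕ → ℕ), Rng C κ ∧
      RIS (fun r => lc z (C r)) s' δ := by
  obtain ⟨φ, s', hφ, hz', hl⟩ := exists_lower hz
  obtain ⟨κ, C, hκ, hC, hsupp, hris⟩ := IW.exists_ris hz' hl hδ hδ'
  have hlc : ∀ X : ℕ →₀ ℝ, lc (z ∘ φ) X = lc z (X.mapDomain φ) := fun X => by
    simp [lc, Finsupp.linearCombination_mapDomain]
  refine ⟨φ ∘ κ, fun r => (C r).mapDomain φ, s' ∘ κ, ?_, ?_⟩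
  · have key : ∀ r t, (C r).mapDomain φ t ≠ 0 → ∃ j ∈ (C r).support, φ j = t := fun r t h => by
      have := Finsupp.mapDomain_support (Finsupp.mem_support_iff.2 h)
      simpa using this
    refine ⟨hφ.comp hκ, fun r t => ?_, fun r t h => ?_, fun r t h => ?_⟩
    · by_cases h : ∃ j, φ j = t
      · obtain ⟨j, rfl⟩ := h
        rw [Finsupp.mapDomain_apply hφ.injective]
        exact hC r j
      · rw [Finsupp.mapDomain_of_notMem_range _ _ fun h' => h h']
        rfl
    · obtain ⟨j, hj, rfl⟩ := key r t h
      exact hφ.monotone (hsupp r j hj).1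
    · obtain ⟨j, hj, rfl⟩ := key r t h
      exact hφ (hsupp r j hj).2
  · simpa only [hlc] using hris

/-- In every normalized block sequence, finitely many polyhedral lattice norms can be realised
simultaneously: the successive vectors `lc z (Γ k)` span, almost isometrically, the norm
`A ↦ max_i ∑_k b_{ik} A_k` on the positive cone. -/
theorem exists_polyhedral {z : ℕ → ℕ →₀ ℝ} {s : ℕ → ℕ} (hz : Blk z s) (N n : ℕ) (b : ℕ → ℕ → ℝ)
    (hb : ∀ i k, 0 ≤ b i k) (hb1 : ∀ i k, b i k ≤ 1) {ε : ℝ} (hε : 0 < ε) (hε1 : ε ≤ 1) :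
    ∃ (κ : ℕ → ℕ) (Γ : ℕ → ℕ →₀ ℝ), Rng Γ κ ∧
      ∀ A : ℕ → ℝ, (∀ k, 0 ≤ A k) →
        (∀ i < N, (1 - ε) * ∑ k ∈ Finset.range n, b i k * A k
          ≤ NZ (lc z (∑ k ∈ Finset.range n, A k • Γ k))) ∧
        ∀ R, 0 ≤ R → (∀ i < N, ∑ k ∈ Finset.range n, b i k * A k ≤ R) →
          NZ (lc z (∑ k ∈ Finset.range n, A k • Γ k))
            ≤ (1 + ε) * R + ε * ∑ k ∈ Finset.range n, A k := by
  obtain ⟨κ, C, s', hC, hy⟩ := hz.exists_ris (δ := ε / 8) (by positivity) (by linarith)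
  set y := fun r => lc z (C r) with hyd
  have hN : (0 : ℝ) < N + 1 := by positivity
  have hN1 : (1 : ℝ) ≤ N + 1 := by linarith [(Nat.cast_nonneg N : (0 : ℝ) ≤ N)]
  obtain ⟨μ₀, hμ₀⟩ := exists_pow_lt_of_lt_one (y := (2⁻¹ : ℝ)) (x := ε / (32 * (N + 1)))
    (by positivity) (by norm_num)
  set μ := μ₀ + 1
  have hμ : 16 * (2 ^ μ : ℝ)⁻¹ * (N + 1) ≤ ε / 2 := by
    have h1 : (2 ^ μ : ℝ)⁻¹ ≤ ε / (32 * (N + 1)) := by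
      refine le_trans ?_ hμ₀.le
      rw [← inv_pow]
      exact pow_le_pow_of_le_one (by norm_num) (by norm_num) (Nat.le_succ _)
    rw [le_div_iff₀ (by positivity)] at h1
    linarith
  set τ : ℝ := ε / (12 * (N + 1)) with hτd
  have hτ0 : 0 < τ := by positivity
  have hτN : 6 * τ * (N + 1) = ε / 2 := by rw [hτd]; field_simp; norm_num
  have hτ1 : τ ≤ 1 := by nlinarith
  set M := μ * (N + 1) with hM
  obtain ⟨L, hL1, hL⟩ := exists_large (τ / 2 ^ M) (by positivity)
  obtain ⟨D₀, hD₀⟩ := exists_nat_ge (2 ^ M * 8 / τ + 1)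
  have hD1 : 1 ≤ D₀ := by
    have : (1 : ℝ) ≤ D₀ := le_trans (by linarith [show (0 : ℝ) ≤ 2 ^ M * 8 / τ by positivity]) hD₀
    exact_mod_cast this
  have hD8 : 2 ^ M * 8 ≤ τ * D₀ := by
    have : 2 ^ M * 8 / τ ≤ D₀ := by linarith
    rwa [div_le_iff₀' hτ0] at this
  choose Fp cp hstart hpiece using fun (i K : ℕ) => exists_piece hy.mono (μ * (i + 1)) hD1 K
  obtain ⟨K, W₀, hK, hK0, hW₀⟩ := exists_succ
    (P := fun K W => W = ∑ i ∈ Finset.range N, pc (μ * (i + 1)) (Fp i K) (cp i K))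
    (fun K => ⟨_, fun k hk => by
      obtain ⟨i, hi, hk⟩ := Finset.mem_biUnion.1 (Finsupp.support_finsetSum hk)
      exact hstart i K k (pc_support hk), rfl⟩) (max L (n * D₀))
  set F : ℕ × ℕ → Finset ℕ := fun κ => Fp κ.1 (K κ.2)
  set c : ℕ × ℕ → ℕ → ℝ := fun κ => cp κ.1 (K κ.2)
  have hge : ∀ κ t, t ∈ F κ → max L (n * D₀) ≤ s' t := fun κ t ht =>
    calc max L (n * D₀) = K 0 := hK0.symm
      _ ≤ K κ.2 := hK.monotone (Nat.zero_le _)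
      _ ≤ t := hstart _ _ t ht
      _ ≤ s' t := hy.mono.le_apply
  have hcfg : Cfg s' L (τ / 2 ^ M) τ (Finset.range N ×ˢ Finset.range n)
      (fun κ => μ * (κ.1 + 1)) (fun _ => D₀) F c := by
    have hle : ∀ κ ∈ Finset.range N ×ˢ Finset.range n, (2 : ℝ) ^ (μ * (κ.1 + 1)) ≤ 2 ^ M := by
      intro κ hκ
      have := Finset.mem_range.1 (Finset.mem_product.1 hκ).1
      exact pow_le_pow_right₀ (by norm_num) (Nat.mul_le_mul_left _ (by omega))
    refine ⟨hL1, by positivity, hL, fun κ _ => ?_, fun κ _ => hpiece _ _, fun _ _ => hD1,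
      fun κ hκ => ?_, fun κ hκ => ?_, fun κ _ t ht => (le_max_left _ _).trans (hge κ t ht)⟩
    · exact Nat.mul_pos (Nat.succ_pos _) (Nat.succ_pos _)
    · have := hle κ hκ
      linarith
    · rw [mul_div_assoc', div_le_iff₀ (by positivity), mul_comm]
      exact mul_le_mul_of_nonneg_left (hle κ hκ) hτ0.le
  set W : ℕ → ℕ →₀ ℝ := fun k => ∑ i ∈ Finset.range N, b i k • pc (μ * (i + 1)) (F (i, k)) (c (i, k))
    with hW
  have hpc : ∀ i k, 0 ≤ pc (μ * (i + 1)) (F (i, k)) (c (i, k)) := fun i k =>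
    pc_nonneg (hpiece i (K k)).nonneg
  have hW0 : ∀ k, 0 ≤ W k := fun k => Finset.sum_nonneg fun i _ => smul_nonneg (hb i k) (hpc i k)
  have hWle : ∀ k, W k ≤ W₀ k := fun k => by
    rw [(hW₀ k).2]
    exact Finset.sum_le_sum fun i _ => smul_le_of_le_one_left (hpc i k) (hb1 i k)
  have hWr : Rng (fun k => lc C (W k)) (κ ∘ K) := by
    refine hC.lc hK hW0 fun k t ht => (hW₀ k).1 t ?_
    rw [Finsupp.mem_support_iff] at ht ⊢
    exact (((hW0 k t).lt_of_ne' ht).trans_le (hWle k t)).ne'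
  refine ⟨κ ∘ K, fun k => lc C (W k), hWr, fun A hA => ?_⟩
  set α : ℕ × ℕ → ℝ := fun κ => b κ.1 κ.2 * A κ.2 with hαd
  have hα : ∀ κ, 0 ≤ α κ := fun κ => mul_nonneg (hb _ _) (hA _)
  have hsum : lc z (∑ k ∈ Finset.range n, A k • lc C (W k))
      = ∑ κ ∈ Finset.range N ×ˢ Finset.range n, α κ • pv y (μ * (κ.1 + 1)) (F κ) (c κ) := by
    rw [map_sum, Finset.sum_product_right]
    refine Finset.sum_congr rfl fun k _ => ?_
    rw [map_smul, ← lc_lc, hW, map_sum, Finset.smul_sum]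
    refine Finset.sum_congr rfl fun i _ => ?_
    rw [map_smul, lc_pc, smul_smul, mul_comm]
  rw [hsum]
  refine ⟨fun i hi => ?_, fun R hR0 hR => ?_⟩
  · refine le_trans ?_ (rows_lower hcfg hy (fun _ => rfl)
      (fun κ _ t ht => (le_max_right _ _).trans (hge κ t ht)) hα hi)
    have : 0 ≤ ∑ k ∈ Finset.range n, b i k * A k :=
      Finset.sum_nonneg fun k _ => mul_nonneg (hb _ _) (hA _)
    exact mul_le_mul_of_nonneg_right (by linarith) this
  · refine (rows_upper (show 1 ≤ μ from Nat.succ_pos _) hcfg hy (by positivity) (by linarith) hτ0.le hτ1 hα hR0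
      hR).trans ?_
    have hS : ∑ κ ∈ Finset.range N ×ˢ Finset.range n, α κ
        ≤ (N + 1) * ∑ k ∈ Finset.range n, A k := by
      have h0 : 0 ≤ ∑ k ∈ Finset.range n, A k := Finset.sum_nonneg fun k _ => hA k
      rw [Finset.sum_product]
      calc ∑ i ∈ Finset.range N, ∑ k ∈ Finset.range n, α (i, k)
          ≤ ∑ i ∈ Finset.range N, ∑ k ∈ Finset.range n, A k :=
            Finset.sum_le_sum fun i _ => Finset.sum_le_sum fun k _ =>
              mul_le_of_le_one_left (hA k) (hb1 i k)
        _ = N * ∑ k ∈ Finset.range n, A k := by simp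
        _ ≤ _ := by linarith
    have h0 : 0 ≤ ∑ k ∈ Finset.range n, A k := Finset.sum_nonneg fun k _ => hA k
    have h1 : (16 * (2 ^ μ : ℝ)⁻¹ + 6 * τ) * ∑ κ ∈ Finset.range N ×ˢ Finset.range n, α κ
        ≤ (16 * (2 ^ μ : ℝ)⁻¹ + 6 * τ) * ((N + 1) * ∑ k ∈ Finset.range n, A k) :=
      mul_le_mul_of_nonneg_left hS (by positivity)
    have h2 : (16 * (2 ^ μ : ℝ)⁻¹ + 6 * τ) * ((N + 1) * ∑ k ∈ Finset.range n, A k)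
        ≤ ε * ∑ k ∈ Finset.range n, A k := by
      rw [← mul_assoc]
      exact mul_le_mul_of_nonneg_right (by linarith) h0
    have h3 : (1 + ε / 8) * R ≤ (1 + ε) * R := mul_le_mul_of_nonneg_right (by linarith) hR0
    linarith

end IW

namespace IW

/-! ### Arrays generating `c₀` -/

lemma geom_bound (l m₀ : ℕ) (hm : 1 ≤ m₀) :
    ∑ i ∈ (Finset.range l).filter (fun i => 3 * (i + 1) < m₀), (2 : ℝ) ^ (3 * (i + 1)) / 2 ^ m₀
      ≤ 4 / 7 := by
  obtain ⟨M, rfl⟩ : ∃ M, m₀ = M + 1 := ⟨m₀ - 1, by omega⟩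
  have h1 : ∑ i ∈ (Finset.range l).filter (fun i => 3 * (i + 1) < M + 1),
      (2 : ℝ) ^ (3 * (i + 1)) / 2 ^ (M + 1)
      ≤ ∑ i ∈ Finset.range (M / 3), (2 : ℝ) ^ (3 * (i + 1)) / 2 ^ (M + 1) := by
    refine Finset.sum_le_sum_of_subset_of_nonneg (fun i hi => ?_) fun i _ _ => by positivity
    have := (Finset.mem_filter.1 hi).2
    rw [Finset.mem_range]
    omega
  refine h1.trans ?_
  have h2 : ∀ T : ℕ, ∑ i ∈ Finset.range T, (2 : ℝ) ^ (3 * (i + 1)) ≤ 8 / 7 * 2 ^ (3 * T) := by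
    intro T
    induction T with
    | zero => norm_num
    | succ T ih =>
      rw [Finset.sum_range_succ]
      have : (2 : ℝ) ^ (3 * (T + 1)) = 8 * 2 ^ (3 * T) := by ring
      rw [this]
      linarith
  rw [← Finset.sum_div, div_le_iff₀ (by positivity)]
  have h3 : (2 : ℝ) ^ (3 * (M / 3)) ≤ 2 ^ M :=
    pow_le_pow_right₀ (by norm_num) (by omega)
  have := h2 (M / 3)
  rw [pow_succ]
  linarith

variable {y : ℕ → ℕ →₀ ℝ} {s : ℕ → ℕ} {δ : ℝ} {L : ℕ} {η τ : ℝ} {D : ℕ → ℕ}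
  {F : ℕ → Finset ℕ} {c : ℕ → ℕ → ℝ} {l : ℕ}

lemma Cfg.subset {ι : Type*} {I I' : Finset ι} {m D : ι → ℕ} {F : ι → Finset ℕ} {c : ι → ℕ → ℝ}
    (h : Cfg s L η τ I m D F c) (hsub : I' ⊆ I) : Cfg s L η τ I' m D F c where
  L1 := h.L1
  η0 := h.η0
  ηL := h.ηL
  m1 κ hκ := h.m1 κ (hsub hκ)
  piece κ hκ := h.piece κ (hsub hκ)
  D1 κ hκ := h.D1 κ (hsub hκ)
  Dτ κ hκ := h.Dτ κ (hsub hκ)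
  ητ κ hκ := h.ητ κ (hsub hκ)
  start κ hκ := h.start κ (hsub hκ)

/-- Action of a functional on a combination of pieces of increasing weights, each one much longer
than the range of the preceding ones. A functional of weight `m_i` either starts beyond all pieces
before the `i`-th, and then it essentially sees only the `i`-th piece, or it starts earlier, and
then its complexity is too small to act on the `i`-th piece. -/
lemma c0_step (h : Cfg s L η τ (Finset.range l) (fun i => 3 * (i + 1)) D F c) (hy : RIS y s δ)
    (hδ0 : 0 ≤ δ) (hδ : δ ≤ 1 / 8) (hτ : 0 ≤ τ) {P : ℕ → ℕ} (hP : ∀ i < l, L ≤ P i)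
    (hPD : ∀ i < l, 8 * (P i : ℝ) ≤ τ * D i)
    (hend : ∀ i < l, ∀ i' < i, ∀ t ∈ F i', s (t + 1) ≤ P i) {α : ℕ → ℝ} (hα : ∀ i, 0 ≤ α i)
    (hα1 : ∀ i, α i ≤ 8 / 7)
    (hnorm : ∀ i < l, α i * NZ (pv y (3 * (i + 1)) (F i) (c i)) ≤ 1) {S V : ℝ}
    (hS : S = ∑ i ∈ Finset.range l, α i)
    (hV : V = NZ (∑ i ∈ Finset.range l, α i • pv y (3 * (i + 1)) (F i) (c i)))
    {f : ℕ → ℝ} {m₀ : ℕ} (hf : WF f m₀) :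
    ev f (∑ i ∈ Finset.range l, α i • pv y (3 * (i + 1)) (F i) (c i)) ≤ V / 2 + 3 * τ * S ∨
    ev f (∑ i ∈ Finset.range l, α i • pv y (3 * (i + 1)) (F i) (c i)) ≤
      V / 8 + 36 / 49 + 3 * τ * S ∨
    ev f (∑ i ∈ Finset.range l, α i • pv y (3 * (i + 1)) (F i) (c i)) ≤ 1 + 3 * τ * S := by
  have hV0 : 0 ≤ V := hV ▸ NZ_nonneg _
  have hS0 : 0 ≤ S := hS ▸ Finset.sum_nonneg fun κ _ => hα κ
  have hτS : 0 ≤ τ * S := mul_nonneg hτ hS0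
  by_cases hw : m₀ = 0 ∨ L ≤ m₀
  · have := h.high hy (by linarith) (fun κ _ => hα κ) hf hw
    rw [← hS] at this
    exact Or.inl (by linarith)
  push Not at hw
  have hwf := hf
  cases hf with
  | leaf i c hc => exact absurd rfl hw.1
  | op _ hm Q hQ f w hf hlow hsep hw' =>
    -- the estimate when no piece of weight `m₀` is seen
    have main : (∀ i < l, 3 * (i + 1) = m₀ → ∃ q ∈ Q, q < P i) →
        ev (fun i => (2 ^ m₀ : ℝ)⁻¹ * ∑ q ∈ Q, f q i)
          (∑ i ∈ Finset.range l, α i • pv y (3 * (i + 1)) (F i) (c i)) ≤ V / 2 + 3 * τ * S ∨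
        ev (fun i => (2 ^ m₀ : ℝ)⁻¹ * ∑ q ∈ Q, f q i)
          (∑ i ∈ Finset.range l, α i • pv y (3 * (i + 1)) (F i) (c i)) ≤
          V / 8 + 36 / 49 + 3 * τ * S := by
      intro hq
      obtain ⟨X₀, hX, -, hJ⟩ := h.low hy hδ0 (by linarith) (fun κ _ => hα κ) hm hw.2 hQ hf hlow
        hsep hw'
      rw [← hV] at hX
      specialize hJ ((Finset.range l).filter fun i => 3 * (i + 1) < m₀) (Finset.filter_subset _ _)
        (fun i hi hi' => by
          have hle : m₀ ≤ 3 * (i + 1) := by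
            by_contra hc
            exact hi' (Finset.mem_filter.2 ⟨hi, not_le.1 hc⟩)
          rcases hle.lt_or_eq with hlt | heq
          · exact Or.inl hlt
          · refine Or.inr ⟨heq.symm, P i, ?_, hPD i (Finset.mem_range.1 hi)⟩
            obtain ⟨q, hqQ, hqP⟩ := hq i (Finset.mem_range.1 hi) heq.symm
            obtain ⟨e, he⟩ : ∃ e, m₀ * m₀ = e + 1 :=
              ⟨m₀ * m₀ - 1, by have := Nat.mul_le_mul hm hm; omega⟩
            rw [he, sch_succ_iff] at hQ
            obtain ⟨k, hk, hcov⟩ := hQ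
            rw [he]
            exact hcov.mono_right (by have := hk q hqQ; omega))
      rw [← hS] at hJ
      have hθ : (2 ^ m₀ : ℝ)⁻¹ * X₀ ≤ (2 ^ m₀ : ℝ)⁻¹ * V := by gcongr
      by_cases hm3 : m₀ < 3
      · left
        refine hJ.trans ?_
        have : (Finset.range l).filter (fun i => 3 * (i + 1) < m₀) = ∅ :=
          Finset.filter_eq_empty_iff.2 fun i _ hi => by omega
        rw [this, Finset.sum_empty, mul_zero, add_zero]
        have h2 : (2 ^ m₀ : ℝ)⁻¹ ≤ 2⁻¹ :=
          inv_anti₀ (by norm_num) (le_self_pow₀ (by norm_num) (by omega))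
        have := mul_le_mul_of_nonneg_right h2 hV0
        linarith
      · right
        refine hJ.trans ?_
        have h2 : (2 ^ m₀ : ℝ)⁻¹ ≤ 8⁻¹ := by
          refine inv_anti₀ (by norm_num) ?_
          calc (8 : ℝ) = 2 ^ 3 := by norm_num
            _ ≤ 2 ^ m₀ := pow_le_pow_right₀ (by norm_num) (by omega)
        have h3 := mul_le_mul_of_nonneg_right h2 hV0
        have h4 : ∑ i ∈ (Finset.range l).filter (fun i => 3 * (i + 1) < m₀),
            (2 : ℝ) ^ (3 * (i + 1)) / 2 ^ m₀ * α i ≤ 4 / 7 * (8 / 7) := by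
          calc _ ≤ ∑ i ∈ (Finset.range l).filter (fun i => 3 * (i + 1) < m₀),
              (2 : ℝ) ^ (3 * (i + 1)) / 2 ^ m₀ * (8 / 7) :=
                Finset.sum_le_sum fun i _ => by
                  have := hα1 i
                  gcongr
            _ ≤ _ := by
                rw [← Finset.sum_mul]
                exact mul_le_mul_of_nonneg_right (geom_bound l m₀ hm) (by norm_num)
        have h5 : 0 ≤ ∑ i ∈ (Finset.range l).filter (fun i => 3 * (i + 1) < m₀),
            (2 : ℝ) ^ (3 * (i + 1)) / 2 ^ m₀ * α i :=
          Finset.sum_nonneg fun i _ => by have := hα i; positivity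
        nlinarith
    by_cases hex : ∃ i < l, 3 * (i + 1) = m₀ ∧ ∀ q ∈ Q, P i ≤ q
    · obtain ⟨i, hi, him, hqP⟩ := hex
      right; right
      set g : ℕ → ℝ := fun i => (2 ^ m₀ : ℝ)⁻¹ * ∑ q ∈ Q, f q i with hg
      set I' := (Finset.range l).filter fun k => i < k with hI'
      obtain ⟨X₀, -, hX0, hJ⟩ := (h.subset (I' := I') (Finset.filter_subset _ _)).low hy hδ0
        (by linarith) (fun κ _ => hα κ) hm hw.2 hQ hf hlow hsep hw'
      specialize hJ ∅ (Finset.empty_subset _) fun k hk _ => by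
        have := (Finset.mem_filter.1 hk).2
        left; omega
      rw [hX0 fun q hq => (hP i hi).trans (hqP q hq), Finset.sum_empty, mul_zero, mul_zero,
        zero_add, zero_add] at hJ
      have hgi : α i * ev g (pv y (3 * (i + 1)) (F i) (c i)) ≤ 1 :=
        (mul_le_mul_of_nonneg_left (ev_le_NZ hwf _) (hα i)).trans (hnorm i hi)
      have hz : ∀ k < i, ev g (pv y (3 * (k + 1)) (F k) (c k)) = 0 := by
        intro k hk
        rw [pv, map_sum]
        refine Finset.sum_eq_zero fun t ht => ?_
        rw [map_smul, ev_zero_left, smul_zero]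
        intro j hj
        have hjP : j < P i := (hy.hi t j hj).trans_le (hend i hi k hk t ht)
        rw [hg]
        simp only
        rw [Finset.sum_eq_zero, mul_zero]
        intro q hq
        by_contra hne
        have := hlow q hq j hne
        have := hqP q hq
        omega
      have hsplit : ev g (∑ k ∈ Finset.range l, α k • pv y (3 * (k + 1)) (F k) (c k))
          = α i * ev g (pv y (3 * (i + 1)) (F i) (c i))
            + ev g (∑ k ∈ I', α k • pv y (3 * (k + 1)) (F k) (c k)) := by
        rw [map_sum, map_sum, hI', Finset.sum_filter,
          ← Finset.add_sum_erase _ _ (Finset.mem_range.2 hi),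
          ← Finset.add_sum_erase (a := i) _ (fun k => if i < k then _ else _)
            (Finset.mem_range.2 hi), if_neg (lt_irrefl i), zero_add, map_smul, smul_eq_mul]
        congr 1
        refine Finset.sum_congr rfl fun k hk => ?_
        split_ifs with hik
        · rfl
        · have hki : k < i := by
            have := (Finset.mem_erase.1 hk).1
            omega
          rw [map_smul, hz k hki, smul_zero]
      rw [hsplit]
      have hSle : ∑ k ∈ I', α k ≤ S := by
        rw [hS]
        exact Finset.sum_le_sum_of_subset_of_nonneg (Finset.filter_subset _ _) fun k _ _ => hα k
      have : 3 * τ * ∑ k ∈ I', α k ≤ 3 * τ * S := by gcongr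
      linarith
    · push Not at hex
      rcases main hex with h1 | h1
      · exact Or.inl h1
      · exact Or.inr (Or.inl h1)

/-- Combinations of the pieces with coefficients making each of them of norm at most one have norm
almost at most one: in each alternative of `c0_step`, the norm `V` occurs on the right with a
coefficient at most `1/2`. -/
lemma c0_upper (h : Cfg s L η τ (Finset.range l) (fun i => 3 * (i + 1)) D F c) (hy : RIS y s δ)
    (hδ0 : 0 ≤ δ) (hδ : δ ≤ 1 / 8) (hτ : 0 ≤ τ) {P : ℕ → ℕ} (hP : ∀ i < l, L ≤ P i)
    (hPD : ∀ i < l, 8 * (P i : ℝ) ≤ τ * D i)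
    (hend : ∀ i < l, ∀ i' < i, ∀ t ∈ F i', s (t + 1) ≤ P i) {α : ℕ → ℝ} (hα : ∀ i, 0 ≤ α i)
    (hα1 : ∀ i, α i ≤ 8 / 7)
    (hnorm : ∀ i < l, α i * NZ (pv y (3 * (i + 1)) (F i) (c i)) ≤ 1)
    (hsmall : 3 * τ * ∑ i ∈ Finset.range l, α i ≤ 1 / 10) :
    NZ (∑ i ∈ Finset.range l, α i • pv y (3 * (i + 1)) (F i) (c i))
      ≤ 1 + 3 * τ * ∑ i ∈ Finset.range l, α i := by
  set V := NZ (∑ i ∈ Finset.range l, α i • pv y (3 * (i + 1)) (F i) (c i)) with hV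
  set S := ∑ i ∈ Finset.range l, α i with hS
  have hS0 : 0 ≤ S := hS ▸ Finset.sum_nonneg fun κ _ => hα κ
  have hτS : 0 ≤ τ * S := mul_nonneg hτ hS0
  have h1 : V ≤ max (V / 2 + 3 * τ * S) (max (V / 8 + 36 / 49 + 3 * τ * S) (1 + 3 * τ * S)) :=
    NZ_le fun f w hf => by
      have := c0_step h hy hδ0 hδ hτ hP hPD hend hα hα1 hnorm hS hV hf
      simpa only [le_max_iff] using this
  rcases le_max_iff.1 h1 with h1 | h1
  · linarith
  rcases le_max_iff.1 h1 with h1 | h1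
  · linarith
  · exact h1

/-- In every normalized block sequence there is an array of positive combinations generating the
unit vector basis of `c₀` as an asymptotic model. -/
theorem exists_c0_array {z : ℕ → ℕ →₀ ℝ} {s : ℕ → ℕ} (hz : Blk z s) :
    ∃ Γ : ℕ → ℕ → ℕ →₀ ℝ, (∀ i j, 0 ≤ Γ i j) ∧ (∀ i j t, t ∈ (Γ i j).support → j ≤ t) ∧
      (∀ i j, NZ (lc z (Γ i j)) = 1) ∧ ∀ (l : ℕ) (ε : ℝ), 0 < ε → ∃ N : ℕ, ∀ j : ℕ → ℕ,
        (∀ i i', i < i' → i' < l → j i < j i') → (∀ i < l, N ≤ j i) →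
        (∀ i i', i < i' → i' < l → ∀ t ∈ (Γ i (j i)).support, ∀ t' ∈ (Γ i' (j i')).support,
          t < t') ∧
        ∀ a : ℕ → ℝ, (∀ i, 0 ≤ a i) → (∀ i, a i ≤ 1) →
          NZ (lc z (∑ i ∈ Finset.range l, a i • Γ i (j i))) ≤ 1 + ε := by
  obtain ⟨κ, C, s', hC, hy⟩ := hz.exists_ris (δ := 1 / 8) (by norm_num) (by norm_num)
  set y := fun r => lc z (C r) with hyd
  set D : ℕ → ℕ := fun K => (K + 1) * (8 * (s' K + 1)) with hD
  have hD1 : ∀ K, 1 ≤ D K := fun K => Nat.mul_pos (Nat.succ_pos _) (by omega)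
  choose F c hstart hpiece using fun (i K : ℕ) =>
    exists_piece hy.mono (3 * (i + 1)) (hD1 K) (max K (D K))
  let K : ℕ → ℕ := fun r => Nat.rec 0 (fun _ K => max (K + 1)
    (((Finset.range (K + 1)).biUnion fun i => F i K).sup id + 1)) r
  have hKs : ∀ r, K (r + 1) = max (K r + 1)
    (((Finset.range (K r + 1)).biUnion fun i => F i (K r)).sup id + 1) := fun _ => rfl
  have hK : StrictMono K := strictMono_nat_of_lt_succ fun r => by rw [hKs]; omega
  have hFK : ∀ i r, i ≤ K r → ∀ t ∈ F i (K r), t < K (r + 1) := by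
    intro i r hi t ht
    have : t ≤ ((Finset.range (K r + 1)).biUnion fun i => F i (K r)).sup id :=
      Finset.le_sup (f := id) (Finset.mem_biUnion.2 ⟨i, Finset.mem_range.2 (by omega), ht⟩)
    rw [hKs]; omega
  set x : ℕ → ℕ → ℕ →₀ ℝ := fun i j => pv y (3 * (i + 1)) (F i (K j)) (c i (K j)) with hx
  have hx78 : ∀ i j, 7 / 8 ≤ NZ (x i j) := by
    intro i j
    have hp := hpiece i (K j)
    have hSch : Sch (3 * (i + 1) * (3 * (i + 1))) ((F i (K j)).image s') := by
      obtain ⟨e, he⟩ : ∃ e, 3 * (i + 1) * (3 * (i + 1)) = e + 1 :=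
        ⟨3 * (i + 1) * (3 * (i + 1)) - 1, by
          have := Nat.mul_pos (show 0 < 3 * (i + 1) by omega) (show 0 < 3 * (i + 1) by omega)
          omega⟩
      rw [he, sch_succ_iff]
      refine ⟨D (K j), fun q hq => ?_, by simpa [he] using hp.cov⟩
      obtain ⟨t, ht, rfl⟩ := Finset.mem_image.1 hq
      have h1 := hstart i (K j) t ht
      have h2 : t ≤ s' t := hy.mono.le_apply
      have := le_max_right (K j) (D (K j))
      omega
    have := hy.lower (m := 3 * (i + 1)) (by omega) (F := F i (K j))
      (c := fun t => 2 ^ (3 * (i + 1)) * c i (K j) t)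
      (fun t => mul_nonneg (by positivity) (hp.nonneg t)) hSch
    rw [← Finset.mul_sum, hp.sum] at this
    have h2 : (2 ^ (3 * (i + 1)) : ℝ)⁻¹ * ((1 - 1 / 8) * (2 ^ (3 * (i + 1)) * 1)) = 7 / 8 := by
      field_simp; norm_num
    rw [h2] at this
    exact this
  set γ : ℕ → ℕ → ℕ →₀ ℝ := fun i j => pc (3 * (i + 1)) (F i (K j)) (c i (K j)) with hγ
  have hγ0 : ∀ i j, 0 ≤ γ i j := fun i j => pc_nonneg (hpiece i (K j)).nonneg
  set Γ : ℕ → ℕ → ℕ →₀ ℝ := fun i j => (NZ (x i j))⁻¹ • lc C (γ i j) with hΓ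
  have hzΓ : ∀ i j, lc z (Γ i j) = (NZ (x i j))⁻¹ • x i j := fun i j => by
    rw [hΓ]
    simp only
    rw [map_smul, ← lc_lc, hγ]
    simp only
    rw [lc_pc]
  have hsupp : ∀ i j u, u ∈ (Γ i j).support → ∃ t ∈ F i (K j), κ t ≤ u ∧ u < κ (t + 1) := by
    intro i j u hu
    have h1 := Finsupp.support_smul hu
    obtain ⟨t, ht, h2⟩ := lc_ne_zero (Finsupp.mem_support_iff.1 h1)
    exact ⟨t, pc_support ht, hC.lo t u h2, hC.hi t u h2⟩
  refine ⟨Γ, fun i j => ?_, fun i j u hu => ?_, fun i j => ?_, fun l ε hε => ?_⟩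
  · exact smul_nonneg (inv_nonneg.2 (NZ_nonneg _)) (lc_nonneg hC.nonneg (hγ0 i j))
  · obtain ⟨t, ht, h1, -⟩ := hsupp i j u hu
    have h2 := hstart i (K j) t ht
    have h3 : j ≤ K j := hK.le_apply
    have h4 : t ≤ κ t := hC.mono.le_apply
    have := le_max_left (K j) (D (K j))
    omega
  · rw [hzΓ, NZ_smul (inv_nonneg.2 (NZ_nonneg _)), inv_mul_cancel₀]
    linarith [hx78 i j]
  set τ : ℝ := min ε (1 / 10) / (4 * (l + 1)) with hτ
  have hε' : 0 < min ε (1 / 10) := lt_min hε (by norm_num)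
  have hl0 : (0 : ℝ) < l + 1 := by positivity
  have hτ0 : 0 < τ := by positivity
  have hτl : 4 * τ * (l + 1) = min ε (1 / 10) := by rw [hτ]; field_simp
  obtain ⟨L, hL1, hL⟩ := exists_large (τ / 2 ^ (3 * l)) (by positivity)
  obtain ⟨N₀, hN₀⟩ := exists_nat_ge (2 ^ (3 * l) * 8 / τ)
  refine ⟨max (max L l) N₀, fun j hj hjN => ⟨fun i i' hii hi' t ht t' ht' => ?_, fun a ha ha1 => ?_⟩⟩
  · obtain ⟨r, hr, -, h1⟩ := hsupp i (j i) t ht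
    obtain ⟨r', hr', h2, -⟩ := hsupp i' (j i') t' ht'
    have h3 : i ≤ K (j i) := by
      have := hjN i (by omega)
      have := hK.le_apply (x := j i)
      omega
    have h4 := hFK i (j i) h3 r hr
    have h5 : K (j i + 1) ≤ K (j i') := hK.monotone (hj i i' hii hi')
    have h6 := (le_max_left _ _).trans (hstart i' (K (j i')) r' hr')
    exact (h1.trans_le (hC.mono.monotone (by omega))).trans_le h2
  · have hcfg : Cfg s' L (τ / 2 ^ (3 * l)) τ (Finset.range l) (fun i => 3 * (i + 1))
        (fun i => D (K (j i))) (fun i => F i (K (j i))) (fun i => c i (K (j i))) := by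
      have hle : ∀ i ∈ Finset.range l, (2 : ℝ) ^ (3 * (i + 1)) ≤ 2 ^ (3 * l) := fun i hi =>
        pow_le_pow_right₀ (by norm_num) (by have := Finset.mem_range.1 hi; omega)
      refine ⟨hL1, by positivity, hL, fun i _ => by omega, fun i _ => hpiece _ _,
        fun i _ => hD1 _, fun i hi => ?_, fun i hi => ?_, fun i hi t ht => ?_⟩
      · have h1 := hjN i (Finset.mem_range.1 hi)
        have h2 := hK.le_apply (x := j i)
        have h3 : N₀ ≤ D (K (j i)) := by
          have : K (j i) ≤ D (K (j i)) := by rw [hD]; nlinarith [Nat.zero_le (s' (K (j i)))]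
          omega
        have h4 : (N₀ : ℝ) ≤ D (K (j i)) := by exact_mod_cast h3
        rw [div_le_iff₀' hτ0] at hN₀
        have := hle i hi
        have := mul_le_mul_of_nonneg_left h4 hτ0.le
        linarith
      · rw [mul_div_assoc', div_le_iff₀ (by positivity), mul_comm]
        exact mul_le_mul_of_nonneg_left (hle i hi) hτ0.le
      · have h1 := hjN i (Finset.mem_range.1 hi)
        have h2 := hK.le_apply (x := j i)
        have h3 := hstart i (K (j i)) t ht
        have h4 : t ≤ s' t := hy.mono.le_apply
        have := le_max_left (K (j i)) (D (K (j i)))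
        omega
    have hsum : lc z (∑ i ∈ Finset.range l, a i • Γ i (j i)) = ∑ i ∈ Finset.range l,
        (a i * (NZ (x i (j i)))⁻¹) • x i (j i) := by
      rw [map_sum]
      exact Finset.sum_congr rfl fun i _ => by rw [map_smul, hzΓ, smul_smul]
    have hinv : ∀ i, (NZ (x i (j i)))⁻¹ ≤ 8 / 7 := fun i =>
      (inv_anti₀ (by norm_num) (hx78 i (j i))).trans (by norm_num)
    have hinv0 : ∀ i, 0 ≤ (NZ (x i (j i)))⁻¹ := fun i => inv_nonneg.2 (NZ_nonneg _)
    have hα1 : ∀ i, a i * (NZ (x i (j i)))⁻¹ ≤ 8 / 7 := fun i =>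
      (mul_le_of_le_one_left (hinv0 i) (ha1 i)).trans (hinv i)
    have hS : 3 * τ * ∑ i ∈ Finset.range l, a i * (NZ (x i (j i)))⁻¹ ≤ min ε (1 / 10) := by
      have : ∑ i ∈ Finset.range l, a i * (NZ (x i (j i)))⁻¹ ≤ l * (8 / 7) := by
        refine (Finset.sum_le_sum fun i _ => hα1 i).trans ?_
        simp
      have h2 : 3 * τ * ∑ i ∈ Finset.range l, a i * (NZ (x i (j i)))⁻¹ ≤ 3 * τ * (l * (8 / 7)) := by
        gcongr
      have : 0 ≤ τ * l := by positivity
      nlinarith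
    rw [hsum]
    have := c0_upper hcfg hy (by norm_num) (by norm_num) hτ0.le (P := fun i => s' (K (j i)))
      (fun i hi => by
        have h1 := hjN i hi
        have h2 := hK.le_apply (x := j i)
        have h4 : K (j i) ≤ s' (K (j i)) := hy.mono.le_apply
        omega)
      (fun i hi => by
        have h1 : (N₀ : ℝ) ≤ K (j i) := by
          have h1 := hjN i hi
          have h2 := hK.le_apply (x := j i)
          exact_mod_cast (by omega : N₀ ≤ K (j i))
        have h2 : 1 ≤ τ * (K (j i) + 1) := by
          rw [div_le_iff₀' hτ0] at hN₀
          have h3 := mul_le_mul_of_nonneg_left h1 hτ0.le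
          have h4 : (1 : ℝ) ≤ 2 ^ (3 * l) := one_le_pow₀ (by norm_num)
          linarith
        have h3 : (0 : ℝ) ≤ 8 * (s' (K (j i)) + 1) := by positivity
        have h4 := mul_le_mul_of_nonneg_right h2 h3
        simp only [hD]
        push_cast
        linarith)
      (fun i hi i' hi' t ht => by
        have h3 : i' ≤ K (j i') := by
          have := hjN i' (by omega)
          have := hK.le_apply (x := j i')
          omega
        have h4 := hFK i' (j i') h3 t ht
        have h5 : K (j i' + 1) ≤ K (j i) := hK.monotone (hj i' i hi' hi)
        exact hy.mono.monotone (by omega))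
      (α := fun i => a i * (NZ (x i (j i)))⁻¹) (fun i => mul_nonneg (ha i) (hinv0 i)) hα1
      (fun i hi => by
        rw [mul_assoc, inv_mul_cancel₀ (by linarith [hx78 i (j i)]), mul_one]
        exact ha1 i)
      (hS.trans (min_le_right _ _))
    exact this.trans (by linarith [min_le_left ε (1 / 10)])

end IW

namespace IW

/-! ### The `p`-convexification -/

/-- The coordinatewise power `|a|^p` of a finitely supported vector. -/
noncomputable def pw (p : ℝ) (a : ℕ →₀ ℝ) : ℕ →₀ ℝ :=
  Finsupp.onFinset a.support (fun i => if a i = 0 then 0 else |a i| ^ p)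
    (fun i hi => by rw [Finsupp.mem_support_iff]; intro h; simp [h] at hi)

lemma pw_apply {p : ℝ} (hp : 0 < p) (a : ℕ →₀ ℝ) (i : ℕ) : pw p a i = |a i| ^ p := by
  by_cases h : a i = 0 <;> simp [pw, h, Real.zero_rpow hp.ne']

lemma pw_nonneg {p : ℝ} (hp : 0 < p) (a : ℕ →₀ ℝ) : 0 ≤ pw p a := fun i => by
  rw [pw_apply hp]; exact Real.rpow_nonneg (abs_nonneg _) _

lemma pw_ne_zero {p : ℝ} (hp : 0 < p) {a : ℕ →₀ ℝ} {i : ℕ} : pw p a i ≠ 0 ↔ a i ≠ 0 := by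
  rw [pw_apply hp, Ne, Real.rpow_eq_zero (abs_nonneg _) hp.ne', abs_eq_zero]

lemma pw_mono {p : ℝ} (hp : 0 < p) {a b : ℕ →₀ ℝ} (h : ∀ i, |a i| ≤ |b i|) : pw p a ≤ pw p b := by
  intro i
  rw [pw_apply hp, pw_apply hp]
  exact Real.rpow_le_rpow (abs_nonneg _) (h i) hp.le

lemma pw_smul {p : ℝ} (hp : 0 < p) (c : ℝ) (a : ℕ →₀ ℝ) : pw p (c • a) = |c| ^ p • pw p a := by
  ext i
  simp only [pw_apply hp, Finsupp.smul_apply, smul_eq_mul, abs_mul]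
  exact Real.mul_rpow (abs_nonneg _) (abs_nonneg _)

/-- The norm of the `p`-convexification on finitely supported vectors. -/
noncomputable def NX (p : ℝ) (a : ℕ →₀ ℝ) : ℝ := NZ (pw p a) ^ (1 / p)

lemma NX_nonneg (p : ℝ) (a : ℕ →₀ ℝ) : 0 ≤ NX p a := Real.rpow_nonneg (NZ_nonneg _) _

lemma NX_pow {p : ℝ} (hp : 0 < p) (a : ℕ →₀ ℝ) : NX p a ^ p = NZ (pw p a) := by
  rw [NX, ← Real.rpow_mul (NZ_nonneg _), one_div_mul_cancel hp.ne', Real.rpow_one]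

lemma ev_pw {p : ℝ} (hp : 0 < p) {f : ℕ → ℝ} (hf : ∀ i, 0 ≤ f i) (a : ℕ →₀ ℝ) {T : Finset ℕ}
    (hT : a.support ⊆ T) : ev f (pw p a) = ∑ i ∈ T, |f i ^ (1 / p) * a i| ^ p := by
  rw [ev_eq]
  have hs : (pw p a).support ⊆ T := fun i hi =>
    hT (Finsupp.mem_support_iff.2 ((pw_ne_zero hp).1 (Finsupp.mem_support_iff.1 hi)))
  rw [Finset.sum_subset hs fun i _ hi => by rw [Finsupp.notMem_support_iff.1 hi, mul_zero]]
  refine Finset.sum_congr rfl fun i _ => ?_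
  rw [pw_apply hp, abs_mul, Real.mul_rpow (abs_nonneg _) (abs_nonneg _),
    abs_of_nonneg (Real.rpow_nonneg (hf i) _), ← Real.rpow_mul (hf i),
    one_div_mul_cancel hp.ne', Real.rpow_one]

lemma NX_add_le {p : ℝ} (hp : 1 < p) (a b : ℕ →₀ ℝ) : NX p (a + b) ≤ NX p a + NX p b := by
  have hp0 : 0 < p := by linarith
  have h0 : 0 ≤ NX p a + NX p b := add_nonneg (NX_nonneg _ _) (NX_nonneg _ _)
  have key : NZ (pw p (a + b)) ≤ (NX p a + NX p b) ^ p := by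
    refine NZ_le fun f w hf => ?_
    classical
    have hN : ∀ c, ev f (pw p c) ^ (1 / p) ≤ NX p c := fun c =>
      Real.rpow_le_rpow (ev_nonneg hf.nonneg (pw_nonneg hp0 c)) (ev_le_NZ hf _) (by positivity)
    have h1 := Real.Lp_add_le (a.support ∪ b.support) (fun i => f i ^ (1 / p) * a i)
      (fun i => f i ^ (1 / p) * b i) hp.le
    simp only [← mul_add] at h1
    rw [← ev_pw hp0 hf.nonneg a Finset.subset_union_left,
      ← ev_pw hp0 hf.nonneg b Finset.subset_union_right] at h1
    have h2 := ev_pw hp0 hf.nonneg (a + b) (Finsupp.support_add (g₁ := a) (g₂ := b))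
    simp only [Finsupp.add_apply] at h2
    rw [← h2] at h1
    have h3 := h1.trans (add_le_add (hN a) (hN b))
    have h4 : 0 ≤ ev f (pw p (a + b)) := ev_nonneg hf.nonneg (pw_nonneg hp0 _)
    calc ev f (pw p (a + b)) = (ev f (pw p (a + b)) ^ (1 / p)) ^ p := by
          rw [← Real.rpow_mul h4, one_div_mul_cancel hp0.ne', Real.rpow_one]
      _ ≤ _ := Real.rpow_le_rpow (Real.rpow_nonneg h4 _) h3 hp0.le
  calc NX p (a + b) ≤ ((NX p a + NX p b) ^ p) ^ (1 / p) :=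
        Real.rpow_le_rpow (NZ_nonneg _) key (by positivity)
    _ = _ := by rw [← Real.rpow_mul h0, mul_one_div_cancel hp0.ne', Real.rpow_one]

lemma NX_smul {p : ℝ} (hp : 0 < p) (c : ℝ) (a : ℕ →₀ ℝ) : NX p (c • a) = |c| * NX p a := by
  rw [NX, pw_smul hp, NZ_smul (Real.rpow_nonneg (abs_nonneg _) _),
    Real.mul_rpow (Real.rpow_nonneg (abs_nonneg _) _) (NZ_nonneg _), ← Real.rpow_mul (abs_nonneg _),
    mul_one_div_cancel hp.ne', Real.rpow_one, NX]

lemma abs_le_NX {p : ℝ} (hp : 0 < p) (a : ℕ →₀ ℝ) (i : ℕ) : |a i| ≤ NX p a := by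
  have h := le_NZ (pw p a) i
  rw [pw_apply hp, ← NX_pow hp] at h
  exact (Real.rpow_le_rpow_iff (abs_nonneg _) (NX_nonneg _ _) hp).1 h

lemma NX_mono {p : ℝ} (hp : 0 < p) {a b : ℕ →₀ ℝ} (h : ∀ i, |a i| ≤ |b i|) : NX p a ≤ NX p b :=
  Real.rpow_le_rpow (NZ_nonneg _) (NZ_mono (pw_mono hp h)) (by positivity)

/-- `X`, with the embedding `T` of the finitely supported vectors, is (a copy of) the completion of
`c₀₀` in the norm `NX p`. -/
structure Model (p : ℝ) {X : Type*} [NormedAddCommGroup X] [NormedSpace ℝ X]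
    (T : (ℕ →₀ ℝ) →ₗ[ℝ] X) : Prop where
  hp : 1 < p
  dense : DenseRange T
  norm : ∀ a, ‖T a‖ = NX p a

/-- Finitely supported sequences, to be normed by `NX p`. -/
def C00 (_p : ℝ) : Type := ℕ →₀ ℝ

noncomputable instance (p : ℝ) : AddCommGroup (C00 p) := inferInstanceAs (AddCommGroup (ℕ →₀ ℝ))
noncomputable instance (p : ℝ) : Module ℝ (C00 p) := inferInstanceAs (Module ℝ (ℕ →₀ ℝ))
noncomputable instance (p : ℝ) : Norm (C00 p) := ⟨fun a => NX p a⟩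

lemma C00.core {p : ℝ} (hp : 1 < p) : NormedSpace.Core ℝ (C00 p) where
  norm_nonneg a := NX_nonneg p a
  norm_smul c a := NX_smul (by linarith) c a
  norm_triangle a b := NX_add_le hp a b
  norm_eq_zero_iff a := by
    have hp0 : 0 < p := by linarith
    constructor
    · intro h
      refine Finsupp.ext fun i => ?_
      have h1 := abs_le_NX hp0 a i
      have h2 : NX p a = 0 := h
      rw [h2] at h1
      exact abs_nonpos_iff.1 h1
    · rintro rfl
      have := NX_smul hp0 0 0
      rw [smul_zero, abs_zero, zero_mul] at this
      exact this

theorem exists_model {p : ℝ} (hp : 1 < p) :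
    ∃ (B : BanachPkg) (T : (ℕ →₀ ℝ) →ₗ[ℝ] B.X), CompleteSpace B.X ∧ Model p T := by
  let _ : NormedAddCommGroup (C00 p) := NormedAddCommGroup.ofCore (C00.core hp)
  let _ : NormedSpace ℝ (C00 p) := NormedSpace.ofCore (C00.core hp)
  refine ⟨⟨UniformSpace.Completion (C00 p)⟩,
    (UniformSpace.Completion.toComplL (𝕜 := ℝ) (E := C00 p)).toLinearMap,
    inferInstanceAs (CompleteSpace (UniformSpace.Completion (C00 p))), hp, ?_, ?_⟩
  · exact UniformSpace.Completion.denseRange_coe (α := C00 p)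
  · intro a
    exact UniformSpace.Completion.norm_coe (E := C00 p) a

end IW

namespace IW

/-! ### Coordinates and basis projections -/

section Model

variable {p : ℝ} {X : Type*} [NormedAddCommGroup X] [NormedSpace ℝ X] {T : (ℕ →₀ ℝ) →ₗ[ℝ] X}

/-- The `i`-th coordinate functional, extended from `c₀₀` by density. -/
noncomputable def cd (T : (ℕ →₀ ℝ) →ₗ[ℝ] X) (i : ℕ) : X →L[ℝ] ℝ :=
  (Finsupp.lapply i : (ℕ →₀ ℝ) →ₗ[ℝ] ℝ).extendOfNorm T

/-- The truncation of `x` to its coordinates below `B`. -/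
noncomputable def tr (T : (ℕ →₀ ℝ) →ₗ[ℝ] X) (B : ℕ) (x : X) : ℕ →₀ ℝ :=
  ∑ i ∈ Finset.range B, Finsupp.single i (cd T i x)

/-- The basis projection onto the coordinates below `B`. -/
noncomputable def pr (T : (ℕ →₀ ℝ) →ₗ[ℝ] X) (B : ℕ) : X →L[ℝ] X :=
  ∑ i ∈ Finset.range B, (cd T i).smulRight (T (Finsupp.single i 1))

lemma tr_apply (B : ℕ) (x : X) (i : ℕ) : tr T B x i = if i < B then cd T i x else 0 := by
  classical
  simp [tr, Finsupp.finsetSum_apply, Finsupp.single_apply]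

lemma pr_apply (B : ℕ) (x : X) : pr T B x = T (tr T B x) := by
  simp only [pr, tr, map_sum, FunLike.coe_sum, Finset.sum_apply,
    ContinuousLinearMap.smulRight_apply]
  refine Finset.sum_congr rfl fun i _ => ?_
  rw [← map_smul, Finsupp.smul_single, smul_eq_mul, mul_one]

lemma pr_eq_sum (B : ℕ) (x : X) :
    pr T B x = ∑ i ∈ Finset.range B, cd T i x • T (Finsupp.single i 1) := by
  simp [pr]

namespace Model

lemma p_pos (M : Model p T) : 0 < p := by linarith [M.hp]

lemma cd_T (M : Model p T) (i : ℕ) (a : ℕ →₀ ℝ) : cd T i (T a) = a i := by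
  unfold cd
  rw [LinearMap.extendOfNorm_eq M.dense]
  · rfl
  · refine ⟨1, fun a => ?_⟩
    rw [one_mul, M.norm]
    exact abs_le_NX M.p_pos a i

lemma norm_mono (M : Model p T) {a b : ℕ →₀ ℝ} (h : ∀ i, |a i| ≤ |b i|) : ‖T a‖ ≤ ‖T b‖ := by
  rw [M.norm, M.norm]
  exact NX_mono M.p_pos h

lemma tr_T (M : Model p T) (B : ℕ) (a : ℕ →₀ ℝ) (i : ℕ) : tr T B (T a) i = if i < B then a i else 0 := by
  rw [tr_apply, M.cd_T]

/-- The projections onto intervals are contractive. -/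
lemma norm_pr_sub_le (M : Model p T) {B B' : ℕ} (x : X) : ‖pr T B' x - pr T B x‖ ≤ ‖x‖ := by
  refine M.dense.induction_on x (isClosed_le (by fun_prop) continuous_norm) fun a => ?_
  rw [pr_apply, pr_apply, ← map_sub]
  refine M.norm_mono fun i => ?_
  rw [Finsupp.sub_apply, M.tr_T, M.tr_T]
  split_ifs <;> simp

lemma norm_pr_le (M : Model p T) (B : ℕ) (x : X) : ‖pr T B x‖ ≤ ‖x‖ := by
  have := M.norm_pr_sub_le (B := 0) (B' := B) x
  simpa [pr] using this

lemma norm_sub_pr_le (M : Model p T) (B : ℕ) (x : X) : ‖x - pr T B x‖ ≤ ‖x‖ := by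
  refine M.dense.induction_on x (isClosed_le (by fun_prop) continuous_norm) fun a => ?_
  rw [pr_apply, ← map_sub]
  refine M.norm_mono fun i => ?_
  rw [Finsupp.sub_apply, M.tr_T]
  split_ifs <;> simp

lemma pr_T_of_lt (M : Model p T) {B : ℕ} {a : ℕ →₀ ℝ} (h : ∀ i, a i ≠ 0 → i < B) : pr T B (T a) = T a := by
  rw [pr_apply]
  congr 1
  ext i
  rw [M.tr_T]
  split_ifs with hi
  · rfl
  · by_contra hne
    exact hi (h i (Ne.symm hne))

lemma pr_T_of_le (M : Model p T) {B : ℕ} {a : ℕ →₀ ℝ} (h : ∀ i, a i ≠ 0 → B ≤ i) : pr T B (T a) = 0 := by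
  rw [pr_apply]
  convert T.map_zero
  ext i
  rw [M.tr_T]
  split_ifs with hi
  · by_contra hne
    exact absurd (h i hne) (by omega)
  · rfl

lemma tendsto_pr (M : Model p T) (x : X) : Tendsto (fun B => pr T B x) atTop (𝓝 x) := by
  rw [Metric.tendsto_atTop]
  intro ε hε
  obtain ⟨a, ha⟩ := M.dense.exists_dist_lt x (half_pos hε)
  refine ⟨a.support.sup id + 1, fun B hB => ?_⟩
  have h1 : pr T B (T a) = T a := M.pr_T_of_lt fun i hi => by
    have : i ≤ a.support.sup id := Finset.le_sup (f := id) (Finsupp.mem_support_iff.2 hi)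
    omega
  have h2 := M.norm_sub_pr_le B (x - T a)
  rw [map_sub, h1] at h2
  rw [dist_eq_norm] at ha
  have h3 : pr T B x - x = -(x - T a - (pr T B x - T a)) := by abel
  rw [dist_eq_norm, h3, norm_neg]
  linarith

lemma isSchauderBasis (M : Model p T) : IsSchauderBasis (fun i => T (Finsupp.single i 1)) := by
  intro x
  refine ⟨fun i => cd T i x, ?_, ?_⟩
  · have := M.tendsto_pr x
    simpa only [pr_eq_sum] using this
  · intro a ha
    funext i
    have h1 := ((cd T i).continuous.tendsto x).comp ha
    refine tendsto_nhds_unique (tendsto_const_nhds.congr' ?_) h1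
    filter_upwards [eventually_gt_atTop i] with n hn
    have : ∀ j, cd T i (T (Finsupp.single j 1)) = if j = i then 1 else 0 := fun j => by
      classical
      rw [M.cd_T, Finsupp.single_apply]
    simp [map_sum, this, hn]

lemma oneUnconditional (M : Model p T) : OneUnconditional (fun i => T (Finsupp.single i 1)) := by
  intro F a ε hε
  have h : ∀ c : ℕ → ℝ, ∑ i ∈ F, c i • T (Finsupp.single i 1) =
      T (∑ i ∈ F, Finsupp.single i (c i)) := fun c => by
    rw [map_sum]
    refine Finset.sum_congr rfl fun i _ => ?_
    rw [← map_smul, Finsupp.smul_single, smul_eq_mul, mul_one]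
  have habs : ∀ i, |ε i * a i| = |a i| := fun i => by
    rcases hε i with h | h <;> simp [h]
  classical
  rw [h, h]
  refine le_antisymm (M.norm_mono fun i => ?_) (M.norm_mono fun i => ?_) <;>
  · simp only [Finsupp.finsetSum_apply, Finsupp.single_apply, Finset.sum_ite_eq']
    split_ifs <;> simp [habs]

end Model

end Model

end IW

namespace IW

/-! ### Block sequences -/

/-- A family of finitely supported vectors with pairwise disjoint supports over `F`. -/
def Disj {ι : Type*} (F : Finset ι) (b : ι → ℕ →₀ ℝ) : Prop :=
  ∀ k ∈ F, ∀ l ∈ F, k ≠ l → ∀ i, b k i ≠ 0 → b l i = 0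

lemma pw_sum {p : ℝ} (hp : 0 < p) {ι : Type*} {F : Finset ι} {b : ι → ℕ →₀ ℝ} (h : Disj F b)
    (c : ι → ℝ) : pw p (∑ k ∈ F, c k • b k) = ∑ k ∈ F, |c k| ^ p • pw p (b k) := by
  ext i
  rw [pw_apply hp, Finsupp.finsetSum_apply, Finsupp.finsetSum_apply]
  simp only [Finsupp.smul_apply, smul_eq_mul, pw_apply hp]
  by_cases hk : ∃ k ∈ F, b k i ≠ 0
  · obtain ⟨k, hkF, hki⟩ := hk
    have h0 : ∀ l ∈ F, l ≠ k → b l i = 0 := fun l hl hlk => h k hkF l hl hlk.symm i hki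
    rw [Finset.sum_eq_single_of_mem k hkF fun l hl hlk => by rw [h0 l hl hlk, mul_zero],
      Finset.sum_eq_single_of_mem k hkF fun l hl hlk => by
        rw [h0 l hl hlk, abs_zero, Real.zero_rpow hp.ne', mul_zero],
      abs_mul, Real.mul_rpow (abs_nonneg _) (abs_nonneg _)]
  · push Not at hk
    rw [Finset.sum_eq_zero fun k hkF => by rw [hk k hkF, mul_zero],
      Finset.sum_eq_zero fun k hkF => by
        rw [hk k hkF, abs_zero, Real.zero_rpow hp.ne', mul_zero], abs_zero, Real.zero_rpow hp.ne']

/-- A normalized block sequence of `X`: successive vectors `b k` of norm one, supported in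
`[s k, s (k+1))`. -/
structure XBlk (p : ℝ) (b : ℕ → ℕ →₀ ℝ) (s : ℕ → ℕ) : Prop where
  mono : StrictMono s
  lo : ∀ k i, b k i ≠ 0 → s k ≤ i
  hi : ∀ k i, b k i ≠ 0 → i < s (k + 1)
  norm : ∀ k, NX p (b k) = 1

lemma disj_of_range {b : ℕ → ℕ →₀ ℝ} {s : ℕ → ℕ} (hs : StrictMono s)
    (lo : ∀ k i, b k i ≠ 0 → s k ≤ i) (hi : ∀ k i, b k i ≠ 0 → i < s (k + 1)) (F : Finset ℕ) :
    Disj F b := by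
  intro k _ l _ hkl i hk
  by_contra hl
  rcases lt_or_gt_of_ne hkl with h | h
  · have := hs.monotone (Nat.succ_le_of_lt h)
    have h1 := hi k i hk
    have h2 := lo l i hl
    simp only [Nat.succ_eq_add_one] at this
    omega
  · have := hs.monotone (Nat.succ_le_of_lt h)
    have h1 := hi l i hl
    have h2 := lo k i hk
    simp only [Nat.succ_eq_add_one] at this
    omega

namespace XBlk

variable {p : ℝ} {b : ℕ → ℕ →₀ ℝ} {s : ℕ → ℕ}

lemma disj (h : XBlk p b s) (F : Finset ℕ) : Disj F b := disj_of_range h.mono h.lo h.hi F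

lemma blk (h : XBlk p b s) (hp : 0 < p) : Blk (fun k => pw p (b k)) s where
  mono := h.mono
  nonneg k := pw_nonneg hp _
  lo k i hi := h.lo k i ((pw_ne_zero hp).1 hi)
  hi k i hi := h.hi k i ((pw_ne_zero hp).1 hi)
  norm k := by rw [← NX_pow hp, h.norm, Real.one_rpow]

lemma pw_lc (h : XBlk p b s) (hp : 0 < p) (C : ℕ →₀ ℝ) :
    pw p (lc b C) = lc (fun k => pw p (b k)) (pw p C) := by
  rw [lc_eq, pw_sum hp (h.disj _), lc_eq]
  have : (pw p C).support = C.support := by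
    ext i; rw [Finsupp.mem_support_iff, Finsupp.mem_support_iff, pw_ne_zero hp]
  rw [this]
  exact Finset.sum_congr rfl fun k _ => by rw [pw_apply hp]

lemma ne_zero (h : XBlk p b s) (hp : 0 < p) (k : ℕ) : b k ≠ 0 := by
  intro h0
  have h1 := h.norm k
  have h2 := NX_smul hp 0 (b k)
  rw [zero_smul, ← h0, h1] at h2
  simp at h2

end XBlk

section Model

variable {p : ℝ} {X : Type*} [NormedAddCommGroup X] [NormedSpace ℝ X] {T : (ℕ →₀ ℝ) →ₗ[ℝ] X}

namespace Model

lemma norm_pow (M : Model p T) (a : ℕ →₀ ℝ) : ‖T a‖ ^ p = NZ (pw p a) := by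
  rw [M.norm, NX_pow M.p_pos]

lemma norm_sum_pow (M : Model p T) {ι : Type*} {F : Finset ι} {b : ι → ℕ →₀ ℝ} (h : Disj F b)
    (c : ι → ℝ) : ‖∑ k ∈ F, c k • T (b k)‖ ^ p = NZ (∑ k ∈ F, |c k| ^ p • pw p (b k)) := by
  rw [← pw_sum M.p_pos h, ← M.norm_pow]
  simp

/-- The upper `p`-estimate for disjoint vectors. -/
lemma upper (M : Model p T) {ι : Type*} {F : Finset ι} {b : ι → ℕ →₀ ℝ} (h : Disj F b)
    (c : ι → ℝ) : ‖∑ k ∈ F, c k • T (b k)‖ ^ p ≤ ∑ k ∈ F, |c k| ^ p * ‖T (b k)‖ ^ p := by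
  rw [M.norm_sum_pow h]
  refine (NZ_sum_le _ _).trans_eq (Finset.sum_congr rfl fun k _ => ?_)
  rw [NZ_smul (Real.rpow_nonneg (abs_nonneg _) _), M.norm_pow]

/-- Every normalized block sequence has a subsequence whose Schreier-admissible finite pieces
satisfy a lower `p`-estimate. -/
lemma lower (M : Model p T) {b : ℕ → ℕ →₀ ℝ} {s : ℕ → ℕ} (h : XBlk p b s) :
    ∃ φ : ℕ → ℕ, StrictMono φ ∧ ∀ F : Finset ℕ, (∀ k ∈ F, F.card ≤ k + 1) → ∀ c : ℕ → ℝ,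
      ∑ k ∈ F, |c k| ^ p ≤ 8 * ‖∑ k ∈ F, c k • T (b (φ k))‖ ^ p := by
  obtain ⟨φ, s', hφ, hs', hL⟩ := exists_lower (h.blk M.p_pos)
  refine ⟨φ, hφ, fun F hF c => ?_⟩
  have hd : Disj F (fun k => b (φ k)) := fun k _ l _ hkl i hi => by
    refine h.disj {φ k, φ l} (φ k) (by simp) (φ l) (by simp) (fun he => hkl (hφ.injective he)) i hi
  rw [M.norm_sum_pow hd]
  have := hL 1 le_rfl F (fun k => |c k| ^ p) (fun k => Real.rpow_nonneg (abs_nonneg _) _) (by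
    refine sch_one_of_card fun i hi => ?_
    obtain ⟨k, hk, rfl⟩ := Finset.mem_image.1 hi
    rw [Finset.card_image_of_injective _ hs'.mono.injective]
    exact (hF k hk).trans (by have := hs'.mono.le_apply (x := k); omega))
  simp only [Function.comp_def] at this
  rw [pow_one] at this
  linarith

end Model

end Model

end IW

namespace IW

/-! ### Reflexivity -/

/-- Successive vectors with a given property can be chosen when vectors with that property exist
arbitrarily far out. -/
lemma exists_blocks {Q : (ℕ →₀ ℝ) → Prop} (h : ∀ N, ∃ u : ℕ →₀ ℝ, (∀ i, u i ≠ 0 → N ≤ i) ∧ Q u) :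
    ∃ (u : ℕ → ℕ →₀ ℝ) (s : ℕ → ℕ), StrictMono s ∧ (∀ k i, u k i ≠ 0 → s k ≤ i) ∧
      (∀ k i, u k i ≠ 0 → i < s (k + 1)) ∧ ∀ k, Q (u k) := by
  choose g hg hQ using h
  let s : ℕ → ℕ := fun k => Nat.rec 0 (fun _ n => n + 1 + (g n).support.sup id) k
  have hs : ∀ k, s (k + 1) = s k + 1 + (g (s k)).support.sup id := fun k => rfl
  refine ⟨fun k => g (s k), s, strictMono_nat_of_lt_succ fun k => by rw [hs]; omega,
    fun k => hg _, fun k i hi => ?_, fun k => hQ _⟩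
  have : i ≤ (g (s k)).support.sup id := Finset.le_sup (f := id) (Finsupp.mem_support_iff.2 hi)
  rw [hs]; omega

section Model

variable {p : ℝ} {X : Type*} [NormedAddCommGroup X] [NormedSpace ℝ X] {T : (ℕ →₀ ℝ) →ₗ[ℝ] X}

namespace Model

/-- The basis is boundedly complete: a divergent series with bounded partial sums would produce
blocks contradicting the lower `p`-estimate. -/
lemma cauchySeq_of_bounded (M : Model p T) (a : ℕ → ℝ) (C : ℝ)
    (hC : ∀ B, ‖T (∑ i ∈ Finset.range B, Finsupp.single i (a i))‖ ≤ C) :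
    CauchySeq fun B => T (∑ i ∈ Finset.range B, Finsupp.single i (a i)) := by
  classical
  have hp := M.p_pos
  by_contra hnot
  rw [Metric.cauchySeq_iff'] at hnot
  push Not at hnot
  obtain ⟨ε, hε, hnot⟩ := hnot
  have hsum : ∀ B i, (∑ i ∈ Finset.range B, Finsupp.single i (a i) : ℕ →₀ ℝ) i =
      if i < B then a i else 0 := fun B i => by
    simp [Finsupp.finsetSum_apply, Finsupp.single_apply]
  obtain ⟨u, s, hs, lo, hi, hQ⟩ := exists_blocks
    (Q := fun u => ε ≤ ‖T u‖ ∧ ∀ i, u i = 0 ∨ u i = a i) fun N => by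
      obtain ⟨n, hn, h⟩ := hnot N
      refine ⟨∑ i ∈ Finset.range n, Finsupp.single i (a i) -
        ∑ i ∈ Finset.range N, Finsupp.single i (a i), fun i hi => ?_, ?_, fun i => ?_⟩
      · rw [Finsupp.sub_apply, hsum, hsum] at hi
        by_contra hlt
        have h1 : i < N := by omega
        have h2 : i < n := by omega
        simp [h1, h2] at hi
      · rw [map_sub, ← dist_eq_norm]; exact h
      · rw [Finsupp.sub_apply, hsum, hsum]
        split_ifs <;> first | omega | simp
  have hpos : ∀ k, 0 < ‖T (u k)‖ := fun k => hε.trans_le (hQ k).1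
  have hb : XBlk p (fun k => ‖T (u k)‖⁻¹ • u k) s := by
    refine ⟨hs, fun k i h => lo k i fun h0 => h ?_, fun k i h => hi k i fun h0 => h ?_, fun k => ?_⟩
    · simp [h0]
    · simp [h0]
    · rw [← M.norm, map_smul, norm_smul, norm_inv, norm_norm, inv_mul_cancel₀ (hpos k).ne']
  obtain ⟨φ, hφ, hL⟩ := M.lower hb
  have hC0 : 0 ≤ C := (norm_nonneg _).trans (hC 0)
  have key : ∀ n : ℕ, n * ε ^ p ≤ 8 * C ^ p := fun n => by
    have h1 := hL (Finset.Ico n (2 * n)) (fun k hk => by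
      rw [Nat.card_Ico]; have := (Finset.mem_Ico.1 hk).1; omega) (fun k => ‖T (u (φ k))‖)
    have h2 : ∑ k ∈ Finset.Ico n (2 * n), ‖T (u (φ k))‖ • T (‖T (u (φ k))‖⁻¹ • u (φ k)) =
        T (∑ k ∈ Finset.Ico n (2 * n), u (φ k)) := by
      rw [map_sum]
      refine Finset.sum_congr rfl fun k _ => ?_
      rw [map_smul, smul_smul, mul_inv_cancel₀ (hpos _).ne', one_smul]
    rw [h2] at h1
    have h3 : (n : ℝ) * ε ^ p ≤ ∑ k ∈ Finset.Ico n (2 * n), |‖T (u (φ k))‖| ^ p := by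
      have : ∑ k ∈ Finset.Ico n (2 * n), ε ^ p = n * ε ^ p := by
        rw [Finset.sum_const, Nat.card_Ico, nsmul_eq_mul]; congr 2; omega
      rw [← this]
      refine Finset.sum_le_sum fun k _ => Real.rpow_le_rpow hε.le ?_ hp.le
      rw [abs_norm]; exact (hQ _).1
    have h4 : ‖T (∑ k ∈ Finset.Ico n (2 * n), u (φ k))‖ ≤ C := by
      refine le_trans (M.norm_mono fun i => ?_) (hC (s (φ (2 * n))))
      rw [hsum, Finsupp.finsetSum_apply]
      by_cases hk : ∃ k ∈ Finset.Ico n (2 * n), u (φ k) i ≠ 0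
      · obtain ⟨k, hk, hki⟩ := hk
        have h0 : ∀ l ∈ Finset.Ico n (2 * n), l ≠ k → u (φ l) i = 0 := fun l _ hlk =>
          disj_of_range hs lo hi {φ k, φ l} (φ k) (by simp) (φ l) (by simp)
            (fun he => hlk (hφ.injective he.symm)) i hki
        rw [Finset.sum_eq_single_of_mem k hk h0, ((hQ (φ k)).2 i).resolve_left hki]
        have h5 : i < s (φ (2 * n)) := (hi _ i hki).trans_le
          (hs.monotone (hφ (Finset.mem_Ico.1 hk).2))
        rw [if_pos h5]
      · push Not at hk
        rw [Finset.sum_eq_zero hk, abs_zero]; exact abs_nonneg _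
    have h5 := Real.rpow_le_rpow (norm_nonneg _) h4 hp.le
    linarith
  obtain ⟨n, hn⟩ := exists_nat_gt (8 * C ^ p / ε ^ p)
  rw [div_lt_iff₀ (Real.rpow_pos_of_pos hε p)] at hn
  linarith [key n]

/-- The basis is shrinking: a functional that does not vanish in norm on tails would violate the
upper `p`-estimate, as `p > 1`. -/
lemma shrinking (M : Model p T) (g : X →L[ℝ] ℝ) {ε : ℝ} (hε : 0 < ε) :
    ∃ B, ∀ x, |g (x - pr T B x)| ≤ ε * ‖x‖ := by
  have hp := M.p_pos
  by_contra hnot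
  push Not at hnot
  obtain ⟨u, s, hs, lo, hi, hQ⟩ := exists_blocks
    (Q := fun u => ‖T u‖ = 1 ∧ ε < g (T u)) fun N => by
      obtain ⟨x, hx⟩ := hnot N
      have hx0 : 0 ≤ ‖x‖ := norm_nonneg x
      have hlim : Tendsto (fun B => |g (pr T B x - pr T N x)|) atTop (𝓝 |g (x - pr T N x)|) :=
        ((g.continuous.tendsto _).comp ((M.tendsto_pr x).sub_const _)).abs
      obtain ⟨B, hBx, hB⟩ := ((hlim.eventually_const_lt hx).and (eventually_ge_atTop N)).exists
      have hT : pr T B x - pr T N x = T (tr T B x - tr T N x) := by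
        rw [pr_apply, pr_apply, map_sub]
      have hle : ‖T (tr T B x - tr T N x)‖ ≤ ‖x‖ := hT ▸ M.norm_pr_sub_le x
      rw [hT] at hBx
      have hsupp : ∀ i, (tr T B x - tr T N x) i ≠ 0 → N ≤ i := fun i hi => by
        rw [Finsupp.sub_apply, tr_apply, tr_apply] at hi
        by_contra hlt
        have h1 : i < N := by omega
        have h2 : i < B := by omega
        simp [h1, h2] at hi
      generalize tr T B x - tr T N x = v at *
      have hlt : ε * ‖T v‖ < |g (T v)| := by nlinarith
      have hv : 0 < ‖T v‖ := by
        rcases (norm_nonneg (T v)).eq_or_lt with h | h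
        · rw [norm_eq_zero.1 h.symm] at hlt; simp at hlt
        · exact h
      have hc : ∃ c : ℝ, |c| = ‖T v‖⁻¹ ∧ c * g (T v) = ‖T v‖⁻¹ * |g (T v)| := by
        rcases le_total 0 (g (T v)) with h | h
        · exact ⟨‖T v‖⁻¹, abs_of_nonneg (by positivity), by rw [abs_of_nonneg h]⟩
        · exact ⟨-‖T v‖⁻¹, by rw [abs_neg, abs_of_nonneg (by positivity)],
            by rw [abs_of_nonpos h]; ring⟩
      obtain ⟨c, hc1, hc2⟩ := hc
      refine ⟨c • v, fun i hi => hsupp i fun h0 => hi (by simp [h0]), ?_, ?_⟩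
      · rw [map_smul, norm_smul, Real.norm_eq_abs, hc1, inv_mul_cancel₀ hv.ne']
      · rw [map_smul, map_smul, smul_eq_mul, hc2, inv_mul_eq_div, lt_div_iff₀ hv]; exact hlt
  have key : ∀ n : ℕ, n * ε ≤ ‖g‖ * (n : ℝ) ^ (1 / p) := fun n => by
    have h1 := M.upper (disj_of_range hs lo hi (Finset.range n)) (fun _ => 1)
    simp only [one_smul, abs_one, Real.one_rpow, (hQ _).1, mul_one, Finset.sum_const,
      Finset.card_range, nsmul_eq_mul] at h1
    have h2 : ‖∑ k ∈ Finset.range n, T (u k)‖ ≤ (n : ℝ) ^ (1 / p) := by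
      rw [← Real.rpow_le_rpow_iff (norm_nonneg _) (by positivity) hp, ← Real.rpow_mul (by positivity),
        one_div_mul_cancel hp.ne', Real.rpow_one]
      exact h1
    have h3 : n * ε ≤ g (∑ k ∈ Finset.range n, T (u k)) := by
      rw [map_sum]
      have : ∑ k ∈ Finset.range n, ε = n * ε := by simp
      rw [← this]
      exact Finset.sum_le_sum fun k _ => (hQ k).2.le
    have h4 := (le_abs_self _).trans (g.le_opNorm (∑ k ∈ Finset.range n, T (u k)))
    exact h3.trans (h4.trans (mul_le_mul_of_nonneg_left h2 (norm_nonneg _)))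
  have hexp : 0 < 1 - 1 / p := by
    rw [sub_pos, div_lt_one hp]; exact M.hp
  have htop := (tendsto_rpow_atTop hexp).comp tendsto_natCast_atTop_atTop
  obtain ⟨n, hn, hn1⟩ := ((htop.eventually_gt_atTop (‖g‖ / ε)).and (eventually_ge_atTop 1)).exists
  have hn0 : (0 : ℝ) < n := by exact_mod_cast hn1
  have h1 := key n
  simp only [Function.comp_apply] at hn
  rw [Real.rpow_sub hn0, Real.rpow_one, lt_div_iff₀ (by positivity), div_mul_eq_mul_div,
    div_lt_iff₀ hε] at hn
  linarith

/-- A bounded sequence whose coordinates tend to zero is weakly null. -/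
lemma weaklyNull (M : Model p T) {x : ℕ → X} {C : ℝ} (hx : ∀ n, ‖x n‖ ≤ C)
    (hc : ∀ i, Tendsto (fun n => cd T i (x n)) atTop (𝓝 0)) : WeaklyNull x := by
  intro g
  rw [Metric.tendsto_atTop]
  intro ε hε
  have hC : 0 < |C| + 1 := by positivity
  obtain ⟨B, hB⟩ := M.shrinking g (ε := ε / 2 / (|C| + 1)) (by positivity)
  have h1 : Tendsto (fun n => g (pr T B (x n))) atTop (𝓝 0) := by
    have : Tendsto (fun n => pr T B (x n)) atTop (𝓝 0) := by
      simp only [pr_eq_sum]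
      have := tendsto_finsetSum (Finset.range B) fun i _ =>
        (hc i).smul_const (T (Finsupp.single i 1))
      simpa using this
    have := (g.continuous.tendsto _).comp this
    simpa [Function.comp_def] using this
  rw [Metric.tendsto_atTop] at h1
  obtain ⟨N, hN⟩ := h1 (ε / 2) (half_pos hε)
  refine ⟨N, fun n hn => ?_⟩
  have h2 := hN n hn
  have h3 := hB (x n)
  rw [map_sub] at h3
  have h4 : ε / 2 / (|C| + 1) * ‖x n‖ ≤ ε / 2 := by
    rw [div_mul_eq_mul_div, div_le_iff₀ hC]
    exact mul_le_mul_of_nonneg_left (((hx n).trans (le_abs_self C)).trans (by linarith))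
      (by positivity)
  rw [Real.dist_0_eq_abs] at h2 ⊢
  have h5 : g (x n) = (g (x n) - g (pr T B (x n))) + g (pr T B (x n)) := by ring
  rw [h5]
  exact (abs_add_le _ _).trans_lt (by linarith)

/-- The coordinates of an element of the bidual define bounded partial sums; these converge by
`cauchySeq_of_bounded`, and the limit represents the given element by `shrinking`. -/
lemma reflexive [CompleteSpace X] (M : Model p T) :
    Function.Surjective (NormedSpace.inclusionInDoubleDual ℝ X) := by
  intro Φ
  let a : ℕ → ℝ := fun i => Φ (cd T i)
  have hcomp : ∀ (g : X →L[ℝ] ℝ) B, g.comp (pr T B) =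
      ∑ i ∈ Finset.range B, g (T (Finsupp.single i 1)) • cd T i := fun g B => by
    ext x
    simp only [ContinuousLinearMap.comp_apply, pr_eq_sum, map_sum, map_smul, FunLike.coe_sum,
      Finset.sum_apply, smul_apply, smul_eq_mul, mul_comm]
  have hga : ∀ (g : X →L[ℝ] ℝ) B, g (T (∑ i ∈ Finset.range B, Finsupp.single i (a i))) =
      Φ (g.comp (pr T B)) := fun g B => by
    rw [hcomp, map_sum, map_sum, map_sum]
    refine Finset.sum_congr rfl fun i _ => ?_
    have : (Finsupp.single i (a i) : ℕ →₀ ℝ) = a i • Finsupp.single i 1 := by simp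
    rw [this, map_smul, map_smul, map_smul, smul_eq_mul, smul_eq_mul, mul_comm]
  have hbd : ∀ B, ‖T (∑ i ∈ Finset.range B, Finsupp.single i (a i))‖ ≤ ‖Φ‖ := fun B => by
    obtain ⟨g, hg1, hg2⟩ := exists_dual_vector'' ℝ
      (T (∑ i ∈ Finset.range B, Finsupp.single i (a i)))
    rw [hga] at hg2
    have h1 : ‖g.comp (pr T B)‖ ≤ 1 := ContinuousLinearMap.opNorm_le_bound _ zero_le_one fun x => by
      have := g.le_opNorm (pr T B x)
      have h2 := M.norm_pr_le B x
      have h3 := norm_nonneg (pr T B x)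
      simp only [ContinuousLinearMap.comp_apply]
      nlinarith
    have h2 := (le_abs_self _).trans (Φ.le_opNorm (g.comp (pr T B)))
    have h3 : Φ (g.comp (pr T B)) = ‖T (∑ i ∈ Finset.range B, Finsupp.single i (a i))‖ := hg2
    nlinarith [norm_nonneg Φ]
  obtain ⟨x, hx⟩ := cauchySeq_tendsto_of_complete (M.cauchySeq_of_bounded a _ hbd)
  refine ⟨x, ?_⟩
  ext g
  rw [NormedSpace.dual_def]
  have h1 := (g.continuous.tendsto x).comp hx
  refine tendsto_nhds_unique h1 ?_
  simp only [Function.comp_def, hga]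
  have h2 : Tendsto (fun B => g.comp (pr T B)) atTop (𝓝 g) := by
    rw [Metric.tendsto_atTop]
    intro ε hε
    obtain ⟨B, hB⟩ := M.shrinking g (half_pos hε)
    refine ⟨B, fun B' hB' => ?_⟩
    rw [dist_comm, dist_eq_norm]
    refine (ContinuousLinearMap.opNorm_le_bound _ (half_pos hε).le fun x => ?_).trans_lt
      (half_lt_self hε)
    -- the tail `x - pr B' x` is its own tail beyond `B`
    have h3 : pr T B (x - pr T B' x) = 0 := by
      rw [pr_apply]
      convert T.map_zero
      ext i
      rw [tr_apply, map_sub, pr_apply, M.cd_T, tr_apply]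
      split_ifs <;> first | omega | simp
    have h4 := hB (x - pr T B' x)
    rw [h3, sub_zero] at h4
    have h5 := M.norm_sub_pr_le B' x
    simp only [sub_apply, ContinuousLinearMap.comp_apply, ← map_sub,
      Real.norm_eq_abs]
    exact h4.trans (mul_le_mul_of_nonneg_left h5 (half_pos hε).le)
  exact (Φ.continuous.tendsto g).comp h2

end Model

end Model

end IW

namespace IW

/-! ### Existence of spreading models -/

/-- Iterated limits of `h (S ∪ {n₁} ∪ ⋯ ∪ {n_k})`, as first `n_k`, then `n_{k-1}`, and so on, tend
to infinity along a fixed free ultrafilter. -/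
noncomputable def iterLim (U : Ultrafilter ℕ) (h : Finset ℕ → ℝ) : ℕ → Finset ℕ → ℝ
  | 0, S => h S
  | k + 1, S => limUnder (U : Filter ℕ) fun n => iterLim U h k (insert n S)

lemma tendsto_limUnder_of_bdd (U : Ultrafilter ℕ) {f : ℕ → ℝ} {C : ℝ} (hf : ∀ n, |f n| ≤ C) :
    Tendsto f U (𝓝 (limUnder (U : Filter ℕ) f)) ∧ |limUnder (U : Filter ℕ) f| ≤ C := by
  have hc : IsCompact (Set.Icc (-C) C) := isCompact_Icc
  obtain ⟨x, _, hx⟩ := hc.ultrafilter_le_nhds (U.map f) (by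
    rw [le_principal_iff]
    exact Filter.mem_map.2 (Filter.univ_mem' fun n => abs_le.1 (hf n)))
  have h1 : Tendsto f U (𝓝 x) := hx
  have h2 := tendsto_nhds_limUnder ⟨x, h1⟩
  exact ⟨h2, le_of_tendsto h2.abs (Eventually.of_forall hf)⟩

lemma iterLim_spec (U : Ultrafilter ℕ) {h : Finset ℕ → ℝ} {C : ℝ} (hh : ∀ S, |h S| ≤ C) (k : ℕ) :
    (∀ S, |iterLim U h k S| ≤ C) ∧
      ∀ S, Tendsto (fun n => iterLim U h k (insert n S)) U (𝓝 (iterLim U h (k + 1) S)) := by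
  induction k with
  | zero => exact ⟨hh, fun S => (tendsto_limUnder_of_bdd U fun n => hh _).1⟩
  | succ k ih =>
    have : ∀ S, |iterLim U h (k + 1) S| ≤ C := fun S => (tendsto_limUnder_of_bdd U fun n => ih.1 _).2
    exact ⟨this, fun S => (tendsto_limUnder_of_bdd U fun n => this _).1⟩

/-- A Ramsey-type stabilization: countably many bounded functions of finite sets of integers
converge, on sets of a fixed size, along a common subsequence. -/
theorem exists_stable (h : ℕ → Finset ℕ → ℝ) (hh : ∀ t, ∃ C, ∀ S, |h t S| ≤ C) :
    ∃ φ : ℕ → ℕ, StrictMono φ ∧ ∀ t m, ∃ L : ℝ, ∀ ε > 0, ∃ N, ∀ S : Finset ℕ, S.card = m →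
      (∀ n ∈ S, N ≤ n) → |h t (S.image φ) - L| < ε := by
  classical
  obtain ⟨U, hU⟩ := Ultrafilter.exists_le (atTop : Filter ℕ)
  choose C hC using hh
  have step : ∀ n M : ℕ, ∃ q, M < q ∧ ∀ t ≤ n, ∀ k ≤ n, ∀ S ⊆ Finset.range (M + 1),
      |iterLim U (h t) k (insert q S) - iterLim U (h t) (k + 1) S| < 1 / (n + 1) := by
    intro n M
    have h1 : ∀ᶠ q in (U : Filter ℕ), M < q := hU (eventually_gt_atTop M)
    have h2 : ∀ᶠ q in (U : Filter ℕ), ∀ t ∈ Finset.range (n + 1), ∀ k ∈ Finset.range (n + 1),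
        ∀ S ∈ (Finset.range (M + 1)).powerset,
        |iterLim U (h t) k (insert q S) - iterLim U (h t) (k + 1) S| < 1 / (n + 1) := by
      rw [eventually_all_finset]; intro t _
      rw [eventually_all_finset]; intro k _
      rw [eventually_all_finset]; intro S _
      have h3 := ((iterLim_spec U (hC t) k).2 S)
      have := (Metric.tendsto_nhds.1 h3) (1 / (n + 1)) (by positivity)
      simpa only [Real.dist_eq] using this
    obtain ⟨q, hq1, hq2⟩ := (h1.and h2).exists
    exact ⟨q, hq1, fun t ht k hk S hS => hq2 t (by simpa [Nat.lt_succ_iff] using ht) k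
      (by simpa [Nat.lt_succ_iff] using hk) S (Finset.mem_powerset.2 hS)⟩
  choose q hq1 hq2 using step
  let φ : ℕ → ℕ := fun n => Nat.rec 0 (fun n M => q (n + 1) M) n
  have hφs : ∀ n, φ (n + 1) = q (n + 1) (φ n) := fun n => rfl
  have hφ : StrictMono φ := strictMono_nat_of_lt_succ fun n => by rw [hφs]; exact hq1 _ _
  refine ⟨φ, hφ, fun t m => ⟨iterLim U (h t) m ∅, fun ε hε => ?_⟩⟩
  obtain ⟨N, hN⟩ := exists_nat_gt (m / ε)
  have key : ∀ S : Finset ℕ, (∀ n ∈ S, N + t + m + 1 ≤ n) → ∀ k, S.card + k = m →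
      |iterLim U (h t) k (S.image φ) - iterLim U (h t) m ∅| ≤ S.card * (1 / (N + 1)) := by
    intro S
    induction S using Finset.induction_on_max with
    | empty => intro _ k hk; simp at hk; simp [hk]
    | insert n S hmax ih =>
      intro hS k hk
      have hn : n ∉ S := fun hn => lt_irrefl _ (hmax n hn)
      rw [Finset.card_insert_of_notMem hn] at hk ⊢
      have h1 := ih (fun i hi => hS i (Finset.mem_insert_of_mem hi)) (k + 1) (by omega)
      have hnN := hS n (Finset.mem_insert_self _ _)
      obtain ⟨n', rfl⟩ : ∃ n', n = n' + 1 := ⟨n - 1, by omega⟩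
      have h2 := hq2 (n' + 1) (φ n') t (by omega) k (by omega) (S.image φ) (fun i hi => by
        obtain ⟨l, hl, rfl⟩ := Finset.mem_image.1 hi
        have : l ≤ n' := by have := hmax l hl; omega
        exact Finset.mem_range.2 (Nat.lt_succ_of_le (hφ.monotone this)))
      rw [← hφs] at h2
      rw [Finset.image_insert]
      have h3 : (1 : ℝ) / ((n' + 1 : ℕ) + 1) ≤ 1 / (N + 1) := by
        apply one_div_le_one_div_of_le (by positivity)
        have : (N : ℝ) ≤ (n' + 1 : ℕ) := by exact_mod_cast (by omega)
        linarith
      have h4 := abs_sub_le (iterLim U (h t) k (insert (φ (n' + 1)) (S.image φ)))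
        (iterLim U (h t) (k + 1) (S.image φ)) (iterLim U (h t) m ∅)
      push_cast at *
      linarith
  refine ⟨N + t + m + 1, fun S hS hSN => ?_⟩
  have h1 := key S hSN 0 (by omega)
  rw [hS] at h1
  refine lt_of_le_of_lt h1 ?_
  rw [mul_one_div, div_lt_iff₀ (by positivity)]
  rw [div_lt_iff₀ hε] at hN
  nlinarith

/-- Brunel–Sucheston: every normalized sequence has a subsequence generating a spreading model. -/
theorem exists_spreadingModel {X : Type*} [NormedAddCommGroup X] [NormedSpace ℝ X] {x : ℕ → X}
    (hx : Normalized x) : ∃ φ : ℕ → ℕ, StrictMono φ ∧ ∃ ν, GeneratesSpreadingModel (x ∘ φ) ν := by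
  classical
  obtain ⟨r, hr⟩ := exists_surjective_nat (Σ m : ℕ, Fin m → ℚ)
  let h : ℕ → Finset ℕ → ℝ := fun t S => if hS : S.card = (r t).1 then
    ‖∑ i, ((r t).2 i : ℝ) • x (S.orderEmbOfFin hS i)‖ else 0
  have hsum : ∀ {m : ℕ} (a : Fin m → ℝ) (j : Fin m → ℕ), ‖∑ i, a i • x (j i)‖ ≤ ∑ i, |a i| :=
    fun a j => (norm_sum_le _ _).trans_eq (Finset.sum_congr rfl fun i _ => by
      rw [norm_smul, hx, mul_one, Real.norm_eq_abs])
  obtain ⟨φ, hφ, hL⟩ := exists_stable h fun t => by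
    refine ⟨∑ i, |((r t).2 i : ℝ)|, fun S => ?_⟩
    by_cases hS : S.card = (r t).1
    · simp only [h, dif_pos hS, abs_norm]
      exact hsum _ _
    · simp only [h, dif_neg hS, abs_zero]
      positivity
  refine ⟨φ, hφ, ?_⟩
  have hrat : ∀ (m : ℕ) (a : Fin m → ℚ), ∃ L : ℝ, ∀ ε > 0, ∃ N : ℕ, ∀ j : Fin m → ℕ,
      StrictMono j → (∀ i, N ≤ j i) → |‖∑ i, (a i : ℝ) • x (φ (j i))‖ - L| < ε := by
    intro m a
    obtain ⟨t, ht⟩ := hr ⟨m, a⟩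
    obtain ⟨L, hL⟩ := hL t m
    refine ⟨L, fun ε hε => ?_⟩
    obtain ⟨N, hN⟩ := hL ε hε
    refine ⟨N, fun j hj hjN => ?_⟩
    have h1 := hN (Finset.univ.image j) (by
      rw [Finset.card_image_of_injective _ hj.injective, Finset.card_univ, Fintype.card_fin])
      (fun n hn => by obtain ⟨i, _, rfl⟩ := Finset.mem_image.1 hn; exact hjN i)
    have hcard : ((Finset.univ.image j).image φ).card = m := by
      rw [Finset.card_image_of_injective _ hφ.injective, Finset.card_image_of_injective _ hj.injective,
        Finset.card_univ, Fintype.card_fin]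
    have h2 : h t ((Finset.univ.image j).image φ) = ‖∑ i, (a i : ℝ) • x (φ (j i))‖ := by
      simp only [h]
      have : ∀ (b : Σ m : ℕ, Fin m → ℚ) (hb : b = ⟨m, a⟩),
          (if hS : ((Finset.univ.image j).image φ).card = b.1 then
            ‖∑ i, (b.2 i : ℝ) • x (((Finset.univ.image j).image φ).orderEmbOfFin hS i)‖ else 0) =
          ‖∑ i, (a i : ℝ) • x (φ (j i))‖ := by
        rintro b rfl
        rw [dif_pos hcard]
        have := Finset.orderEmbOfFin_unique hcard (f := fun i => φ (j i))
          (fun i => Finset.mem_image_of_mem _ (Finset.mem_image_of_mem _ (Finset.mem_univ i)))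
          (hφ.comp hj)
        rw [← this]
      exact this _ ht
    rwa [h2] at h1
  -- approximating real coefficients by rational ones
  have happ : ∀ (m : ℕ) (a : Fin m → ℝ), ∀ ε > (0 : ℝ), ∃ (L : ℝ) (N : ℕ), ∀ j : Fin m → ℕ,
      StrictMono j → (∀ i, N ≤ j i) → |‖∑ i, a i • x (φ (j i))‖ - L| < ε := by
    intro m a ε hε
    have hδ : 0 < ε / 2 / (m + 1) := by positivity
    choose a' ha' using fun i => exists_rat_near (a i) hδ
    obtain ⟨L, hL⟩ := hrat m a'
    obtain ⟨N, hN⟩ := hL (ε / 2) (half_pos hε)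
    refine ⟨L, N, fun j hj hjN => ?_⟩
    have h1 := hN j hj hjN
    have h2 : |‖∑ i, a i • x (φ (j i))‖ - ‖∑ i, (a' i : ℝ) • x (φ (j i))‖| ≤ ε / 2 := by
      refine (abs_norm_sub_norm_le _ _).trans ?_
      rw [← Finset.sum_sub_distrib]
      simp only [← sub_smul]
      refine (hsum (fun i => a i - a' i) (fun i => φ (j i))).trans ?_
      refine (Finset.sum_le_sum fun i _ => (ha' i).le).trans ?_
      rw [Finset.sum_const, Finset.card_univ, Fintype.card_fin, nsmul_eq_mul, ← mul_div_assoc,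
        div_le_iff₀ (by positivity)]
      nlinarith
    have := abs_sub_le ‖∑ i, a i • x (φ (j i))‖ ‖∑ i, (a' i : ℝ) • x (φ (j i))‖ L
    linarith
  have hex : ∀ (m : ℕ) (a : Fin m → ℝ), ∃ v : ℝ, ∀ ε > (0 : ℝ), ∃ N : ℕ, ∀ j : Fin m → ℕ,
      StrictMono j → (∀ i, N ≤ j i) → |‖∑ i, a i • x (φ (j i))‖ - v| < ε := by
    intro m a
    let c : ℕ → ℝ := fun n => ‖∑ i : Fin m, a i • x (φ (n + i))‖
    have hj : ∀ n, StrictMono fun i : Fin m => n + (i : ℕ) := fun n i i' hii => by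
      simpa using hii
    have hc : CauchySeq c := by
      rw [Metric.cauchySeq_iff']
      intro ε hε
      obtain ⟨L, N, hN⟩ := happ m a (ε / 2) (half_pos hε)
      refine ⟨N, fun n hn => ?_⟩
      have h1 := hN _ (hj n) (fun i => by omega)
      have h2 := hN _ (hj N) (fun i => by omega)
      rw [Real.dist_eq]
      rw [abs_sub_comm] at h2
      have := abs_sub_le (c n) L (c N)
      simp only [c] at *
      linarith
    obtain ⟨v, hv⟩ := cauchySeq_tendsto_of_complete hc
    refine ⟨v, fun ε hε => ?_⟩
    obtain ⟨L, N, hN⟩ := happ m a (ε / 3) (by positivity)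
    refine ⟨N, fun j hjm hjN => ?_⟩
    have h1 := hN j hjm hjN
    have h2 : |v - L| ≤ ε / 3 := by
      refine le_of_tendsto ((hv.sub_const L).abs) ?_
      filter_upwards [eventually_ge_atTop N] with n hn
      exact (hN _ (hj n) (fun i => by omega)).le
    have h3 := abs_sub_le ‖∑ i, a i • x (φ (j i))‖ L v
    rw [abs_sub_comm] at h2
    linarith
  choose ν hν using hex
  exact ⟨ν, hν⟩

end IW

namespace IW

/-! ### Spreading models of weakly null sequences -/

section Model

variable {p : ℝ} {X : Type*} [NormedAddCommGroup X] [NormedSpace ℝ X] {T : (ℕ →₀ ℝ) →ₗ[ℝ] X}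

namespace Model

/-- A term that is small before `B` is, after truncation and normalization, close to a block beyond
`B`. -/
lemma hump_step (M : Model p T) {x : ℕ → X} (hx : Normalized x)
    (hsmall : ∀ (B : ℕ) (δ : ℝ), 0 < δ → ∃ n ≥ B, ‖pr T B (x n)‖ ≤ δ) {η : ℝ} (hη : 0 < η) (B : ℕ) :
    ∃ (n B' : ℕ) (b : ℕ →₀ ℝ), B ≤ n ∧ n < B' ∧ (∀ i, b i ≠ 0 → B ≤ i) ∧ (∀ i, b i ≠ 0 → i < B') ∧
      NX p b = 1 ∧ ‖x n - T b‖ ≤ η := by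
  let δ := min η 1 / 4
  have hδ : 0 < δ := by positivity
  have hδ1 : 4 * δ ≤ 1 := by simp only [δ]; linarith [min_le_right η 1]
  have hδη : 4 * δ ≤ η := by simp only [δ]; linarith [min_le_left η 1]
  obtain ⟨n, hn, hnδ⟩ := hsmall B δ hδ
  obtain ⟨B', hB'δ, hB'⟩ := (((Metric.tendsto_nhds.1 (M.tendsto_pr (x n))) δ hδ).and
    (eventually_gt_atTop n)).exists
  rw [dist_comm, dist_eq_norm] at hB'δ
  set v := tr T B' (x n) - tr T B (x n) with hv
  have hTv : T v = pr T B' (x n) - pr T B (x n) := by rw [hv, map_sub, pr_apply, pr_apply]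
  have hvi : ∀ i, v i ≠ 0 → B ≤ i ∧ i < B' := fun i hi => by
    rw [hv, Finsupp.sub_apply, tr_apply, tr_apply] at hi
    constructor
    · by_contra h
      have h1 : i < B := by omega
      have h2 : i < B' := by omega
      simp [h1, h2] at hi
    · by_contra h
      have h1 : ¬ i < B := by omega
      simp [h1, h] at hi
  have h1 : ‖x n - T v‖ ≤ 2 * δ := by
    have : x n - T v = (x n - pr T B' (x n)) + pr T B (x n) := by rw [hTv]; abel
    rw [this]
    exact (norm_add_le _ _).trans (by linarith)
  have h2 : |‖T v‖ - 1| ≤ 2 * δ := by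
    have := abs_norm_sub_norm_le (x n) (T v)
    rw [hx n, abs_sub_comm] at this
    exact this.trans h1
  have hpos : 0 < ‖T v‖ := by have := (abs_le.1 h2).1; linarith
  refine ⟨n, B', ‖T v‖⁻¹ • v, hn, hB', fun i hi => (hvi i fun h => hi (by simp [h])).1,
    fun i hi => (hvi i fun h => hi (by simp [h])).2, ?_, ?_⟩
  · rw [← M.norm, map_smul, norm_smul, norm_inv, norm_norm, inv_mul_cancel₀ hpos.ne']
  · have h3 : ‖T v - T (‖T v‖⁻¹ • v)‖ = |‖T v‖ - 1| := by
      have : T v - T (‖T v‖⁻¹ • v) = (1 - ‖T v‖⁻¹) • T v := by rw [map_smul, sub_smul, one_smul]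
      rw [this, norm_smul, Real.norm_eq_abs, ← abs_of_pos hpos, ← abs_mul, abs_of_pos hpos, sub_mul,
        inv_mul_cancel₀ hpos.ne', one_mul]
    have : x n - T (‖T v‖⁻¹ • v) = (x n - T v) + (T v - T (‖T v‖⁻¹ • v)) := by abel
    rw [this]
    exact (norm_add_le _ _).trans (by rw [h3]; linarith)

/-- Gliding hump: a normalized sequence with terms that are small on arbitrarily long initial
segments has a subsequence that is a small perturbation of a normalized block sequence. -/
lemma hump (M : Model p T) {x : ℕ → X} (hx : Normalized x)
    (hsmall : ∀ (B : ℕ) (δ : ℝ), 0 < δ → ∃ n ≥ B, ‖pr T B (x n)‖ ≤ δ) {η : ℕ → ℝ}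
    (hη : ∀ k, 0 < η k) :
    ∃ ψ : ℕ → ℕ, StrictMono ψ ∧ ∃ b s, XBlk p b s ∧ ∀ k, ‖x (ψ k) - T (b k)‖ ≤ η k := by
  choose n B' b h1 h2 h3 h4 h5 h6 using fun k B => M.hump_step hx hsmall (hη k) B
  let s : ℕ → ℕ := fun k => Nat.rec 0 (fun k B => B' k B) k
  have hs : ∀ k, s (k + 1) = B' k (s k) := fun k => rfl
  refine ⟨fun k => n k (s k), strictMono_nat_of_lt_succ fun k => ?_, fun k => b k (s k), s,
    ⟨strictMono_nat_of_lt_succ fun k => ?_, fun k => h3 _ _, fun k => h4 _ _, fun k => h5 _ _⟩,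
    fun k => h6 _ _⟩
  · have := h2 k (s k)
    rw [← hs] at this
    exact this.trans_le (h1 _ _)
  · rw [hs]; exact (h1 _ _).trans_lt (h2 _ _)

/-- A weakly null sequence is, on a subsequence, a perturbation of a normalized block sequence, and the
upper and lower `p`-estimates of the latter pass to its spreading model. The lower constant is
`(1/8)^{1/p} ≥ 1/8`. -/
theorem spreading (M : Model p T) {x : ℕ → X} (hx : Normalized x) (hw : WeaklyNull x) :
    ∃ φ : ℕ → ℕ, StrictMono φ ∧
      ∃ ν, GeneratesSpreadingModel (x ∘ φ) ν ∧ NormFamEquiv 8 (lpNormFin p) ν := by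
  classical
  have hp := M.p_pos
  obtain ⟨ψ, hψ, b, s, hb, hxb⟩ := M.hump hx (η := fun k => 1 / ((k : ℝ) + 1)) (fun B δ hδ => by
      have h1 : Tendsto (fun n => pr T B (x n)) atTop (𝓝 0) := by
        simp only [pr_eq_sum]
        have := tendsto_finsetSum (Finset.range B) fun i _ =>
          (hw (cd T i)).smul_const (T (Finsupp.single i 1))
        simpa using this
      obtain ⟨n, hn, hnB⟩ := (((Metric.tendsto_nhds.1 h1) δ hδ).and (eventually_ge_atTop B)).exists
      rw [dist_zero_right] at hn
      exact ⟨n, hnB, hn.le⟩) (fun k => by positivity)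
  obtain ⟨φ₁, hφ₁, hL⟩ := M.lower hb
  obtain ⟨φ₂, hφ₂, ν, hν⟩ := exists_spreadingModel (x := fun k => T (b (φ₁ k)))
    (fun k => by rw [M.norm, hb.norm])
  refine ⟨ψ ∘ φ₁ ∘ φ₂, hψ.comp (hφ₁.comp hφ₂), ν, fun m a ε hε => ?_, ?_⟩
  · obtain ⟨N₁, hN₁⟩ := hν m a (ε / 2) (half_pos hε)
    obtain ⟨N₂, hN₂⟩ := exists_nat_gt ((∑ i, |a i|) / (ε / 2))
    refine ⟨max N₁ N₂, fun j hj hjN => ?_⟩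
    have h1 := hN₁ j hj fun i => (le_max_left _ _).trans (hjN i)
    have h2 : |‖∑ i, a i • (x ∘ ψ ∘ φ₁ ∘ φ₂) (j i)‖ -
        ‖∑ i, a i • ((fun k => T (b (φ₁ k))) ∘ φ₂) (j i)‖| ≤ ε / 2 := by
      refine (abs_norm_sub_norm_le _ _).trans ?_
      rw [← Finset.sum_sub_distrib]
      simp only [← smul_sub]
      refine (norm_sum_le _ _).trans ?_
      have h3 : ∀ i ∈ Finset.univ, ‖a i • ((x ∘ ψ ∘ φ₁ ∘ φ₂) (j i) -
          ((fun k => T (b (φ₁ k))) ∘ φ₂) (j i))‖ ≤ |a i| * (1 / ((N₂ : ℝ) + 1)) := fun i _ => by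
        rw [norm_smul, Real.norm_eq_abs]
        refine mul_le_mul_of_nonneg_left ((hxb _).trans ?_) (abs_nonneg _)
        apply one_div_le_one_div_of_le (by positivity)
        have : N₂ ≤ φ₁ (φ₂ (j i)) := ((le_max_right _ _).trans (hjN i)).trans
          (hφ₂.le_apply.trans hφ₁.le_apply)
        have : (N₂ : ℝ) ≤ φ₁ (φ₂ (j i)) := by exact_mod_cast this
        simp only [Function.comp_apply]; linarith
      refine (Finset.sum_le_sum h3).trans ?_
      rw [← Finset.sum_mul, mul_one_div, div_le_iff₀ (by positivity)]
      rw [div_lt_iff₀ (half_pos hε)] at hN₂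
      nlinarith
    have h3 := abs_sub_le ‖∑ i, a i • (x ∘ ψ ∘ φ₁ ∘ φ₂) (j i)‖
      ‖∑ i, a i • ((fun k => T (b (φ₁ k))) ∘ φ₂) (j i)‖ (ν m a)
    exact lt_of_le_of_lt h3 (by linarith)
  · have key : ∀ (m : ℕ) (a : Fin m → ℝ), ∃ N, ∀ j : Fin m → ℕ, StrictMono j → (∀ i, N ≤ j i) →
        1 / 8 * lpNormFin p m a ≤ ‖∑ i, a i • T (b (φ₁ (φ₂ (j i))))‖ ∧
        ‖∑ i, a i • T (b (φ₁ (φ₂ (j i))))‖ ≤ lpNormFin p m a := by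
      intro m a
      refine ⟨m, fun j hj hjm => ?_⟩
      have hinj : Function.Injective fun i => φ₂ (j i) := (hφ₂.comp hj).injective
      have hinj' : Function.Injective fun i => φ₁ (φ₂ (j i)) := (hφ₁.comp (hφ₂.comp hj)).injective
      set v := ‖∑ i, a i • T (b (φ₁ (φ₂ (j i))))‖ with hv
      have hv0 : 0 ≤ v := norm_nonneg _
      have hS : 0 ≤ ∑ i, |a i| ^ p := Finset.sum_nonneg fun i _ => Real.rpow_nonneg (abs_nonneg _) _
      have hlow : ∑ i, |a i| ^ p ≤ 8 * v ^ p := by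
        have h1 := hL (Finset.univ.image fun i => φ₂ (j i)) (fun k hk => by
          obtain ⟨i, _, rfl⟩ := Finset.mem_image.1 hk
          rw [Finset.card_image_of_injective _ hinj, Finset.card_univ, Fintype.card_fin]
          have := hφ₂.le_apply (x := j i)
          have := hjm i
          omega) (Function.extend (fun i => φ₂ (j i)) a 0)
        rw [Finset.sum_image fun _ _ _ _ h => hinj h, Finset.sum_image fun _ _ _ _ h => hinj h] at h1
        simp only [hinj.extend_apply] at h1
        exact h1
      have hup : v ^ p ≤ ∑ i, |a i| ^ p := by
        have h1 := M.upper (F := Finset.univ) (b := fun i => b (φ₁ (φ₂ (j i))))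
          (fun k _ l _ hkl i hi => hb.disj {φ₁ (φ₂ (j k)), φ₁ (φ₂ (j l))} _ (by simp) _ (by simp)
            (fun he => hkl (hinj' he)) i hi) a
        simpa only [M.norm, hb.norm, Real.one_rpow, mul_one, ← hv] using h1
      have hroot : (v ^ p) ^ (1 / p) = v := by
        rw [← Real.rpow_mul hv0, mul_one_div_cancel hp.ne', Real.rpow_one]
      constructor
      · have h1 := Real.rpow_le_rpow hS hlow (by positivity : 0 ≤ 1 / p)
        rw [Real.mul_rpow (by norm_num) (Real.rpow_nonneg hv0 _), hroot] at h1
        have h2 : (8 : ℝ) ^ (1 / p) ≤ 8 := by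
          have : (8 : ℝ) ^ (1 / p) ≤ 8 ^ (1 : ℝ) :=
            Real.rpow_le_rpow_of_exponent_le (by norm_num) (by
              rw [div_le_one hp]; exact M.hp.le)
          simpa using this
        have h3 : lpNormFin p m a ≤ 8 * v := h1.trans (mul_le_mul_of_nonneg_right h2 hv0)
        linarith
      · have h1 := Real.rpow_le_rpow (Real.rpow_nonneg hv0 _) hup (by positivity : 0 ≤ 1 / p)
        rwa [hroot] at h1
    refine ⟨8, 1, by norm_num, by norm_num, by norm_num, fun m a => ?_⟩
    obtain ⟨N₁, hN₁⟩ := key m a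
    have happ : ∀ ε > 0, 1 / 8 * lpNormFin p m a ≤ ν m a + ε ∧ ν m a ≤ 1 * lpNormFin p m a + ε := by
      intro ε hε
      obtain ⟨N₂, hN₂⟩ := hν m a ε hε
      have hj : StrictMono fun i : Fin m => N₁ + N₂ + (i : ℕ) := fun i i' hii => by simpa using hii
      have h1 := hN₁ _ hj fun i => by omega
      have h2 := abs_lt.1 (hN₂ _ hj fun i => by omega)
      simp only [Function.comp_apply] at h2
      constructor <;> linarith [h1.1, h1.2, h2.1, h2.2]
    exact ⟨le_of_forall_pos_le_add fun ε hε => (happ ε hε).1,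
      le_of_forall_pos_le_add fun ε hε => (happ ε hε).2⟩

end Model

end Model

end IW

namespace IW

/-! ### Asymptotic models -/

lemma pw_pw {p : ℝ} (hp : 0 < p) {a : ℕ →₀ ℝ} (ha : 0 ≤ a) : pw p (pw (1 / p) a) = a := by
  ext i
  have h := ha i
  rw [Finsupp.zero_apply] at h
  rw [pw_apply hp, pw_apply (by positivity), abs_of_nonneg h,
    abs_of_nonneg (Real.rpow_nonneg h _), ← Real.rpow_mul h, one_div_mul_cancel hp.ne',
    Real.rpow_one]

lemma Blk.le_NZ_lc {z : ℕ → ℕ →₀ ℝ} {s : ℕ → ℕ} (hz : Blk z s) {C : ℕ →₀ ℝ} (hC : 0 ≤ C) (k : ℕ) :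
    C k ≤ NZ (lc z C) := by
  have hCk : 0 ≤ C k := hC k
  by_cases hk : k ∈ C.support
  · have h1 : C k • z k ≤ lc z C := by
      rw [lc_eq]
      refine Finset.single_le_sum (f := fun k => C k • z k) (fun l _ => ?_) hk
      exact smul_nonneg (hC l) (hz.nonneg l)
    have h2 := NZ_mono h1
    rwa [NZ_smul hCk, hz.norm, mul_one] at h2
  · rw [Finsupp.notMem_support_iff.1 hk]; exact NZ_nonneg _

section Model

variable {p : ℝ} {X : Type*} [NormedAddCommGroup X] [NormedSpace ℝ X] {T : (ℕ →₀ ℝ) →ₗ[ℝ] X}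

namespace Model

/-- An infinite dimensional subspace contains unit vectors vanishing on any prescribed initial
segment. -/
lemma exists_unit (Y : Submodule ℝ X) (hY : ¬ FiniteDimensional ℝ Y) (n : ℕ) :
    ∃ y ∈ Y, ‖y‖ = 1 ∧ pr T n y = 0 := by
  let L : Y →ₗ[ℝ] (Fin n → ℝ) := LinearMap.pi fun i => (cd T i).toLinearMap.comp Y.subtype
  have hL : LinearMap.ker L ≠ ⊥ := fun h =>
    hY (FiniteDimensional.of_injective L (LinearMap.ker_eq_bot.1 h))
  obtain ⟨y, hy, hy0⟩ := Submodule.exists_mem_ne_zero_of_ne_bot hL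
  have hy0' : (y : X) ≠ 0 := fun h => hy0 (Subtype.ext h)
  refine ⟨‖(y : X)‖⁻¹ • y, Y.smul_mem _ y.2, ?_, ?_⟩
  · rw [norm_smul, norm_inv, norm_norm, inv_mul_cancel₀ (norm_ne_zero_iff.2 hy0')]
  · rw [map_smul, pr_eq_sum, Finset.sum_eq_zero, smul_zero]
    intro i hi
    have := congrFun (LinearMap.mem_ker.1 hy) ⟨i, Finset.mem_range.1 hi⟩
    have h1 : cd T i (y : X) = 0 := this
    rw [h1, zero_smul]

/-- Norms of combinations of a block sequence in `X` are computed by `NZ` after taking `p`-th powers. -/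
lemma norm_lc_pow (M : Model p T) {b : ℕ → ℕ →₀ ℝ} {s : ℕ → ℕ} (hb : XBlk p b s) (C : ℕ →₀ ℝ) :
    ‖T (lc b C)‖ ^ p = NZ (lc (fun k => pw p (b k)) (pw p C)) := by
  rw [M.norm_pow, hb.pw_lc M.p_pos]

lemma geom_tail (S : Finset ℕ) (j : ℕ) (hS : ∀ k ∈ S, j ≤ k) :
    ∑ k ∈ S, (1 / 2 : ℝ) ^ (k + 2) ≤ (1 / 2) ^ (j + 1) := by
  have h1 : ∀ n, ∑ k ∈ Finset.Ico j (j + n), (1 / 2 : ℝ) ^ (k + 2) ≤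
      (1 / 2) ^ (j + 1) - (1 / 2) ^ (j + n + 1) := by
    intro n
    induction n with
    | zero => simp
    | succ n ih =>
      rw [← add_assoc, Finset.sum_Ico_succ_top (by omega)]
      have : (1 / 2 : ℝ) ^ (j + n + 1) = 2 * (1 / 2) ^ (j + n + 2) := by ring
      have h2 : (1 / 2 : ℝ) ^ (j + n + 1 + 1) = (1 / 2) ^ (j + n + 2) := by ring
      rw [h2]; linarith
  refine le_trans (Finset.sum_le_sum_of_subset_of_nonneg
    (t := Finset.Ico j (j + (S.sup id + 1))) (fun k hk => ?_) (fun _ _ _ => by positivity))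
    ((h1 _).trans (sub_le_self _ (by positivity)))
  have : k ≤ S.sup id := Finset.le_sup (f := id) hk
  exact Finset.mem_Ico.2 ⟨hS k hk, by omega⟩

/-- Replacing blocks by vectors at geometrically decreasing distance changes combinations supported
far out only slightly. -/
lemma perturb {b : ℕ → ℕ →₀ ℝ} {y : ℕ → X}
    (hy : ∀ k, ‖y k - T (b k)‖ ≤ (1 / 2) ^ (k + 2)) {C : ℕ →₀ ℝ} (hC : ∀ k, |C k| ≤ 1) {j : ℕ}
    (hj : ∀ k ∈ C.support, j ≤ k) :
    ‖Finsupp.linearCombination ℝ y C - T (lc b C)‖ ≤ (1 / 2) ^ (j + 1) := by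
  have h1 : Finsupp.linearCombination ℝ y C - T (lc b C) =
      ∑ k ∈ C.support, C k • (y k - T (b k)) := by
    rw [Finsupp.linearCombination_apply, Finsupp.sum, lc_eq, map_sum, ← Finset.sum_sub_distrib]
    exact Finset.sum_congr rfl fun k _ => by rw [map_smul, smul_sub]
  rw [h1]
  refine (norm_sum_le _ _).trans ((Finset.sum_le_sum fun k _ => ?_).trans (geom_tail _ j hj))
  rw [norm_smul, Real.norm_eq_abs]
  exact (mul_le_mul (hC k) (hy k) (norm_nonneg _) zero_le_one).trans_eq (one_mul _)

lemma norm_normalize_sub {v w : X} {δ : ℝ} (hw : ‖w‖ = 1) (h : ‖v - w‖ ≤ δ) (hv : v ≠ 0) :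
    ‖‖v‖⁻¹ • v - w‖ ≤ 2 * δ := by
  have hpos : 0 < ‖v‖ := norm_pos_iff.2 hv
  have h1 : ‖v - ‖v‖⁻¹ • v‖ = |‖v‖ - 1| := by
    have : v - ‖v‖⁻¹ • v = (1 - ‖v‖⁻¹) • v := by rw [sub_smul, one_smul]
    rw [this, norm_smul, Real.norm_eq_abs, ← abs_of_pos hpos, ← abs_mul, abs_of_pos hpos, sub_mul,
      inv_mul_cancel₀ hpos.ne', one_mul]
  have h2 := abs_norm_sub_norm_le v w
  rw [hw] at h2
  have h3 : ‖v‖⁻¹ • v - w = (v - w) - (v - ‖v‖⁻¹ • v) := by abel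
  rw [h3]
  exact (norm_sub_le _ _).trans (by rw [h1]; linarith)

/-- A sequence in `Y` close to a normalized block sequence is combined with the coefficients of
`exists_c0_array`, taken to the power `1/p`; the resulting vectors of `Y` are normalized again. -/
theorem asymptotic (M : Model p T) (Y : Submodule ℝ X) (hY : ¬ FiniteDimensional ℝ Y) :
    ∃ A : ℕ → ℕ → X, (∀ i j, A i j ∈ Y) ∧ (∀ i, Normalized (A i) ∧ WeaklyNull (A i)) ∧
      GeneratesAsymptoticModel A supNorm := by
  classical
  have hp := M.p_pos
  choose x hxY hx hx0 using exists_unit (T := T) Y hY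
  obtain ⟨ψ, hψ, b, s, hb, hxb⟩ := M.hump hx (η := fun k => (1 / 2) ^ (k + 2))
    (fun B δ hδ => ⟨B, le_rfl, by rw [hx0, norm_zero]; exact hδ.le⟩) (fun k => by positivity)
  obtain ⟨Γ, hΓ0, hΓs, hΓ1, hΓ⟩ := exists_c0_array (hb.blk hp)
  let C : ℕ → ℕ → ℕ →₀ ℝ := fun i j => pw (1 / p) (Γ i j)
  have hpC : ∀ i j, pw p (C i j) = Γ i j := fun i j => pw_pw hp (hΓ0 i j)
  have hCne : ∀ i j k, C i j k ≠ 0 ↔ Γ i j k ≠ 0 := fun i j k => pw_ne_zero (by positivity)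
  have hC1 : ∀ i j k, |C i j k| ≤ 1 := fun i j k => by
    have h1 : |C i j k| ^ p ≤ 1 ^ p := by
      rw [← pw_apply hp, hpC, Real.one_rpow]
      exact ((hb.blk hp).le_NZ_lc (hΓ0 i j) k).trans_eq (hΓ1 i j)
    exact (Real.rpow_le_rpow_iff (abs_nonneg _) zero_le_one hp).1 h1
  have hCs : ∀ i j, ∀ k ∈ (C i j).support, j ≤ k := fun i j k hk =>
    hΓs i j k (Finsupp.mem_support_iff.2 ((hCne i j k).1 (Finsupp.mem_support_iff.1 hk)))
  let W : ℕ → ℕ → X := fun i j => T (lc b (C i j))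
  have hW : ∀ i j, ‖W i j‖ = 1 := fun i j => by
    have h1 := M.norm_lc_pow hb (C i j)
    rw [hpC, hΓ1] at h1
    have h2 : ‖W i j‖ ^ p = 1 ^ p := by rw [Real.one_rpow]; exact h1
    exact (Real.rpow_left_inj (norm_nonneg _) zero_le_one hp.ne').1 h2
  let V : ℕ → ℕ → X := fun i j => Finsupp.linearCombination ℝ (fun k => x (ψ k)) (C i j)
  have hVW : ∀ i j, ‖V i j - W i j‖ ≤ (1 / 2) ^ (j + 1) := fun i j =>
    perturb hxb (hC1 i j) (hCs i j)
  have hV0 : ∀ i j, V i j ≠ 0 := fun i j h0 => by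
    have h1 := hVW i j
    rw [h0, zero_sub, norm_neg, hW] at h1
    have h2 : (1 / 2 : ℝ) ^ (j + 1) ≤ 1 / 2 :=
      (pow_le_pow_of_le_one (by norm_num) (by norm_num) (by omega)).trans_eq (pow_one _)
    linarith
  let A : ℕ → ℕ → X := fun i j => ‖V i j‖⁻¹ • V i j
  have hA1 : ∀ i j, ‖A i j‖ = 1 := fun i j => by
    simp only [A]
    rw [norm_smul, norm_inv, norm_norm, inv_mul_cancel₀ (norm_ne_zero_iff.2 (hV0 i j))]
  have hAW : ∀ i j, ‖A i j - W i j‖ ≤ (1 / 2) ^ j := fun i j => by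
    refine (norm_normalize_sub (hW i j) (hVW i j) (hV0 i j)).trans_eq ?_
    ring
  have hpow : Tendsto (fun j : ℕ => (1 / 2 : ℝ) ^ j) atTop (𝓝 0) :=
    tendsto_pow_atTop_nhds_zero_of_lt_one (by norm_num) (by norm_num)
  refine ⟨A, fun i j => Y.smul_mem _ ?_, fun i => ⟨hA1 i, ?_⟩, ?_⟩
  · simp only [V, Finsupp.linearCombination_apply, Finsupp.sum]
    exact Y.sum_mem fun k _ => Y.smul_mem _ (hxY _)
  · refine M.weaklyNull (C := 1) (fun j => (hA1 i j).le) fun t => ?_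
    have h1 : Tendsto (fun j => A i j - W i j) atTop (𝓝 0) :=
      squeeze_zero_norm (hAW i) hpow
    have h2 := ((cd T t).continuous.tendsto _).comp h1
    rw [map_zero] at h2
    refine h2.congr' ?_
    filter_upwards [eventually_gt_atTop t] with j hj
    have h3 : cd T t (W i j) = 0 := by
      simp only [W]
      rw [M.cd_T]
      by_contra hne
      obtain ⟨k, hk, hkt⟩ := lc_ne_zero hne
      have h4 := hb.lo k t hkt
      have h5 := hCs i j k hk
      have h6 := hb.mono.le_apply (x := k)
      omega
    simp [h3]
  · -- norms of combinations of the exact vectors `W`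
    have key : ∀ (l : ℕ) (ε : ℝ), 0 < ε → ∃ N, ∀ j : ℕ → ℕ,
        (∀ i i', i < i' → i' < l → j i < j i') → (∀ i < l, N ≤ j i) → ∀ (a : ℕ → ℝ) (S : ℝ),
        (∀ i < l, |a i| ≤ S) → (∀ i < l, |a i| ≤ ‖∑ i ∈ Finset.range l, a i • W i (j i)‖) ∧
          (0 ≤ S → ‖∑ i ∈ Finset.range l, a i • W i (j i)‖ ≤ (1 + ε) * S) := by
      intro l ε hε
      obtain ⟨N, hN⟩ := hΓ l ε hε
      refine ⟨N, fun j hj hjN a S hS => ?_⟩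
      obtain ⟨hsep, hup⟩ := hN j hj hjN
      have hd : Disj (Finset.range l) fun i => C i (j i) := by
        intro i hi i' hi' hne t ht
        by_contra ht'
        have h1 := Finsupp.mem_support_iff.2 ((hCne _ _ _).1 ht)
        have h2 := Finsupp.mem_support_iff.2 ((hCne _ _ _).1 ht')
        rcases lt_or_gt_of_ne hne with h | h
        · exact lt_irrefl _ (hsep i i' h (Finset.mem_range.1 hi') t h1 t h2)
        · exact lt_irrefl _ (hsep i' i h (Finset.mem_range.1 hi) t h2 t h1)
      have hsum : ∑ i ∈ Finset.range l, a i • W i (j i) =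
          T (lc b (∑ i ∈ Finset.range l, a i • C i (j i))) := by
        simp [W, map_sum]
      have hnorm : ‖∑ i ∈ Finset.range l, a i • W i (j i)‖ ^ p =
          NZ (lc (fun k => pw p (b k)) (∑ i ∈ Finset.range l, |a i| ^ p • Γ i (j i))) := by
        rw [hsum, M.norm_lc_pow hb, pw_sum hp hd]
        simp only [hpC]
      have hap : ∀ i, 0 ≤ |a i| ^ p := fun i => Real.rpow_nonneg (abs_nonneg _) _
      refine ⟨fun i hi => ?_, fun hS0 => ?_⟩
      · rw [← Real.rpow_le_rpow_iff (abs_nonneg _) (norm_nonneg _) hp, hnorm]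
        have h1 : |a i| ^ p • lc (fun k => pw p (b k)) (Γ i (j i)) ≤
            lc (fun k => pw p (b k)) (∑ i ∈ Finset.range l, |a i| ^ p • Γ i (j i)) := by
          rw [map_sum]
          simp only [map_smul]
          exact Finset.single_le_sum
            (f := fun i => |a i| ^ p • lc (fun k => pw p (b k)) (Γ i (j i)))
            (fun i _ => smul_nonneg (hap i) (lc_nonneg (fun k => pw_nonneg hp _) (hΓ0 _ _)))
            (Finset.mem_range.2 hi)
        have h2 := NZ_mono h1
        rwa [NZ_smul (hap i), hΓ1, mul_one] at h2
      · have hSp : 0 ≤ S ^ p := Real.rpow_nonneg hS0 _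
        rcases hS0.eq_or_lt with h0 | hSpos
        · have : ∀ i ∈ Finset.range l, a i • W i (j i) = 0 := fun i hi => by
            have := hS i (Finset.mem_range.1 hi)
            rw [← h0] at this
            rw [abs_nonpos_iff.1 this, zero_smul]
          rw [Finset.sum_eq_zero this, norm_zero]
          positivity
        · have hSp' : 0 < S ^ p := Real.rpow_pos_of_pos hSpos _
          have h1 := hup (fun i => if i < l then |a i| ^ p / S ^ p else 0)
            (fun i => by split_ifs; exacts [div_nonneg (hap i) hSp, le_rfl])
            (fun i => by
              split_ifs with hi
              · rw [div_le_one hSp']; exact Real.rpow_le_rpow (abs_nonneg _) (hS i hi) hp.le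
              · exact zero_le_one)
          have h2 : ∑ i ∈ Finset.range l, |a i| ^ p • Γ i (j i) = S ^ p •
              ∑ i ∈ Finset.range l, (if i < l then |a i| ^ p / S ^ p else 0) • Γ i (j i) := by
            rw [Finset.smul_sum]
            refine Finset.sum_congr rfl fun i hi => ?_
            rw [if_pos (Finset.mem_range.1 hi), smul_smul, mul_div_cancel₀ _ hSp'.ne']
          rw [← Real.rpow_le_rpow_iff (norm_nonneg _) (by positivity) hp, hnorm, h2, map_smul,
            NZ_smul hSp, Real.mul_rpow (by positivity) hS0, mul_comm]
          refine mul_le_mul_of_nonneg_right (h1.trans ?_) hSp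
          exact Real.self_le_rpow_of_one_le (by linarith) M.hp.le
    intro l a ε hε
    have hsup : ∀ i, |a i| ≤ supNorm l a := fun i =>
      le_ciSup (f := fun i => |a i|) (Set.finite_range _).bddAbove i
    have hsup0 : 0 ≤ supNorm l a := Real.iSup_nonneg fun i => abs_nonneg _
    set S := supNorm l a with hSdef
    obtain ⟨N₁, hN₁⟩ := key l (ε / 2 / (S + 1)) (by positivity)
    have hsa : 0 ≤ ∑ i, |a i| := Finset.sum_nonneg fun _ _ => abs_nonneg _
    obtain ⟨N₂, hN₂⟩ := exists_pow_lt_of_lt_one (x := ε / 2 / (∑ i, |a i| + 1)) (by positivity)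
      (by norm_num : (1 / 2 : ℝ) < 1)
    refine ⟨max N₁ N₂, fun j hj hjN => ?_⟩
    let j' : ℕ → ℕ := fun i => if h : i < l then j ⟨i, h⟩ else 0
    let a' : ℕ → ℝ := fun i => if h : i < l then a ⟨i, h⟩ else 0
    have hj' : ∀ i : Fin l, j' i = j i := fun i => by simp [j']
    have ha' : ∀ i : Fin l, a' i = a i := fun i => by simp [a']
    obtain ⟨h1, h2⟩ := hN₁ j' (fun i i' hii hi' => by
        have := hj (a := ⟨i, hii.trans hi'⟩) (b := ⟨i', hi'⟩) hii
        simpa [j', hii.trans hi', hi'] using this)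
      (fun i hi => by simpa [j', hi] using (le_max_left _ _).trans (hjN ⟨i, hi⟩)) a' S
      (fun i hi => by simpa [a', hi] using hsup ⟨i, hi⟩)
    have hsumW : ∑ i ∈ Finset.range l, a' i • W i (j' i) = ∑ i : Fin l, a i • W i (j i) := by
      rw [← Fin.sum_univ_eq_sum_range (fun i => a' i • W i (j' i))]
      exact Finset.sum_congr rfl fun i _ => by rw [hj', ha']
    rw [hsumW] at h1 h2
    have h3 : S ≤ ‖∑ i : Fin l, a i • W i (j i)‖ := by
      refine Real.iSup_le (fun i => ?_) (norm_nonneg _)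
      have := h1 i i.2
      rwa [ha'] at this
    have h4 : ‖∑ i : Fin l, a i • W i (j i)‖ ≤ S + ε / 2 := by
      refine (h2 hsup0).trans ?_
      have : ε / 2 / (S + 1) * S ≤ ε / 2 := by
        rw [div_mul_eq_mul_div, div_le_iff₀ (by positivity)]; nlinarith
      linarith
    have h5 : |‖∑ i, a i • A i (j i)‖ - ‖∑ i : Fin l, a i • W i (j i)‖| < ε / 2 := by
      refine (abs_norm_sub_norm_le _ _).trans_lt ?_
      rw [← Finset.sum_sub_distrib]
      simp only [← smul_sub]
      refine (norm_sum_le _ _).trans_lt ?_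
      have h6 : ∀ i ∈ Finset.univ, ‖a i • (A i (j i) - W i (j i))‖ ≤ |a i| * (1 / 2) ^ N₂ :=
        fun i _ => by
          rw [norm_smul, Real.norm_eq_abs]
          refine mul_le_mul_of_nonneg_left ((hAW _ _).trans ?_) (abs_nonneg _)
          exact pow_le_pow_of_le_one (by norm_num) (by norm_num) ((le_max_right _ _).trans (hjN i))
      refine (Finset.sum_le_sum h6).trans_lt ?_
      rw [← Finset.sum_mul]
      rw [lt_div_iff₀ (by positivity)] at hN₂
      have : (0 : ℝ) < (1 / 2) ^ N₂ := by positivity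
      nlinarith
    rw [abs_lt] at h5 ⊢
    constructor <;> linarith [h5.1, h5.2]

end Model

end Model

end IW

namespace IW

/-! ### Finite block representability -/

lemma abs_le_finLqNorm {q : ℝ≥0∞} (hq : 1 ≤ q) {n : ℕ} (a : Fin n → ℝ) (k : Fin n) :
    |a k| ≤ finLqNorm q n a := by
  unfold finLqNorm
  split_ifs with h
  · exact le_ciSup (f := fun i => |a i|) (Set.finite_range _).bddAbove k
  · have ht : 0 < q.toReal := ENNReal.toReal_pos (by rintro rfl; simp at hq) h
    have h1 : |a k| ^ q.toReal ≤ ∑ i, |a i| ^ q.toReal :=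
      Finset.single_le_sum (f := fun i => |a i| ^ q.toReal)
        (fun i _ => Real.rpow_nonneg (abs_nonneg _) _) (Finset.mem_univ k)
    have h2 := Real.rpow_le_rpow (Real.rpow_nonneg (abs_nonneg _) _) h1
      (by positivity : 0 ≤ 1 / q.toReal)
    rwa [← Real.rpow_mul (abs_nonneg _), mul_one_div_cancel ht.ne', Real.rpow_one] at h2

lemma finLqNorm_nonneg (q : ℝ≥0∞) {n : ℕ} (a : Fin n → ℝ) : 0 ≤ finLqNorm q n a := by
  unfold finLqNorm
  split_ifs with h
  · exact Real.iSup_nonneg fun i => abs_nonneg _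
  · exact Real.rpow_nonneg (Finset.sum_nonneg fun i _ => Real.rpow_nonneg (abs_nonneg _) _) _

/-- Duality between `ℓ_r` and `ℓ_{r'}` for `r = q / p`: the `p`-th power of the `ℓ_q` norm of `a`
is a maximum of linear functionals of `|a|^p` with coefficients in `[0, 1]`. -/
lemma exists_dual {p : ℝ} (hp : 1 < p) {q : ℝ≥0∞} (hq : ENNReal.ofReal p ≤ q) {n : ℕ}
    (a : Fin n → ℝ) : ∃ κ : Fin n → ℝ, (∀ k, 0 ≤ κ k ∧ κ k ≤ 1) ∧
      (∀ c : Fin n → ℝ, ∑ k, κ k * |c k| ^ p ≤ finLqNorm q n c ^ p) ∧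
      finLqNorm q n a ^ p ≤ ∑ k, κ k * |a k| ^ p := by
  classical
  have hp0 : 0 < p := by linarith
  have hq1 : 1 ≤ q := by
    refine le_trans ?_ hq
    rw [← ENNReal.ofReal_one]; exact ENNReal.ofReal_le_ofReal hp.le
  by_cases hn : n = 0
  · subst hn
    refine ⟨0, fun k => k.elim0, fun c => ?_, ?_⟩
    · simpa using Real.rpow_nonneg (finLqNorm_nonneg q c) p
    · have : finLqNorm q 0 a = 0 := by
        unfold finLqNorm
        split_ifs with h
        · simp [supNorm]
        · have ht : 0 < q.toReal := ENNReal.toReal_pos (by rintro rfl; simp at hq1) h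
          simp [lpNormFin, ht.ne']
      simp [this, Real.zero_rpow hp0.ne']
  have : Nonempty (Fin n) := ⟨⟨0, Nat.pos_of_ne_zero hn⟩⟩
  by_cases hqt : q = ⊤
  · obtain ⟨k, hk⟩ := Finite.exists_max fun i => |a i|
    refine ⟨Pi.single k 1, fun i => ?_, fun c => ?_, ?_⟩
    · by_cases h : i = k
      · subst h; simp
      · simp [h]
    · rw [Finset.sum_eq_single k (fun i _ hi => by simp [hi]) (by simp)]
      rw [Pi.single_eq_same, one_mul]
      exact Real.rpow_le_rpow (abs_nonneg _) (abs_le_finLqNorm hq1 c k) hp0.le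
    · rw [Finset.sum_eq_single k (fun i _ hi => by simp [hi]) (by simp)]
      rw [Pi.single_eq_same, one_mul]
      refine Real.rpow_le_rpow (finLqNorm_nonneg _ _) ?_ hp0.le
      unfold finLqNorm
      rw [if_pos hqt]
      exact ciSup_le hk
  · set t := q.toReal with ht
    have hpt : p ≤ t := by
      rw [ht, ← ENNReal.ofReal_le_iff_le_toReal hqt]; exact hq
    have ht0 : 0 < t := by linarith
    have hL : ∀ c : Fin n → ℝ, finLqNorm q n c ^ p = (∑ k, (|c k| ^ p) ^ (t / p)) ^ (1 / (t / p)) := by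
      intro c
      unfold finLqNorm
      rw [if_neg hqt, lpNormFin, ← ht, ← Real.rpow_mul
        (Finset.sum_nonneg fun i _ => Real.rpow_nonneg (abs_nonneg _) _)]
      congr 1
      · refine Finset.sum_congr rfl fun k _ => ?_
        rw [← Real.rpow_mul (abs_nonneg _), mul_div_cancel₀ _ hp0.ne']
      · field_simp
    rcases hpt.eq_or_lt with h | hlt
    · refine ⟨fun _ => 1, fun _ => ⟨zero_le_one, le_rfl⟩, fun c => ?_, ?_⟩
      · rw [hL, ← h, div_self hp0.ne']; simp
      · rw [hL, ← h, div_self hp0.ne']; simp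
    · have hr : 1 < t / p := by rwa [one_lt_div hp0]
      have hc := Real.HolderConjugate.conjExponent hr
      set r := t / p
      set r' := r.conjExponent
      let f : (Fin n → ℝ) → Fin n → NNReal := fun c k => ⟨|c k| ^ p, Real.rpow_nonneg (abs_nonneg _) _⟩
      have hG := fun c => NNReal.isGreatest_Lp Finset.univ (f c) hc
      obtain ⟨g, hg, hga⟩ := (hG a).1
      have hL' : ∀ c, finLqNorm q n c ^ p = (((∑ k, f c k ^ r) ^ (1 / r) : NNReal) : ℝ) := by
        intro c; rw [hL]; push_cast; rfl
      refine ⟨fun k => g k, fun k => ⟨(g k).2, ?_⟩, fun c => ?_, ?_⟩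
      · have h1 : g k ^ r' ≤ 1 := (Finset.single_le_sum (f := fun i => g i ^ r')
          (fun i _ => zero_le) (Finset.mem_univ k)).trans hg
        have h2 : g k ≤ 1 := by
          rwa [← NNReal.one_rpow r', NNReal.rpow_le_rpow_iff hc.symm.pos] at h1
        exact_mod_cast h2
      · rw [hL']
        have h1 := (hG c).2 ⟨g, hg, rfl⟩
        have h2 := NNReal.coe_le_coe.2 h1
        refine le_trans (le_of_eq ?_) h2
        push_cast
        exact Finset.sum_congr rfl fun k _ => mul_comm _ _
      · rw [hL', ← hga]
        push_cast
        exact (Finset.sum_congr rfl fun k _ => mul_comm _ _).le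

/-- Finitely many of the functionals of `exists_dual` suffice, up to a small error. -/
lemma exists_net {p : ℝ} (hp : 1 < p) {q : ℝ≥0∞} (hq : ENNReal.ofReal p ≤ q) (n : ℕ) {ε : ℝ}
    (hε : 0 < ε) : ∃ (N : ℕ) (b : ℕ → ℕ → ℝ), (∀ i k, 0 ≤ b i k) ∧ (∀ i k, b i k ≤ 1) ∧
      ∀ a : Fin n → ℝ, (∀ i < N, ∑ k : Fin n, b i k * |a k| ^ p ≤ finLqNorm q n a ^ p) ∧
        ∃ i < N, finLqNorm q n a ^ p ≤ ∑ k : Fin n, b i k * |a k| ^ p + ε * ∑ k, |a k| ^ p := by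
  classical
  let K : Set (Fin n → ℝ) := {κ | (∀ k, 0 ≤ κ k ∧ κ k ≤ 1) ∧
      ∀ c : Fin n → ℝ, ∑ k, κ k * |c k| ^ p ≤ finLqNorm q n c ^ p}
  have hK : TotallyBounded K := by
    refine TotallyBounded.subset (s₂ := Set.Icc 0 1) (fun κ hκ => ⟨fun k => (hκ.1 k).1,
      fun k => (hκ.1 k).2⟩) isCompact_Icc.totallyBounded
  obtain ⟨t, htK, htf, ht⟩ := Metric.finite_approx_of_totallyBounded hK ε hε
  obtain ⟨N, g, hg⟩ := htf.fin_param
  let b : ℕ → ℕ → ℝ := fun i k => if h : i < N ∧ k < n then g ⟨i, h.1⟩ ⟨k, h.2⟩ else 0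
  have hb : ∀ (i : ℕ) (hi : i < N) (k : Fin n), b i k = g ⟨i, hi⟩ k := fun i hi k => by simp [b, hi]
  have hgK : ∀ i, g i ∈ K := fun i => htK (hg.2 ▸ Set.mem_range_self i)
  refine ⟨N, b, fun i k => ?_, fun i k => ?_, fun a => ⟨fun i hi => ?_, ?_⟩⟩
  · simp only [b]; split_ifs; exacts [((hgK _).1 _).1, le_rfl]
  · simp only [b]; split_ifs; exacts [((hgK _).1 _).2, zero_le_one]
  · simp only [hb i hi]; exact (hgK ⟨i, hi⟩).2 a
  · obtain ⟨κ, hκ1, hκ2, hκ3⟩ := exists_dual hp hq a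
    obtain ⟨y, hy, hκy⟩ := Set.mem_iUnion₂.1 (ht ⟨hκ1, hκ2⟩)
    rw [← hg.2] at hy
    obtain ⟨i, rfl⟩ := hy
    refine ⟨i, i.2, hκ3.trans ?_⟩
    rw [Finset.mul_sum, ← Finset.sum_add_distrib]
    refine Finset.sum_le_sum fun k _ => ?_
    rw [hb i i.2, ← add_mul]
    refine mul_le_mul_of_nonneg_right ?_ (Real.rpow_nonneg (abs_nonneg _) _)
    have h1 := (dist_le_pi_dist κ (g i) k).trans (Metric.mem_ball.1 hκy).le
    rw [Real.dist_eq] at h1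
    have := (abs_le.1 h1).2
    show κ k ≤ g i k + ε
    linarith

section Model

variable {p : ℝ} {X : Type*} [NormedAddCommGroup X] [NormedSpace ℝ X] {T : (ℕ →₀ ℝ) →ₗ[ℝ] X}

namespace Model

lemma mem_span_iff (F : Finset ℕ) (x : X) :
    x ∈ Submodule.span ℝ ((fun i => T (Finsupp.single i 1)) '' ↑F) ↔
      ∃ a : ℕ →₀ ℝ, a.support ⊆ F ∧ T a = x := by
  have h : ∀ l : ℕ →₀ ℝ,
      Finsupp.linearCombination ℝ (fun i => T (Finsupp.single i 1)) l = T l := fun l => by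
    conv_rhs => rw [← Finsupp.sum_single l]
    rw [Finsupp.linearCombination_apply, Finsupp.sum, Finsupp.sum, map_sum]
    exact Finset.sum_congr rfl fun i _ => by rw [← map_smul]; simp
  rw [Finsupp.mem_span_image_iff_linearCombination]
  constructor
  · rintro ⟨l, hl, rfl⟩
    exact ⟨l, by exact_mod_cast (Finsupp.mem_supported _ _).1 hl, (h l).symm⟩
  · rintro ⟨l, hl, rfl⟩
    exact ⟨l, (Finsupp.mem_supported _ _).2 (by exact_mod_cast hl), h l⟩

/-- The coordinates of a normalized block sequence in the sense of `IsBlockSeq`. -/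
lemma exists_xblk (M : Model p T) {y : ℕ → X}
    (hy : IsBlockSeq (fun i => T (Finsupp.single i 1)) y) (hn : Normalized y) :
    ∃ b s, XBlk p b s ∧ ∀ k, T (b k) = y k := by
  obtain ⟨F, hF, hlt, hy⟩ := hy
  choose b hb hbT using fun k => (mem_span_iff (T := T) (F k) (y k)).1 (hy k).2
  refine ⟨b, fun k => (F k).min' (hF k), ⟨?_, fun k i hi => ?_, fun k i hi => ?_, fun k => ?_⟩, hbT⟩
  · exact strictMono_nat_of_lt_succ fun k => hlt k (k + 1) (by omega) _ (Finset.min'_mem _ _) _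
      (Finset.min'_mem _ _)
  · exact Finset.min'_le _ _ (hb k (Finsupp.mem_support_iff.2 hi))
  · exact hlt k (k + 1) (by omega) _ (hb k (Finsupp.mem_support_iff.2 hi)) _ (Finset.min'_mem _ _)
  · rw [← M.norm, hbT]; exact hn k

/-- Apply `exists_polyhedral` to the `p`-th powers of the blocks and to the finite net of `exists_net`,
and take the power `1/p` of the coefficients. -/
lemma representable (M : Model p T) {Y : Set X}
    (hY : IsBlockSubspace (fun i => T (Finsupp.single i 1)) Y) {q : ℝ≥0∞}
    (hq : ENNReal.ofReal p ≤ q) (n : ℕ) :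
    BlockRepresentableIn (fun i => T (Finsupp.single i 1)) Y (finLqNorm q n) := by
  classical
  obtain ⟨y, hy, hyn, rfl⟩ := hY
  obtain ⟨b, s, hb, hbT⟩ := M.exists_xblk hy hyn
  have hp := M.p_pos
  have hq1 : 1 ≤ q := by
    refine le_trans ?_ hq
    rw [← ENNReal.ofReal_one]; exact ENNReal.ofReal_le_ofReal M.hp.le
  intro η hη
  -- distortion `(1 + δ) / (1 - δ) = 1 + η`
  set δ := η / (2 + η) with hδ
  have hδ0 : 0 < δ := by positivity
  have hδ1 : δ < 1 := by rw [hδ, div_lt_one (by positivity)]; linarith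
  have hδη : δ * (2 + η) = η := by rw [hδ]; field_simp
  set ε := δ / (n + 1) with hε
  have hε0 : 0 < ε := by positivity
  have hεδ : ε * (n + 1) = δ := by rw [hε]; field_simp
  have hnn : (0 : ℝ) ≤ n := Nat.cast_nonneg n
  have hε1 : ε ≤ 1 := by nlinarith
  obtain ⟨N, β, hβ0, hβ1, hβ⟩ := exists_net M.hp hq n hε0
  obtain ⟨κ, Γ, hΓ, hpoly⟩ := exists_polyhedral (hb.blk hp) N n β hβ0 hβ1 hε0 hε1
  let C : ℕ → ℕ →₀ ℝ := fun k => pw (1 / p) (Γ k)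
  have hpC : ∀ k, pw p (C k) = Γ k := fun k => pw_pw hp (hΓ.nonneg k)
  have hCne : ∀ k i, C k i ≠ 0 → Γ k i ≠ 0 := fun k i h => (pw_ne_zero (by positivity)).1 h
  have hCd : ∀ F, Disj F C := fun F => disj_of_range hΓ.mono
    (fun k i h => hΓ.lo k i (hCne k i h)) (fun k i h => hΓ.hi k i (hCne k i h)) F
  let z : Fin n → X := fun k => T (lc b (C k))
  have hnorm : ∀ a : Fin n → ℝ, (1 - δ) * finLqNorm q n a ≤ ‖∑ i, a i • z i‖ ∧
      ‖∑ i, a i • z i‖ ≤ (1 + δ) * finLqNorm q n a := by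
    intro a
    let a' : ℕ → ℝ := fun i => if h : i < n then a ⟨i, h⟩ else 0
    have ha' : ∀ i : Fin n, a' i = a i := fun i => by simp [a']
    have hsum : ∑ i, a i • z i = T (lc b (∑ k ∈ Finset.range n, a' k • C k)) := by
      rw [← Fin.sum_univ_eq_sum_range (fun k => a' k • C k)]
      simp [z, map_sum, ha']
    have hpow : ‖∑ i, a i • z i‖ ^ p =
        NZ (lc (fun k => pw p (b k)) (∑ k ∈ Finset.range n, |a' k| ^ p • Γ k)) := by
      rw [hsum, M.norm_lc_pow hb, pw_sum hp (hCd _)]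
      simp only [hpC]
    obtain ⟨h1, h2⟩ := hpoly (fun k => |a' k| ^ p) (fun k => Real.rpow_nonneg (abs_nonneg _) _)
    rw [← hpow] at h1 h2
    have hs1 : ∀ i, ∑ k ∈ Finset.range n, β i k * |a' k| ^ p = ∑ k : Fin n, β i k * |a k| ^ p :=
      fun i => by
        rw [← Fin.sum_univ_eq_sum_range (fun k => β i k * |a' k| ^ p)]
        simp only [ha']
    have hs2 : ∑ k ∈ Finset.range n, |a' k| ^ p = ∑ k : Fin n, |a k| ^ p := by
      rw [← Fin.sum_univ_eq_sum_range (fun k => |a' k| ^ p)]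
      simp only [ha']
    have hμ := finLqNorm_nonneg q a
    set μ := finLqNorm q n a with hμdef
    have hR : 0 ≤ μ ^ p := Real.rpow_nonneg hμ _
    have hmass : ∑ k, |a k| ^ p ≤ n * μ ^ p := by
      refine (Finset.sum_le_card_nsmul _ _ (μ ^ p) fun k _ =>
        Real.rpow_le_rpow (abs_nonneg _) (abs_le_finLqNorm hq1 a k) hp.le).trans_eq ?_
      simp
    obtain ⟨hβa, i, hi, hia⟩ := hβ a
    have h3 := h1 i hi
    have h4 := h2 (μ ^ p) hR (fun i hi => by rw [hs1]; exact hβa i hi)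
    rw [hs1] at h3
    rw [hs2] at h4
    have h5 : ε * ∑ k, |a k| ^ p ≤ ε * (n * μ ^ p) := mul_le_mul_of_nonneg_left hmass hε0.le
    have hup : ‖∑ i, a i • z i‖ ^ p ≤ (1 + δ) * μ ^ p := by rw [← hεδ]; nlinarith
    have hlow : (1 - δ) * μ ^ p ≤ ‖∑ i, a i • z i‖ ^ p := by
      refine le_trans ?_ h3
      have h6 : μ ^ p - ε * (n * μ ^ p) ≤ ∑ k : Fin n, β i k * |a k| ^ p := by linarith
      refine le_trans ?_ (mul_le_mul_of_nonneg_left h6 (by linarith))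
      rw [← hεδ]
      have : 0 ≤ ε * ε * n * μ ^ p := by positivity
      nlinarith
    constructor
    · rw [← Real.rpow_le_rpow_iff (mul_nonneg (by linarith) hμ) (norm_nonneg _) hp,
        Real.mul_rpow (by linarith) hμ]
      refine le_trans (mul_le_mul_of_nonneg_right ?_ hR) hlow
      exact Real.rpow_le_self_of_le_one (by linarith) (by linarith) M.hp.le
    · rw [← Real.rpow_le_rpow_iff (norm_nonneg _) (by positivity) hp,
        Real.mul_rpow (by linarith) hμ]
      refine hup.trans (mul_le_mul_of_nonneg_right ?_ hR)
      exact Real.self_le_rpow_of_one_le (by linarith) M.hp.le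
  have hz0 : ∀ k, z k ≠ 0 := fun k h0 => by
    have h1 := (hnorm (Pi.single k 1)).1
    have h2 : ∑ i, (Pi.single k 1 : Fin n → ℝ) i • z i = z k := by
      rw [Finset.sum_eq_single k (fun i _ hi => by simp [hi]) (by simp)]; simp
    rw [h2, h0, norm_zero] at h1
    have h3 := abs_le_finLqNorm hq1 (Pi.single k 1 : Fin n → ℝ) k
    rw [Pi.single_eq_same, abs_one] at h3
    nlinarith
  refine ⟨z, fun k => subset_closure ?_, ⟨fun k => (lc b (C k)).support, fun k => ?_,
    fun k l hkl i hi j hj => ?_, fun k => ⟨hz0 k, (mem_span_iff _ _).2 ⟨_, subset_rfl, rfl⟩⟩⟩,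
    1 / (1 - δ), 1 + δ, by simpa using hδ1, by positivity, ?_, fun a => ?_⟩
  · simp only [z, lc_eq, map_sum, map_smul, hbT]
    exact Submodule.sum_mem _ fun i _ => Submodule.smul_mem _ _
      (Submodule.subset_span (Set.mem_range_self i))
  · rw [Finsupp.support_nonempty_iff]
    intro h0
    exact hz0 k (by simp only [z]; rw [h0, map_zero])
  · obtain ⟨u, hu, hui⟩ := lc_ne_zero (Finsupp.mem_support_iff.1 hi)
    obtain ⟨v, hv, hvj⟩ := lc_ne_zero (Finsupp.mem_support_iff.1 hj)
    have h1 := hΓ.hi k u (hCne _ _ (Finsupp.mem_support_iff.1 hu))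
    have h2 := hΓ.lo l v (hCne _ _ (Finsupp.mem_support_iff.1 hv))
    have h3 : κ (k + 1) ≤ κ l := hΓ.mono.monotone (by exact hkl)
    have h4 := hb.hi u i hui
    have h5 := hb.lo v j hvj
    have h6 : s (u + 1) ≤ s v := hb.mono.monotone (by omega)
    omega
  · rw [one_div_mul_eq_div, div_le_iff₀ (by linarith)]
    nlinarith
  · rw [one_div_one_div]; exact hnorm a

/-- The upper `p`-estimate bounds `n^{1/q - 1/p}` uniformly in `n`. -/
lemma not_representable (M : Model p T) {Y : Set X} {q : ℝ≥0∞} (hq1 : 1 ≤ q)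
    (hq : q < ENNReal.ofReal p) :
    ¬ ∀ n, BlockRepresentableIn (fun i => T (Finsupp.single i 1)) Y (finLqNorm q n) := by
  intro H
  have hp := M.p_pos
  have hqt : q ≠ ⊤ := ne_top_of_lt hq
  set t := q.toReal with ht
  have ht1 : 1 ≤ t := by
    have := (ENNReal.ofReal_le_iff_le_toReal (a := 1) hqt).1 (by simpa using hq1)
    simpa using this
  have htp : t < p := by
    rwa [ht, ← ENNReal.lt_ofReal_iff_toReal_lt hqt]
  have ht0 : 0 < t := by linarith
  have key : ∀ n : ℕ, 0 < n → (n : ℝ) ^ (1 / t - 1 / p) ≤ 2 := by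
    intro n hn
    have hn0 : (0 : ℝ) < n := by exact_mod_cast hn
    obtain ⟨z, -, ⟨F, hF, hlt, hz⟩, A, B, hA, hB, hAB, hequiv⟩ := H n 1 one_pos
    choose c hc hcT using fun k => (mem_span_iff (T := T) (F k) (z k)).1 (hz k).2
    have hd : Disj Finset.univ c := by
      intro k _ l _ hkl i hi
      by_contra hi'
      have h1 := hc k (Finsupp.mem_support_iff.2 hi)
      have h2 := hc l (Finsupp.mem_support_iff.2 hi')
      rcases lt_or_gt_of_ne hkl with h | h
      · exact lt_irrefl _ (hlt k l h i h1 i h2)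
      · exact lt_irrefl _ (hlt l k h i h2 i h1)
    have hzB : ∀ k, ‖z k‖ ≤ B := fun k => by
      have h1 := (hequiv (Pi.single k 1)).2
      have h2 : ∑ i, (Pi.single k 1 : Fin n → ℝ) i • z i = z k := by
        rw [Finset.sum_eq_single k (fun i _ hi => by simp [hi]) (by simp)]; simp
      have h3 : finLqNorm q n (Pi.single k 1) = 1 := by
        unfold finLqNorm
        rw [if_neg hqt, lpNormFin, ← ht, Finset.sum_eq_single k
          (fun i _ hi => by simp [hi, Real.zero_rpow ht0.ne']) (by simp)]
        simp
      rwa [h2, h3, mul_one] at h1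
    have h1 := M.upper hd (fun _ => 1)
    simp only [one_smul, hcT, abs_one, Real.one_rpow, one_mul] at h1
    have h2 : ∑ k, ‖z k‖ ^ p ≤ n * B ^ p := by
      refine (Finset.sum_le_card_nsmul _ _ (B ^ p) fun k _ =>
        Real.rpow_le_rpow (norm_nonneg _) (hzB k) hp.le).trans_eq ?_
      simp
    have h3 : ‖∑ k, z k‖ ≤ n ^ (1 / p) * B := by
      rw [← Real.rpow_le_rpow_iff (norm_nonneg _) (by positivity) hp,
        Real.mul_rpow (by positivity) hB.le, ← Real.rpow_mul hn0.le, one_div_mul_cancel hp.ne',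
        Real.rpow_one]
      exact h1.trans h2
    have h4 := (hequiv fun _ => 1).1
    have h5 : finLqNorm q n (fun _ => 1) = n ^ (1 / t) := by
      unfold finLqNorm
      rw [if_neg hqt, lpNormFin]
      simp [ht]
    simp only [one_smul] at h4
    rw [h5] at h4
    have h6 := h4.trans h3
    rw [Real.rpow_sub hn0, div_le_iff₀ (by positivity)]
    rw [one_div_mul_eq_div, div_le_iff₀ hA] at h6
    have : (0 : ℝ) < (n : ℝ) ^ (1 / p) := by positivity
    nlinarith
  have hpos : 0 < 1 / t - 1 / p := sub_pos.2 (one_div_lt_one_div_of_lt ht0 htp)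
  have hlim := (tendsto_rpow_atTop hpos).comp (tendsto_natCast_atTop_atTop (R := ℝ))
  obtain ⟨n, hn, hn'⟩ := ((hlim.eventually_gt_atTop 2).and (eventually_gt_atTop 0)).exists
  exact absurd (key n hn') (not_le.2 hn)

end Model

end Model

end IW

/-- For every `p ∈ (1,∞)` there exists a reflexive Banach space with a
1-unconditional Schauder basis such that (i) every normalized weakly null sequence has a
subsequence generating a spreading model 8-equivalent to the unit vector basis of ℓ_p;
(ii) every infinite dimensional closed subspace contains an array of normalized weakly
null sequences generating the unit vector basis of c₀ as an asymptotic model; (iii) for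
every `q ∈ [1,∞]` and every block subspace `Y`, the unit vector basis of ℓ_q is finitely
block representable in `Y` iff `p ≤ q ≤ ∞`. -/
theorem statement1 (p : ℝ) (hp : 1 < p) :
    ∃ B : BanachPkg, CompleteSpace B.X ∧
      Function.Surjective (NormedSpace.inclusionInDoubleDual ℝ B.X) ∧
      ∃ e : ℕ → B.X, IsSchauderBasis e ∧ OneUnconditional e ∧
        (∀ x : ℕ → B.X, Normalized x → WeaklyNull x →
          ∃ φ : ℕ → ℕ, StrictMono φ ∧
            ∃ ν, GeneratesSpreadingModel (x ∘ φ) ν ∧ NormFamEquiv 8 (lpNormFin p) ν) ∧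
        (∀ Y : Submodule ℝ B.X, IsClosed (Y : Set B.X) → ¬ FiniteDimensional ℝ Y →
          ∃ A : ℕ → ℕ → B.X, (∀ i j, A i j ∈ Y) ∧
            (∀ i, Normalized (A i) ∧ WeaklyNull (A i)) ∧
            GeneratesAsymptoticModel A supNorm) ∧
        (∀ Y : Set B.X, IsBlockSubspace e Y → ∀ q : ℝ≥0∞, 1 ≤ q →
          ((∀ n : ℕ, BlockRepresentableIn e Y (finLqNorm q n)) ↔ ENNReal.ofReal p ≤ q)) := by
  obtain ⟨B, T, hc, M⟩ := IW.exists_model hp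
  refine ⟨B, hc, M.reflexive, fun i => T (Finsupp.single i 1), M.isSchauderBasis,
    M.oneUnconditional, fun x hx hw => M.spreading hx hw, fun Y _ hY => M.asymptotic Y hY,
    fun Y hY q hq => ⟨fun H => ?_, fun h n => M.representable hY h n⟩⟩
  by_contra h
  exact M.not_representable hq (not_le.1 h) H
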